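/- arXiv:2312.17447 — 4 statements merged into one kernel-verified Lean document; each statement's English description precedes it below -/
import Mathlib

section
/- Let f : S² → S² be a polynomial-like mapping of degree d ≥ 2. If {A_1, …, A_n} is an irreducible decomposition of J(f), then for every pair of indices j ≠ k, no internal composant of A_k intersects A_j. -/
/-!
Write `X = A k`, `L = A j`, and suppose that an internal composant `C` of `X` meets `L`. Both
pieces lie on the boundary of the open connected set `R`, and by irreducibility neither contains
the other. The contradiction is that `K₃,₃` would embed in the plane.

* *Two poles on `L`.* Small subcontinua of `L` around a component of `L ∩ X`, obtained by boundary
  bumping, are not contained in `X`; if such a component meets `C`, internality makes them meet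
  every composant of `X`. A Baire category argument (`exists_second_point`) shows that `C` meets `L`
  in at least two components of `L ∩ X`, since otherwise `X` would be a countable union of closed
  sets without interior in `X`. Hence there are disjoint continua `Y, Y' ⊆ L`, each meeting every
  composant of `X` (`exists_two_continua`).
* *Three bridges in `X`.* A proper subcontinuum of an indecomposable continuum has empty relative
  interior (`IsIndecomposable.not_subset_proper`), so composants are meagre, and there are three
  distinct composants of `X` together with a point `z ∈ X \ L` in none of them. Each of these
  composants contains a proper subcontinuum `K i` meeting both `Y` and `Y'`; the `K i` are pairwise
  disjoint and avoid `z` (`exists_three_continua`).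
* *Nonplanarity.* After stereographic projection from `z`, take a point `q i` on each `K i` that is
  joined inside `K i` to `Y` avoiding `Y'` and to `Y'` avoiding `Y` (`exists_hair`). As
  `K i ⊆ closure R`, a small disk around `q i` meets a compact connected set `Y'' ⊆ R` common to the
  three indices. Thickening everything slightly, three points `q i` are joined to the three disjoint
  poles `Y, Y', Y''` by paths, where paths with different origins and different poles are disjoint.
  This is impossible (`K33_nonplanar_paths`).

The last step is proved without the Jordan curve theorem. For disjoint paths `e, f` in `ℂ`, lifting
`e s - f t` through `exp` over the square gives a linear relation between the changes of
logarithm of `e` and `f` seen from each other's endpoints. Written as integers with respect to fixed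
logarithms of the differences of the six vertices, the relations for the 18 pairs of independent
edges of `K₃,₃` use each integer twice and have total right-hand side `-9`: a parity contradiction.
-/

open Set Metric Topology Filter

noncomputable section

/-- The 2-dimensional sphere, realized as the unit sphere in `ℝ³`. -/
abbrev S2 : Type := ↥(Metric.sphere (0 : EuclideanSpace ℝ (Fin 3)) 1)

/-- A continuum is a nonempty compact connected (metric) space. -/
def IsContinuum {α : Type*} [TopologicalSpace α] (X : Set α) : Prop :=
  IsCompact X ∧ IsConnected X

/-- A continuum is indecomposable when it is not the union of two proper subcontinua. -/
def IsIndecomposable {α : Type*} [TopologicalSpace α] (X : Set α) : Prop :=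
  IsContinuum X ∧
    ¬ ∃ A B : Set α, IsContinuum A ∧ A ⊆ X ∧ A ≠ X ∧
      IsContinuum B ∧ B ⊆ X ∧ B ≠ X ∧ A ∪ B = X

/-- The composant of a point `p` in a continuum `X`: the union of all proper
subcontinua of `X` containing `p`. -/
def composant {α : Type*} [TopologicalSpace α] (X : Set α) (p : α) : Set α :=
  ⋃₀ {K : Set α | IsContinuum K ∧ K ⊆ X ∧ K ≠ X ∧ p ∈ K}

/-- `C` is a composant of `X` when it is the composant of some point of `X`. -/
def IsComposant {α : Type*} [TopologicalSpace α] (X C : Set α) : Prop :=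
  ∃ p ∈ X, C = composant X p

/-- A composant `C` of `X` is internal when every continuum intersecting `C`
but not contained in `X` intersects every composant of `X`. -/
def IsInternalComposant {α : Type*} [TopologicalSpace α] (X C : Set α) : Prop :=
  IsComposant X C ∧
    ∀ L : Set α, IsContinuum L → (L ∩ C).Nonempty → ¬ L ⊆ X →
      ∀ C' : Set α, IsComposant X C' → (L ∩ C').Nonempty

/-- An irreducible decomposition of a continuum `X`: a finite collection of
indecomposable subcontinua of `X` whose union is `X`, none of which is contained
in the union of the others. -/
def IsIrreducibleDecomposition {α : Type*} [TopologicalSpace α]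
    (X : Set α) {n : ℕ} (A : Fin n → Set α) : Prop :=
  (∀ i, IsIndecomposable (A i) ∧ A i ⊆ X) ∧
    X = ⋃ i, A i ∧
    ∀ j, ¬ A j ⊆ ⋃ i ∈ ({j}ᶜ : Set (Fin n)), A i

/-- A set `A` separates the sphere when its complement is disconnected. -/
def Separates (A : Set S2) : Prop := ¬ IsPreconnected Aᶜ

/-- A simple arc in the sphere with endpoints `a` and `b`. -/
def IsSimpleArc (A : Set S2) (a b : S2) : Prop :=
  ∃ γ : ℝ → S2, ContinuousOn γ (Icc 0 1) ∧ InjOn γ (Icc 0 1) ∧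
    γ '' Icc 0 1 = A ∧ γ 0 = a ∧ γ 1 = b

/-- `f` is locally topologically conjugate, at the point `c`, to the map
`z ↦ z ^ k` of the unit disk (so `c` is a critical point of local degree `k - 1`
when `k ≥ 2`). -/
def LocallyZPowAt (f : S2 → S2) (c : S2) (k : ℕ) : Prop :=
  ∃ (φ : PartialHomeomorph S2 ℂ) (ψ : PartialHomeomorph ℂ S2),
    c ∈ φ.source ∧ φ.target = Metric.ball (0 : ℂ) 1 ∧
    ψ.source = Metric.ball (0 : ℂ) 1 ∧ f c ∈ ψ.target ∧
    ∀ x ∈ φ.source, f x = ψ ((φ x) ^ k)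

/-- A branched covering of the sphere of degree `d`: a continuous map which is a
`d`-fold covering map away from a finite set of critical points, near each of which
it is locally conjugate to `z ↦ z ^ k` on the unit disk for some `k ≥ 2`. -/
def IsBranchedCovering (f : S2 → S2) (d : ℕ) : Prop :=
  Continuous f ∧
    ∃ Crit : Set S2, Crit.Finite ∧
      (∀ c ∈ Crit, ∃ k, 2 ≤ k ∧ LocallyZPowAt f c k) ∧
      IsCoveringMapOn f ((f '' Crit)ᶜ) ∧
      ∀ y ∉ f '' Crit, (f ⁻¹' {y}).ncard = d

/-- `f` is a polynomial-like mapping of degree `d`, with fully invariant simply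
connected region `R` (whose complement has more than one point) containing the
critical point `c` of local degree `d - 1`.  The Julia set is `J(f) = frontier R`
and the filled Julia set is `Rᶜ`. -/
def IsPolynomialLike (f : S2 → S2) (d : ℕ) (R : Set S2) (c : S2) : Prop :=
  IsBranchedCovering f d ∧
    IsOpen R ∧ IsConnected R ∧ SimplyConnectedSpace ↥R ∧
    Set.Nontrivial Rᶜ ∧ f ⁻¹' R = R ∧
    c ∈ R ∧ LocallyZPowAt f c d

/-- A crosscut of a region `U`: a simple arc contained in the closure of `U`
meeting the boundary of `U` exactly at its two (distinct) endpoints. -/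
def IsCrosscut (U A : Set S2) : Prop :=
  ∃ a b : S2, a ≠ b ∧ IsSimpleArc A a b ∧ A ⊆ closure U ∧
    A ∩ frontier U = {a, b}

/-- A fundamental chain in `U`: a nested sequence of regions `Rc k`, each a
connected component of `U \ A k` for crosscuts `A k` whose diameters tend to `0`.
The impression of the corresponding prime end is `⋂ k, closure (Rc k)`. -/
def IsFundamentalChain (U : Set S2) (Rc : ℕ → Set S2) : Prop :=
  ∃ A : ℕ → Set S2,
    (∀ k, IsCrosscut U (A k)) ∧
    (∀ k, ∃ x ∈ U \ A k, Rc k = connectedComponentIn (U \ A k) x) ∧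
    (∀ k, Rc (k + 1) ⊆ Rc k) ∧
    Tendsto (fun k => Metric.diam (A k)) atTop (nhds 0)

end

/-! ### Changes of logarithm and the nonplanarity of `K₃,₃` -/

/-- Nonvanishing functions on a simply connected space have continuous logarithms. -/
theorem exists_log {T : Type*} [TopologicalSpace T] [SimplyConnectedSpace T]
    [LocallyPathConnectedSpace T] (g : C(T, ℂ)) (hg : ∀ t, g t ≠ 0) :
    ∃ G : C(T, ℂ), ∀ t, Complex.exp (G t) = g t := by
  obtain ⟨t₀⟩ : Nonempty T := inferInstance
  rcases Complex.isCoveringMapOn_exp.existsUnique_continuousMap_lifts g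
    (Complex.exp_log (hg t₀)) (fun x ↦ hg x) with ⟨G, ⟨-, hG⟩, -⟩
  exact ⟨G, fun t => congrFun hG t⟩

theorem exists_log_path (g : C(unitInterval, ℂ)) (hg : ∀ t, g t ≠ 0) :
    ∃ G : C(unitInterval, ℂ), ∀ t, Complex.exp (G t) = g t := by
  obtain ⟨G, hG⟩ := exists_log (T := ℝ) ⟨fun t => g (projIcc 0 1 zero_le_one t), by fun_prop⟩
    (fun t => hg _)
  exact ⟨⟨fun t => G t, by fun_prop⟩, fun t => by simpa using hG t⟩

open Classical in
/-- Total change along the path `g` of a continuous logarithm of `g`; the imaginary part is the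
total variation of the argument. The value is `0` when `g` has no continuous logarithm, that is, when
`g` vanishes somewhere. -/
noncomputable def logChange (g : C(unitInterval, ℂ)) : ℂ :=
  if h : ∃ G : C(unitInterval, ℂ), ∀ t, Complex.exp (G t) = g t then
    h.choose 1 - h.choose 0 else 0

/-- The change of a continuous logarithm does not depend on the choice of the logarithm. -/
theorem exp_change_unique (F G : C(unitInterval, ℂ))
    (h : ∀ t, Complex.exp (F t) = Complex.exp (G t)) : F 1 - F 0 = G 1 - G 0 := by
  have h2 : ∀ t, Complex.exp (G t + (F 0 - G 0)) = Complex.exp (F t) := by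
    intro t
    rw [Complex.exp_add, Complex.exp_sub, h 0, div_self (Complex.exp_ne_zero _), mul_one, h]
  have := Complex.isCoveringMap_exp.eq_of_comp_eq (g₁ := fun t => G t + (F 0 - G 0))
    (g₂ := F) (by fun_prop) (by fun_prop) (funext fun t => by simpa [Subtype.ext_iff] using h2 t)
    0 (by simp)
  have h3 : G 1 + (F 0 - G 0) = F 1 := congrFun this 1
  rw [← h3]; ring

theorem logChange_eq {g G : C(unitInterval, ℂ)} (h : ∀ t, Complex.exp (G t) = g t) :
    logChange g = G 1 - G 0 := by
  have h' : ∃ G : C(unitInterval, ℂ), ∀ t, Complex.exp (G t) = g t := ⟨G, h⟩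
  rw [logChange, dif_pos h']
  exact exp_change_unique _ _ fun t => by rw [h, h'.choose_spec]

theorem exp_logChange (g : C(unitInterval, ℂ)) (hg : ∀ t, g t ≠ 0) :
    Complex.exp (logChange g) = g 1 / g 0 := by
  obtain ⟨G, hG⟩ := exists_log_path g hg
  rw [logChange_eq hG, Complex.exp_sub, hG, hG]

theorem logChange_neg (g : C(unitInterval, ℂ)) (hg : ∀ t, g t ≠ 0) :
    logChange (-g) = logChange g := by
  obtain ⟨G, hG⟩ := exists_log_path g hg
  rw [logChange_eq hG, logChange_eq (G := G + .const _ (Real.pi * Complex.I))]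
  · simp
  · intro t; simp [Complex.exp_add, hG]

/-- The logarithm of `e s - f t` on the square `[0, 1]²` has total change zero around the boundary.
The edges `s = 0` and `s = 1` carry `e s - f t` with `s` fixed, whose sign is reversed here, which
does not affect the change. -/
theorem logChange_square (e f : C(unitInterval, ℂ)) (h : ∀ s t, e s ≠ f t) :
    logChange (e - .const _ (f 0)) + logChange (f - .const _ (e 1)) =
      logChange (f - .const _ (e 0)) + logChange (e - .const _ (f 1)) := by
  obtain ⟨G', hG'⟩ := exists_log (T := ℝ × ℝ)
    ⟨fun p => e (projIcc 0 1 zero_le_one p.1) - f (projIcc 0 1 zero_le_one p.2), by fun_prop⟩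
    (fun p => sub_ne_zero.2 (h _ _))
  obtain ⟨G, hG⟩ : ∃ G : C(unitInterval × unitInterval, ℂ),
      ∀ s t, Complex.exp (G (s, t)) = e s - f t :=
    ⟨⟨fun p => G' (p.1, p.2), by fun_prop⟩, fun s t => by simpa using hG' (s, t)⟩
  have E0 : logChange (e - .const _ (f 0)) = G (1, 0) - G (0, 0) :=
    logChange_eq (G := ⟨fun s => G (s, 0), by fun_prop⟩) fun t => by simp [hG]
  have E1 : logChange (e - .const _ (f 1)) = G (1, 1) - G (0, 1) :=
    logChange_eq (G := ⟨fun s => G (s, 1), by fun_prop⟩) fun t => by simp [hG]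
  have F0 : logChange (f - .const _ (e 0)) = G (0, 1) - G (0, 0) := by
    rw [← logChange_neg _ fun t => by simpa [sub_eq_zero] using (h _ _).symm]
    exact logChange_eq (G := ⟨fun s => G (0, s), by fun_prop⟩) fun t => by simp [hG]
  have F1 : logChange (f - .const _ (e 1)) = G (1, 1) - G (1, 0) := by
    rw [← logChange_neg _ fun t => by simpa [sub_eq_zero] using (h _ _).symm]
    exact logChange_eq (G := ⟨fun s => G (1, s), by fun_prop⟩) fun t => by simp [hG]
  rw [E0, E1, F0, F1]; ring

theorem exists_int_of_exp_eq {w u v x y : ℂ} (h : Complex.exp w = x / y) (hu : Complex.exp u = x)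
    (hv : Complex.exp v = y) : ∃ m : ℤ, w = u - v + m * (2 * Real.pi * Complex.I) := by
  rw [← hu, ← hv, ← Complex.exp_sub, Complex.exp_eq_exp_iff_exists_int] at h
  exact h

/-- A logarithm of `a i - a k` for `a i ≠ a k`, chosen so that exchanging the larger index and the
smaller one adds exactly `πi`. -/
noncomputable def refLog (a : Fin 3 → ℂ) (i k : Fin 3) : ℂ :=
  if i < k then Complex.log (a i - a k) else Complex.log (a k - a i) + Real.pi * Complex.I

theorem exp_refLog (a : Fin 3 → ℂ) {i k : Fin 3} (h : a i ≠ a k) :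
    Complex.exp (refLog a i k) = a i - a k := by
  unfold refLog
  split_ifs
  · exact Complex.exp_log (sub_ne_zero.2 h)
  · rw [Complex.exp_add, Complex.exp_log (sub_ne_zero.2 h.symm)]; simp

/-- `K₃,₃` is not planar: nine paths joining three points to three points cannot be such that any
two of them with different origins and different ends are disjoint. Paths that share a vertex may
intersect arbitrarily. -/
theorem K33_nonplanar_paths (a b : Fin 3 → ℂ) (e : Fin 3 → Fin 3 → C(unitInterval, ℂ))
    (h0 : ∀ i j, e i j 0 = a i) (h1 : ∀ i j, e i j 1 = b j)
    (h : ∀ i j k l, i ≠ k → j ≠ l → ∀ s t, e i j s ≠ e k l t) : False := by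
  have other : ∀ j : Fin 3, ∃ l, j ≠ l := by decide
  have haa : ∀ i k, i ≠ k → a i ≠ a k := fun i k hik => by
    have := h i 0 k 1 hik (by decide) 0 0
    rwa [h0, h0] at this
  have hbb : ∀ j l, j ≠ l → b j ≠ b l := fun j l hjl => by
    have := h 0 j 1 l (by decide) hjl 1 1
    rwa [h1, h1] at this
  have hea : ∀ i j k, i ≠ k → ∀ s, e i j s ≠ a k := fun i j k hik s => by
    obtain ⟨l, hl⟩ := other j
    have := h i j k l hik hl s 0
    rwa [h0] at this
  have heb : ∀ i j l, j ≠ l → ∀ s, e i j s ≠ b l := fun i j l hjl s => by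
    obtain ⟨k, hk⟩ := other i
    have := h i j k l hk hjl s 1
    rwa [h1] at this
  have hab : ∀ i l, a i ≠ b l := fun i l => by
    obtain ⟨j, hj⟩ := other l
    have := heb i j l hj.symm 0
    rwa [h0] at this
  -- Changes of logarithm along the edges, in units of `2πi` relative to the reference logarithms.
  have hA : ∀ k i j, ∃ m : ℤ, i ≠ k → logChange (e i j - .const _ (a k)) =
      (Complex.log (a k - b j) + Real.pi * Complex.I) - refLog a i k
        + m * (2 * Real.pi * Complex.I) := by
    intro k i j
    by_cases hik : i = k
    · exact ⟨0, fun hh => absurd hik hh⟩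
    · have h2 := exp_logChange (e i j - .const _ (a k))
        (fun t => by simpa [sub_eq_zero] using hea i j k hik t)
      obtain ⟨m, hm⟩ := exists_int_of_exp_eq
        (u := Complex.log (a k - b j) + Real.pi * Complex.I) (v := refLog a i k) h2
        (by rw [Complex.exp_add, Complex.exp_log (sub_ne_zero.2 (hab _ _))]; simp [h1])
        (by rw [exp_refLog _ (haa _ _ hik)]; simp [h0])
      exact ⟨m, fun _ => hm⟩
  have hB : ∀ l i j, ∃ m : ℤ, j ≠ l → logChange (e i j - .const _ (b l)) =
      refLog b j l - Complex.log (a i - b l) + m * (2 * Real.pi * Complex.I) := by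
    intro l i j
    by_cases hjl : j = l
    · exact ⟨0, fun hh => absurd hjl hh⟩
    · have h2 := exp_logChange (e i j - .const _ (b l))
        (fun t => by simpa [sub_eq_zero] using heb i j l hjl t)
      obtain ⟨m, hm⟩ := exists_int_of_exp_eq
        (u := refLog b j l) (v := Complex.log (a i - b l)) h2
        (by rw [exp_refLog _ (hbb _ _ hjl)]; simp [h1])
        (by rw [Complex.exp_log (sub_ne_zero.2 (hab _ _))]; simp [h0])
      exact ⟨m, fun _ => hm⟩
  choose mA hmA using hA
  choose mB hmB using hB
  have key : ∀ i k j l : Fin 3, i < k → j ≠ l →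
      mA k i j + mB j k l - mA i k l - mB l i j = if j < l then -1 else 0 := by
    intro i k j l hik hjl
    have sq := logChange_square (e i j) (e k l) (h i j k l hik.ne hjl)
    rw [h0, h1, h0, h1, hmA k i j hik.ne, hmB j k l hjl.symm, hmA i k l hik.ne', hmB l i j hjl] at sq
    have hpi : (2 * Real.pi * Complex.I : ℂ) ≠ 0 := Complex.two_pi_I_ne_zero
    have e1 : refLog a k i = refLog a i k + Real.pi * Complex.I := by
      rw [refLog, refLog, if_neg hik.not_gt, if_pos hik]
    suffices hs : ((mA k i j + mB j k l - mA i k l - mB l i j : ℤ) : ℂ) =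
        ((if j < l then -1 else 0 : ℤ) : ℂ) by exact_mod_cast hs
    apply mul_right_cancel₀ hpi
    rcases lt_or_gt_of_ne hjl with hlt | hlt
    · have e2 : refLog b l j = refLog b j l + Real.pi * Complex.I := by
        rw [refLog, refLog, if_neg hlt.not_gt, if_pos hlt]
      rw [e1, e2] at sq
      rw [if_pos hlt]; push_cast
      linear_combination sq
    · have e2 : refLog b j l = refLog b l j + Real.pi * Complex.I := by
        rw [refLog, refLog, if_neg hlt.not_gt, if_pos hlt]
      rw [e1, e2] at sq
      rw [if_neg hlt.not_gt]; push_cast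
      linear_combination sq
  -- Each `mA` and `mB` occurs in exactly two of the 18 relations, nine of which have value `-1`.
  have k1 := key 0 1 0 1 (by decide) (by decide)
  have k2 := key 0 1 0 2 (by decide) (by decide)
  have k3 := key 0 1 1 2 (by decide) (by decide)
  have k4 := key 0 1 1 0 (by decide) (by decide)
  have k5 := key 0 1 2 0 (by decide) (by decide)
  have k6 := key 0 1 2 1 (by decide) (by decide)
  have l1 := key 0 2 0 1 (by decide) (by decide)
  have l2 := key 0 2 0 2 (by decide) (by decide)
  have l3 := key 0 2 1 2 (by decide) (by decide)
  have l4 := key 0 2 1 0 (by decide) (by decide)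
  have l5 := key 0 2 2 0 (by decide) (by decide)
  have l6 := key 0 2 2 1 (by decide) (by decide)
  have n1 := key 1 2 0 1 (by decide) (by decide)
  have n2 := key 1 2 0 2 (by decide) (by decide)
  have n3 := key 1 2 1 2 (by decide) (by decide)
  have n4 := key 1 2 1 0 (by decide) (by decide)
  have n5 := key 1 2 2 0 (by decide) (by decide)
  have n6 := key 1 2 2 1 (by decide) (by decide)
  simp at k1 k2 k3 k4 k5 k6 l1 l2 l3 l4 l5 l6 n1 n2 n3 n4 n5 n6
  omega

/-! ### Components and boundary bumping -/

/-- In a compact space components are quasicomponents: a component inside an open set `W` is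
contained in a relatively clopen set inside `W`. -/
theorem exists_clopen_subset {α : Type*} [TopologicalSpace α] [T2Space α] {Z W : Set α}
    (hZ : IsCompact Z) (hW : IsOpen W) {x : α} (hx : x ∈ Z)
    (h : connectedComponentIn Z x ⊆ W) :
    ∃ Q ⊆ Z, x ∈ Q ∧ Q ⊆ W ∧ IsClosed Q ∧ IsClosed (Z \ Q) := by
  have := isCompact_iff_compactSpace.1 hZ
  have h1 : connectedComponent (⟨x, hx⟩ : Z) ⊆ Subtype.val ⁻¹' W := by
    rw [connectedComponentIn_eq_image hx] at h
    exact image_subset_iff.1 h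
  rw [connectedComponent_eq_iInter_isClopen] at h1
  have hemb := hZ.isClosed.isClosedEmbedding_subtypeVal
  have : Nonempty { s : Set Z // IsClopen s ∧ (⟨x, hx⟩ : Z) ∈ s } := ⟨⟨univ, isClopen_univ, trivial⟩⟩
  obtain ⟨s, hs⟩ := IsCompact.elim_directed_family_closed
    (hW.preimage continuous_subtype_val).isClosed_compl.isCompact
    (fun s : { s : Set Z // IsClopen s ∧ (⟨x, hx⟩ : Z) ∈ s } => (s : Set Z)) (fun s => s.2.1.1)
    (by rw [← disjoint_iff_inter_eq_empty, disjoint_compl_left_iff_subset]; exact h1)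
    (fun s t => ⟨⟨s ∩ t, s.2.1.inter t.2.1, s.2.2, t.2.2⟩, inter_subset_left, inter_subset_right⟩)
  rw [← disjoint_iff_inter_eq_empty, disjoint_compl_left_iff_subset] at hs
  refine ⟨Subtype.val '' (s : Set Z), by simp, ⟨_, s.2.2, rfl⟩, image_subset_iff.2 hs,
    hemb.isClosedMap _ s.2.1.1, ?_⟩
  have : Z \ Subtype.val '' (s : Set Z) = Subtype.val '' (s : Set Z)ᶜ := by
    ext z; simp
  rw [this]
  exact hemb.isClosedMap _ s.2.1.compl.1

theorem isClosed_componentIn {α : Type*} [TopologicalSpace α] {Z : Set α} (hZ : IsClosed Z) (x : α) :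
    IsClosed (connectedComponentIn Z x) := by
  by_cases hx : x ∈ Z
  · rw [connectedComponentIn_eq_image hx]
    exact hZ.isClosedEmbedding_subtypeVal.isClosedMap _ isClosed_connectedComponent
  · rw [connectedComponentIn_eq_empty hx]; exact isClosed_empty

/-- Boundary bumping: a component of `L ∩ closure O` that meets the open set `O` reaches outside `O`,
unless it is all of `L`. -/
theorem boundary_bumping {α : Type*} [TopologicalSpace α] [T2Space α] {L O : Set α}
    (hLc : IsCompact L) (hL : IsPreconnected L) (hO : IsOpen O) {x : α} (hxL : x ∈ L) (hxO : x ∈ O) :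
    connectedComponentIn (L ∩ closure O) x = L ∨
      (connectedComponentIn (L ∩ closure O) x \ O).Nonempty := by
  by_contra! hcon
  obtain ⟨h1, h2⟩ := hcon
  have hxZ : x ∈ L ∩ closure O := ⟨hxL, subset_closure hxO⟩
  obtain ⟨Q, hQZ, hxQ, hQO, hQ, hZQ⟩ := exists_clopen_subset (hLc.inter_right isClosed_closure) hO
    hxZ (sdiff_eq_empty.1 h2)
  have hLQ : IsClosed (L \ Q) := by
    have : L \ Q = ((L ∩ closure O) \ Q) ∪ (L \ O) := by
      ext y
      have := @hQO y
      have := @subset_closure _ _ O y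
      simp only [Set.mem_sdiff, mem_union, mem_inter_iff]
      tauto
    rw [this]
    exact hZQ.union (hLc.isClosed.sdiff hO)
  have hsub : L ⊆ Q := by
    intro y hy
    by_contra hyQ
    obtain ⟨z, -, hz1, hz2⟩ := isPreconnected_closed_iff.1 hL Q (L \ Q) hQ hLQ
      (fun z hz => by by_cases hzQ : z ∈ Q; exacts [Or.inl hzQ, Or.inr ⟨hz, hzQ⟩])
      ⟨x, hxL, hxQ⟩ ⟨y, hy, hy, hyQ⟩
    exact hz2.2 hz1
  exact h1 (Subset.antisymm ((connectedComponentIn_subset _ _).trans inter_subset_left)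
    (hL.subset_connectedComponentIn hxL (hsub.trans hQZ)))

theorem closure_component_inter {α : Type*} [TopologicalSpace α] [T2Space α] [NormalSpace α]
    {K B : Set α} (hKc : IsCompact K) (hK : IsPreconnected K) (hB : IsClosed B)
    (hKB : (K ∩ B).Nonempty) {a : α} (haK : a ∈ K) (haB : a ∉ B) :
    (closure (connectedComponentIn (K \ B) a) ∩ B).Nonempty := by
  by_contra hcon
  rw [not_nonempty_iff_eq_empty, ← disjoint_iff_inter_eq_empty,
    ← subset_compl_iff_disjoint_right] at hcon
  obtain ⟨O, hO, hSO, hOB⟩ := normal_exists_closure_subset isClosed_closure hB.isOpen_compl hcon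
  have haS : a ∈ connectedComponentIn (K \ B) a := mem_connectedComponentIn ⟨haK, haB⟩
  have haO := hSO (subset_closure haS)
  have haZ : a ∈ K ∩ closure O := ⟨haK, subset_closure haO⟩
  have hZ := connectedComponentIn_subset (K ∩ closure O) a
  have hKS : connectedComponentIn (K ∩ closure O) a ⊆ connectedComponentIn (K \ B) a :=
    isPreconnected_connectedComponentIn.subset_connectedComponentIn
      (mem_connectedComponentIn haZ) (fun y hy => ⟨(hZ hy).1, hOB (hZ hy).2⟩)
  rcases boundary_bumping hKc hK hO haK haO with h | ⟨y, hy, hyO⟩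
  · obtain ⟨b, hbK, hbB⟩ := hKB
    rw [h] at hZ
    exact hOB (hZ hbK).2 hbB
  · exact hyO (hSO (subset_closure (hKS hy)))

/-- A continuum `K` joining disjoint closed sets `A` and `B` contains a point that can be joined in
`K` to `A` avoiding `B`, and to `B` avoiding `A`. -/
theorem exists_hair {α : Type*} [TopologicalSpace α] [T2Space α] [NormalSpace α]
    {K A B : Set α} (hKc : IsCompact K) (hK : IsPreconnected K) (hA : IsClosed A) (hB : IsClosed B)
    (hAB : Disjoint A B) (hKA : (K ∩ A).Nonempty) (hKB : (K ∩ B).Nonempty) :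
    ∃ q, ∃ QA ⊆ K, ∃ QB ⊆ K, IsPreconnected QA ∧ IsPreconnected QB ∧ q ∈ QA ∧ q ∈ QB ∧
      (QA ∩ A).Nonempty ∧ Disjoint QA B ∧ (QB ∩ B).Nonempty ∧ Disjoint QB A := by
  obtain ⟨a, haK, haA⟩ := hKA
  have haB : a ∉ B := disjoint_left.1 hAB haA
  -- `closure S` adds to `S` only points of `B`; `q` is taken where a component of `closure S \ A`
  -- starting on `B` has left `B`, hence inside the connected set `closure S \ B`.
  set S := connectedComponentIn (K \ B) a with hS
  have hSK : S ⊆ K \ B := connectedComponentIn_subset _ _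
  have haS : a ∈ S := mem_connectedComponentIn ⟨haK, haB⟩
  have hSp : IsPreconnected S := isPreconnected_connectedComponentIn
  have hcK : closure S ⊆ K := closure_minimal (hSK.trans sdiff_subset) hKc.isClosed
  obtain ⟨b, hbS, hbB⟩ := closure_component_inter hKc hK hB hKB haK haB
  have hbA : b ∉ A := disjoint_right.1 hAB hbB
  have hcc : IsCompact (closure S) := hKc.of_isClosed_subset isClosed_closure hcK
  set S' := connectedComponentIn (closure S \ A) b with hS'
  have hS'K : S' ⊆ closure S \ A := connectedComponentIn_subset _ _
  obtain ⟨a', ha'S, ha'A⟩ := closure_component_inter hcc hSp.closure hA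
    ⟨a, subset_closure haS, haA⟩ hbS hbA
  obtain ⟨q, hq, hqB⟩ : ∃ q ∈ S', q ∉ B := by
    by_contra! hcon
    exact disjoint_left.1 hAB ha'A (closure_minimal hcon hB ha'S)
  refine ⟨q, closure S \ B, sdiff_subset.trans hcK, S', hS'K.trans (sdiff_subset.trans hcK),
    hSp.subset_closure (fun y hy => ⟨subset_closure hy, (hSK hy).2⟩) sdiff_subset,
    isPreconnected_connectedComponentIn, ⟨(hS'K hq).1, hqB⟩, hq,
    ⟨a, ⟨subset_closure haS, haB⟩, haA⟩, disjoint_sdiff_left,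
    ⟨b, mem_connectedComponentIn ⟨hbS, hbA⟩, hbB⟩, disjoint_left.2 fun y hy => (hS'K hy).2⟩

/-- Composants of a nondegenerate continuum are dense. -/
theorem exists_proper_meeting {α : Type*} [TopologicalSpace α] [T2Space α] [RegularSpace α]
    {X V : Set α} (hX : IsContinuum X) (hXn : X.Nontrivial) {a : α} (ha : a ∈ X) (hV : IsOpen V)
    (hXV : (X ∩ V).Nonempty) :
    ∃ K, IsContinuum K ∧ K ⊆ X ∧ K ≠ X ∧ a ∈ K ∧ (K ∩ V).Nonempty := by
  by_cases haV : a ∈ V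
  · refine ⟨{a}, ⟨isCompact_singleton, isConnected_singleton⟩, singleton_subset_iff.2 ha,
      fun h => ?_, rfl, ⟨a, rfl, haV⟩⟩
    rw [← h] at hXn
    exact not_nontrivial_singleton hXn
  · obtain ⟨z, hzX, hzV⟩ := hXV
    obtain ⟨T, hT, hTc, hTV⟩ := exists_mem_nhds_isClosed_subset (hV.mem_nhds hzV)
    have hO := hTc.isOpen_compl
    have haO : a ∈ Tᶜ := fun h => haV (hTV h)
    have haZ : a ∈ X ∩ closure Tᶜ := ⟨ha, subset_closure haO⟩
    have hZ := connectedComponentIn_subset (X ∩ closure Tᶜ) a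
    have hne : connectedComponentIn (X ∩ closure Tᶜ) a ≠ X := by
      intro h
      rw [h] at hZ
      have := (hZ hzX).2
      rw [closure_compl] at this
      exact this (mem_interior_iff_mem_nhds.2 hT)
    refine ⟨_, ⟨(hX.1.inter_right isClosed_closure).of_isClosed_subset
      (isClosed_componentIn (hX.1.isClosed.inter isClosed_closure) _) hZ,
      isConnected_connectedComponentIn_iff.2 haZ⟩, hZ.trans inter_subset_left, hne,
      mem_connectedComponentIn haZ, ?_⟩
    obtain ⟨y, hy, hyO⟩ := (boundary_bumping hX.1 hX.2.2 hO ha haO).resolve_left hne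
    exact ⟨y, hy, hTV (not_not.1 hyO)⟩

/-! ### Three continua on the boundary of a plane region -/

theorem isPreconnected_thickening {Y : Set ℂ} (hY : IsPreconnected Y) (δ : ℝ) :
    IsPreconnected (thickening δ Y) := by
  rw [← add_ball_zero, ← Set.add_image_prod]
  exact (hY.prod (convex_ball 0 δ).isPreconnected).image _ (by fun_prop)

theorem exists_path_of_isOpen {U S : Set ℂ} (hU : IsOpen U) (hS : IsPreconnected S) (hSU : S ⊆ U)
    {x y : ℂ} (hx : x ∈ S) (hy : y ∈ S) : ∃ p : Path x y, range p ⊆ U := by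
  have hc : IsConnected (connectedComponentIn U x) :=
    isConnected_connectedComponentIn_iff.2 (hSU hx)
  have hp := (hU.connectedComponentIn.isConnected_iff_isPathConnected).1 hc
  obtain ⟨p, hp⟩ := hp.joinedIn x (mem_connectedComponentIn (hSU hx)) y
    (hS.subset_connectedComponentIn hx hSU hy)
  exact ⟨p, range_subset_iff.2 fun t => connectedComponentIn_subset _ _ (hp t)⟩

theorem eventually_disjoint_thickening {s t : Set ℂ} (hs : IsCompact s) (ht : IsClosed t)
    (h : Disjoint s t) : ∀ᶠ δ in 𝓝[>] (0 : ℝ), Disjoint (thickening δ s) (thickening δ t) := by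
  obtain ⟨δ, hδ, hd⟩ := h.exists_thickenings hs ht
  filter_upwards [Ioo_mem_nhdsGT hδ] with ε hε
  exact hd.mono (thickening_mono hε.2.le _) (thickening_mono hε.2.le _)

/-- Nonplanarity of `K₃,₃` with connected sets instead of paths: the centres `q i` are joined inside
disjoint open sets `G i` to three disjoint compact connected poles `Y j`, the link `Q i j` avoiding
the other two poles. -/
theorem K33_nonplanar_pieces {G : Fin 3 → Set ℂ} (hG : ∀ i, IsOpen (G i)) (hGd : ∀ i k, i ≠ k → Disjoint (G i) (G k))
    {Y : Fin 3 → Set ℂ} (hYc : ∀ j, IsCompact (Y j)) (hY : ∀ j, IsPreconnected (Y j))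
    (hYd : ∀ j l, j ≠ l → Disjoint (Y j) (Y l))
    {q : Fin 3 → ℂ} {Q : Fin 3 → Fin 3 → Set ℂ} (hQG : ∀ i j, Q i j ⊆ G i)
    (hQ : ∀ i j, IsPreconnected (Q i j)) (hq : ∀ i j, q i ∈ Q i j)
    (hQY : ∀ i j, (Q i j ∩ Y j).Nonempty) (hQd : ∀ i j l, j ≠ l → Disjoint (Q i j) (Y l)) :
    False := by
  choose t ht using hQY
  have hpath : ∀ i j, ∃ p : Path (q i) (t i j), range p ⊆ G i ∩ ⋂ l ∈ ({j}ᶜ : Set (Fin 3)), (Y l)ᶜ := by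
    intro i j
    refine exists_path_of_isOpen ((hG i).inter ?_) (hQ i j) (fun y hy => ⟨hQG i j hy, ?_⟩)
      (hq i j) (ht i j).1
    · exact (toFinite _).isOpen_biInter fun l _ => (hYc l).isClosed.isOpen_compl
    · simp only [mem_iInter]
      exact fun l hl => disjoint_left.1 (hQd i j l (Ne.symm hl)) hy
  choose p hp using hpath
  have hpG : ∀ i j s, p i j s ∈ G i := fun i j s => (hp i j ⟨s, rfl⟩).1
  have hpY : ∀ i j l, j ≠ l → Disjoint (range (p i j)) (Y l) := fun i j l hjl =>
    disjoint_left.2 fun y hy => mem_iInter₂.1 (hp i j hy).2 l (Ne.symm hjl)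
  have ev : ∀ᶠ δ in 𝓝[>] (0 : ℝ), 0 < δ ∧
      (∀ j l, j ≠ l → Disjoint (thickening δ (Y j)) (thickening δ (Y l))) ∧
      ∀ i j l, j ≠ l → Disjoint (thickening δ (range (p i j))) (thickening δ (Y l)) := by
    refine (eventually_mem_nhdsWithin).and (Eventually.and ?_ ?_)
    · simp only [eventually_all]
      exact fun j l hjl => eventually_disjoint_thickening (hYc j) (hYc l).isClosed (hYd j l hjl)
    · simp only [eventually_all]
      exact fun i j l hjl => eventually_disjoint_thickening (isCompact_range (p i j).continuous)
        (hYc l).isClosed (hpY i j l hjl)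
  obtain ⟨δ, hδ, hd1, hd2⟩ := ev.exists
  have hpath2 : ∀ i j, ∃ r : Path (t i j) (t 0 j), range r ⊆ thickening δ (Y j) := fun i j =>
    exists_path_of_isOpen isOpen_thickening (isPreconnected_thickening (hY j) δ) Subset.rfl
      (self_subset_thickening hδ _ (ht i j).2) (self_subset_thickening hδ _ (ht 0 j).2)
  choose r hr using hpath2
  refine K33_nonplanar_paths q (t 0) (fun i j => ((p i j).trans (r i j)).toContinuousMap)
    (fun i j => ((p i j).trans (r i j)).source) (fun i j => ((p i j).trans (r i j)).target) ?_
  intro i j k l hik hjl s s' heq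
  have h1 : ((p i j).trans (r i j)) s ∈ range (p i j) ∪ range (r i j) := by
    rw [← Path.trans_range]; exact ⟨s, rfl⟩
  have h2 : ((p k l).trans (r k l)) s' ∈ range (p k l) ∪ range (r k l) := by
    rw [← Path.trans_range]; exact ⟨s', rfl⟩
  change ((p i j).trans (r i j)) s = ((p k l).trans (r k l)) s' at heq
  rw [← heq] at h2
  rcases h1 with h1 | h1 <;> rcases h2 with h2 | h2
  · exact disjoint_left.1 (hGd i k hik) (hp i j h1).1 (hp k l h2).1
  · exact disjoint_left.1 (hd2 i j l hjl) (self_subset_thickening hδ _ h1) (hr k l h2)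
  · exact disjoint_left.1 (hd2 k l j hjl.symm) (self_subset_thickening hδ _ h2) (hr i j h1)
  · exact disjoint_left.1 (hd1 j l hjl) (hr i j h1) (hr k l h2)

/-- Three disjoint continua on the boundary of a plane region cannot all join the same two disjoint
continua, if these lie off the region: the region itself provides a third pole. -/
theorem no_three_crossing_continua {R Y1 Y2 : Set ℂ} (hR : IsOpen R) (hRc : IsConnected R)
    (hY1c : IsCompact Y1) (hY1 : IsPreconnected Y1) (hY1R : Disjoint Y1 R)
    (hY2c : IsCompact Y2) (hY2 : IsPreconnected Y2) (hY2R : Disjoint Y2 R)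
    (hY12 : Disjoint Y1 Y2) {K : Fin 3 → Set ℂ} (hKc : ∀ i, IsCompact (K i))
    (hK : ∀ i, IsPreconnected (K i)) (hKd : ∀ i k, i ≠ k → Disjoint (K i) (K k))
    (hKR : ∀ i, K i ⊆ closure R) (hKR' : ∀ i, Disjoint (K i) R)
    (hK1 : ∀ i, (K i ∩ Y1).Nonempty) (hK2 : ∀ i, (K i ∩ Y2).Nonempty) : False := by
  have hair := fun i => exists_hair (hKc i) (hK i) hY1c.isClosed hY2c.isClosed hY12 (hK1 i) (hK2 i)
  choose q QA hQAK QB hQBK hQA hQB hqA hqB hA1 hA2 hB2 hB1 using hair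
  have ev : ∀ᶠ δ in 𝓝[>] (0 : ℝ), 0 < δ ∧
      ∀ i k, i ≠ k → Disjoint (thickening δ (K i)) (thickening δ (K k)) := by
    refine (eventually_mem_nhdsWithin).and ?_
    simp only [eventually_all]
    exact fun i k hik => eventually_disjoint_thickening (hKc i) (hKc k).isClosed (hKd i k hik)
  obtain ⟨δ, hδ, hd⟩ := ev.exists
  have hball : ∀ i, ∃ ρ > 0, ball (q i) ρ ⊆ thickening δ (K i) ∩ (Y1 ∪ Y2)ᶜ := fun i =>
    Metric.isOpen_iff.1 (isOpen_thickening.inter (hY1c.union hY2c).isClosed.isOpen_compl) _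
      ⟨self_subset_thickening hδ _ (hQAK i (hqA i)), fun h => h.elim
        (disjoint_left.1 (hB1 i) (hqB i)) (disjoint_left.1 (hA2 i) (hqA i))⟩
  choose ρ hρ hball using hball
  have hc : ∀ i, ∃ c ∈ ball (q i) (ρ i), c ∈ R := fun i =>
    mem_closure_iff.1 (hKR i (hQAK i (hqA i))) _ isOpen_ball (mem_ball_self (hρ i))
  choose c hcb hcR using hc
  have hpath := fun i => exists_path_of_isOpen hR hRc.isPreconnected Subset.rfl (hcR 0) (hcR i)
  choose p hp using hpath
  have hγR : (⋃ i, range (p i)) ⊆ R := iUnion_subset hp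
  refine K33_nonplanar_pieces (G := fun i => thickening δ (K i)) (Y := ![Y1, Y2, ⋃ i, range (p i)])
    (q := q) (Q := fun i => ![QA i, QB i, ball (q i) (ρ i)]) (fun i => isOpen_thickening) hd
    ?_ ?_ ?_ ?_ ?_ ?_ ?_ ?_
  · intro j; fin_cases j
    exacts [hY1c, hY2c, isCompact_iUnion fun i => isCompact_range (p i).continuous]
  · intro j; fin_cases j
    exacts [hY1, hY2, isPreconnected_iUnion ⟨c 0, mem_iInter.2 fun i => ⟨0, (p i).source⟩⟩
      fun i => isPreconnected_range (p i).continuous]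
  · have h13 := hY1R.mono_right hγR
    have h23 := hY2R.mono_right hγR
    intro j l hjl
    fin_cases j <;> fin_cases l <;> first | exact absurd rfl hjl | skip
    exacts [hY12, h13, hY12.symm, h23, h13.symm, h23.symm]
  · intro i j; fin_cases j
    exacts [(hQAK i).trans (self_subset_thickening hδ _), (hQBK i).trans (self_subset_thickening hδ _),
      (hball i).trans inter_subset_left]
  · intro i j; fin_cases j
    exacts [hQA i, hQB i, (convex_ball _ _).isPreconnected]
  · intro i j; fin_cases j
    exacts [hqA i, hqB i, mem_ball_self (hρ i)]
  · intro i j; fin_cases j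
    exacts [hA1 i, hB2 i, ⟨c i, hcb i, mem_iUnion.2 ⟨i, 1, (p i).target⟩⟩]
  · intro i
    have hb : Disjoint (ball (q i) (ρ i)) (Y1 ∪ Y2) :=
      subset_compl_iff_disjoint_right.1 ((hball i).trans inter_subset_right)
    have h3 := (hKR' i).mono_right hγR
    intro j l hjl
    fin_cases j <;> fin_cases l <;> first | exact absurd rfl hjl | skip
    exacts [hA2 i, h3.mono_left (hQAK i), hB1 i, h3.mono_left (hQBK i),
      hb.mono_right subset_union_left, hb.mono_right subset_union_right]

/-! ### Indecomposable continua and their composants -/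

theorem isContinuum_component {α : Type*} [TopologicalSpace α] [T2Space α] {Z : Set α}
    (hZ : IsCompact Z) {x : α} (hx : x ∈ Z) : IsContinuum (connectedComponentIn Z x) :=
  ⟨hZ.of_isClosed_subset (isClosed_componentIn hZ.isClosed _) (connectedComponentIn_subset _ _),
    isConnected_connectedComponentIn_iff.2 hx⟩

theorem mem_composant {α : Type*} [TopologicalSpace α] {X : Set α} {a b : α} :
    b ∈ composant X a ↔ ∃ K, IsContinuum K ∧ K ⊆ X ∧ K ≠ X ∧ a ∈ K ∧ b ∈ K := by
  simp [composant, mem_sUnion, and_assoc]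

theorem composant_symm {α : Type*} [TopologicalSpace α] {X : Set α} {a b : α}
    (h : b ∈ composant X a) : a ∈ composant X b := by
  obtain ⟨K, h1, h2, h3, h4, h5⟩ := mem_composant.1 h
  exact mem_composant.2 ⟨K, h1, h2, h3, h5, h4⟩

theorem IsIndecomposable.union {α : Type*} [TopologicalSpace α] {X K K' : Set α}
    (hX : IsIndecomposable X) (hK : IsContinuum K) (hKX : K ⊆ X) (hKne : K ≠ X)
    (hK' : IsContinuum K') (hKX' : K' ⊆ X) (hKne' : K' ≠ X) (h : (K ∩ K').Nonempty) :
    IsContinuum (K ∪ K') ∧ K ∪ K' ⊆ X ∧ K ∪ K' ≠ X :=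
  ⟨⟨hK.1.union hK'.1, hK.2.union h hK'.2⟩, union_subset hKX hKX',
    fun he => hX.2 ⟨K, K', hK, hKX, hKne, hK', hKX', hKne', he⟩⟩

theorem IsIndecomposable.composant_trans {α : Type*} [TopologicalSpace α] {X : Set α}
    (hX : IsIndecomposable X) {a b c : α}
    (hab : b ∈ composant X a) (hbc : c ∈ composant X b) : c ∈ composant X a := by
  obtain ⟨K, h1, h2, h3, h4, h5⟩ := mem_composant.1 hab
  obtain ⟨K', h1', h2', h3', h4', h5'⟩ := mem_composant.1 hbc
  obtain ⟨g1, g2, g3⟩ := hX.union h1 h2 h3 h1' h2' h3' ⟨b, h5, h4'⟩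
  exact mem_composant.2 ⟨_, g1, g2, g3, Or.inl h4, Or.inr h5'⟩

theorem mem_composant_self {α : Type*} [TopologicalSpace α] {X : Set α} (hX : X.Nontrivial) {a : α}
    (ha : a ∈ X) : a ∈ composant X a := by
  refine mem_composant.2 ⟨{a}, ⟨isCompact_singleton, isConnected_singleton⟩,
    singleton_subset_iff.2 ha, fun h => ?_, rfl, rfl⟩
  rw [← h] at hX
  exact not_nontrivial_singleton hX

/-- If removing the connected set `K` from the connected set `X` separates it into pieces `P` and `Q`,
then `K` together with one piece is connected. -/
theorem isPreconnected_union_piece {α : Type*} [TopologicalSpace α] {X K P Q : Set α}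
    (hX : IsPreconnected X) (hK : IsPreconnected K) (hKc : IsClosed K) (hP : IsClosed P)
    (hQ : IsClosed Q) (hXe : X = K ∪ P ∪ Q) (hPQ : Disjoint P Q) : IsPreconnected (K ∪ P) := by
  have key : ∀ E F, IsClosed E → IsClosed F → K ∪ P ⊆ E ∪ F → (K ∪ P) ∩ (E ∩ F) = ∅ → K ⊆ E →
      K ∪ P ⊆ E ∨ K ∪ P ⊆ F := by
    intro E F hE hF hEF hd hKE
    have hcl : IsClosed (K ∪ P) := hKc.union hP
    have hcov : X ⊆ (((K ∪ P) ∩ E) ∪ Q) ∪ ((K ∪ P) ∩ F) := by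
      rw [hXe]
      rintro z (hz | hz)
      · rcases hEF hz with h | h
        exacts [Or.inl (Or.inl ⟨hz, h⟩), Or.inr ⟨hz, h⟩]
      · exact Or.inl (Or.inr hz)
    have hdis : X ∩ ((((K ∪ P) ∩ E) ∪ Q) ∩ ((K ∪ P) ∩ F)) = ∅ := by
      rw [eq_empty_iff_forall_notMem]
      rintro z ⟨-, h | h, hz, hzF⟩
      · exact eq_empty_iff_forall_notMem.1 hd z ⟨hz, h.2, hzF⟩
      · rcases hz with hz | hz
        · exact eq_empty_iff_forall_notMem.1 hd z ⟨Or.inl hz, hKE hz, hzF⟩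
        · exact disjoint_left.1 hPQ hz h
    rcases isPreconnected_iff_subset_of_disjoint_closed.1 hX _ _
      ((hcl.inter hE).union hQ) (hcl.inter hF) hcov hdis with h | h
    · left
      rintro z (hz | hz)
      · exact hKE hz
      · rcases h (hXe.symm.subset (Or.inl (Or.inr hz))) with h | h
        exacts [h.2, (disjoint_left.1 hPQ hz h).elim]
    · right
      exact fun z hz => (h (hXe.symm.subset (Or.inl hz))).2
  rw [isPreconnected_iff_subset_of_disjoint_closed]
  intro E F hE hF hEF hd
  rcases isPreconnected_iff_subset_of_disjoint_closed.1 hK E F hE hF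
    (subset_union_left.trans hEF) (subset_eq_empty (inter_subset_inter_left _ subset_union_left) hd)
    with h | h
  · exact key E F hE hF hEF hd h
  · exact (key F E hF hE (union_comm E F ▸ hEF) (inter_comm E F ▸ hd) h).symm

/-- A proper subcontinuum of an indecomposable continuum has empty relative interior. If
`closure (X \ K)` is connected, it decomposes `X` together with `K`; otherwise a separation `P`, `Q`
of it gives the decomposition `K ∪ P`, `K ∪ Q`. -/
theorem IsIndecomposable.not_subset_proper {α : Type*} [TopologicalSpace α] [T2Space α]
    {X K V : Set α} (hX : IsIndecomposable X) (hK : IsContinuum K) (hKX : K ⊆ X) (hKne : K ≠ X)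
    (hV : IsOpen V) (hXV : (X ∩ V).Nonempty) : ¬ X ∩ V ⊆ K := by
  intro hVK
  have hXc := hX.1.1.isClosed
  set T := closure (X \ K) with hT
  have hTX : T ⊆ X := closure_minimal sdiff_subset hXc
  have hTV : T ⊆ X \ V := closure_minimal (fun z hz => ⟨hz.1, fun h => hz.2 (hVK ⟨hz.1, h⟩)⟩)
    (hXc.sdiff hV)
  have hXT : ∀ z ∈ X, z ∉ K → z ∈ T := fun z hz hzK => subset_closure ⟨hz, hzK⟩
  have hTc : IsCompact T := hX.1.1.of_isClosed_subset isClosed_closure hTX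
  obtain ⟨y, hyX, hyV⟩ := hXV
  by_cases hTp : IsPreconnected T
  · obtain ⟨w, hwX, hwK⟩ := not_subset.1 fun h => hKne (hKX.antisymm h)
    refine hX.2 ⟨K, T, hK, hKX, hKne, ⟨hTc, ⟨w, hXT w hwX hwK⟩, hTp⟩, hTX,
      fun h => (hTV (h ▸ hyX)).2 hyV, (union_subset hKX hTX).antisymm fun z hz => ?_⟩
    by_cases hzK : z ∈ K
    exacts [Or.inl hzK, Or.inr (hXT z hz hzK)]
  · rw [isPreconnected_closed_iff] at hTp
    push Not at hTp
    obtain ⟨P, Q, hP, hQ, hTPQ, hTP, hTQ, hd⟩ := hTp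
    have hdis : Disjoint (T ∩ P) (T ∩ Q) := disjoint_left.2 fun z h1 h2 =>
      eq_empty_iff_forall_notMem.1 hd z ⟨h1.1, h1.2, h2.2⟩
    have hXe : X = K ∪ (T ∩ P) ∪ (T ∩ Q) := by
      apply Subset.antisymm
      · intro z hz
        by_cases hzK : z ∈ K
        · exact Or.inl (Or.inl hzK)
        · have hzT := hXT z hz hzK
          rcases hTPQ hzT with h | h
          exacts [Or.inl (Or.inr ⟨hzT, h⟩), Or.inr ⟨hzT, h⟩]
      · exact union_subset (union_subset hKX (inter_subset_left.trans hTX))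
          (inter_subset_left.trans hTX)
    have hXe' : X = K ∪ (T ∩ Q) ∪ (T ∩ P) := by rw [hXe, union_right_comm]
    have hex : ∀ P Q, IsClosed Q → T ⊆ P ∪ Q → T ∩ (P ∩ Q) = ∅ → (T ∩ P).Nonempty →
        ∃ z ∈ T ∩ P, z ∉ K := by
      rintro P Q hQ hTPQ hd ⟨p, hpT, hpP⟩
      obtain ⟨z, hzQ, hzX, hzK⟩ := mem_closure_iff.1 hpT Qᶜ hQ.isOpen_compl
        fun h => eq_empty_iff_forall_notMem.1 hd p ⟨hpT, hpP, h⟩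
      have hzT := hXT z hzX hzK
      exact ⟨z, ⟨hzT, (hTPQ hzT).resolve_right hzQ⟩, hzK⟩
    obtain ⟨p, hpP, hpK⟩ := hex P Q hQ hTPQ hd hTP
    obtain ⟨q, hqQ, hqK⟩ := hex Q P hP (union_comm P Q ▸ hTPQ) (inter_comm P Q ▸ hd) hTQ
    have hPc : IsCompact (T ∩ P) := hTc.inter_right hP
    have hQc : IsCompact (T ∩ Q) := hTc.inter_right hQ
    refine hX.2 ⟨K ∪ (T ∩ P), K ∪ (T ∩ Q),
      ⟨hK.1.union hPc, hK.2.1.mono subset_union_left, isPreconnected_union_piece hX.1.2.2 hK.2.2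
        hK.1.isClosed hPc.isClosed hQc.isClosed hXe hdis⟩,
      union_subset hKX (inter_subset_left.trans hTX), fun h => ?_,
      ⟨hK.1.union hQc, hK.2.1.mono subset_union_left, isPreconnected_union_piece hX.1.2.2 hK.2.2
        hK.1.isClosed hQc.isClosed hPc.isClosed hXe' hdis.symm⟩,
      union_subset hKX (inter_subset_left.trans hTX), fun h => ?_, ?_⟩
    · rcases h.symm.subset (hTX hqQ.1) with h | h
      exacts [hqK h, disjoint_left.1 hdis h hqQ]
    · rcases h.symm.subset (hTX hpP.1) with h | h
      exacts [hpK h, disjoint_left.1 hdis hpP h]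
    · conv_rhs => rw [hXe]
      rw [← union_union_distrib_left, union_assoc]

/-- Baire category in the compact space `X`, for a relatively open set covered by countably many
closed sets. -/
theorem baire_cover {α : Type*} [TopologicalSpace α] [T2Space α] {ι : Type*} [Countable ι]
    {X V : Set α} (hX : IsCompact X) (hV : IsOpen V) (hXV : (X ∩ V).Nonempty) {F : ι → Set α}
    (hF : ∀ i, IsClosed (F i)) (h : X ∩ V ⊆ ⋃ i, F i) :
    ∃ i, ∃ W, IsOpen W ∧ (X ∩ W).Nonempty ∧ X ∩ W ⊆ F i := by
  have := isCompact_iff_compactSpace.1 hX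
  let f : Option ι → Set X := fun o => o.elim (Subtype.val ⁻¹' Vᶜ) fun i => Subtype.val ⁻¹' (F i)
  have hd : Dense (⋃ o, interior (f o)) := by
    apply dense_iUnion_interior_of_closed
    · rintro (_ | i)
      exacts [hV.isClosed_compl.preimage continuous_subtype_val,
        (hF i).preimage continuous_subtype_val]
    · rw [eq_univ_iff_forall]
      intro z
      by_cases hz : z.1 ∈ V
      · obtain ⟨i, hi⟩ := mem_iUnion.1 (h ⟨z.2, hz⟩)
        exact mem_iUnion.2 ⟨some i, hi⟩
      · exact mem_iUnion.2 ⟨none, hz⟩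
  obtain ⟨y, hyX, hyV⟩ := hXV
  obtain ⟨z, hzV, hz⟩ := hd.inter_open_nonempty _ (hV.preimage continuous_subtype_val) ⟨⟨y, hyX⟩, hyV⟩
  obtain ⟨o, ho⟩ := mem_iUnion.1 hz
  rcases o with _ | i
  · exact ((interior_subset ho : z.1 ∉ V) hzV).elim
  · obtain ⟨W, hW, hWe⟩ := isOpen_induced_iff.1 (isOpen_interior (s := f (some i)))
    refine ⟨i, W, hW, ⟨z, z.2, ?_⟩, fun w hw => ?_⟩
    · have h2 : z ∈ Subtype.val ⁻¹' W := by rw [hWe]; exact ho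
      exact h2
    · have h2 : (⟨w, hw.1⟩ : X) ∈ interior (f (some i)) := by rw [← hWe]; exact hw.2
      exact interior_subset (s := f (some i)) h2

theorem exists_basis_avoiding {α : Type*} [TopologicalSpace α] [T2Space α]
    [SecondCountableTopology α] {X K : Set α} (hK : IsCompact K) (hKX : K ⊆ X)
    (hKne : K ≠ X) : ∃ V ∈ TopologicalSpace.countableBasis α, (X ∩ V).Nonempty ∧ K ⊆ X \ V := by
  obtain ⟨w, hwX, hwK⟩ := not_subset.1 fun h => hKne (hKX.antisymm h)
  obtain ⟨V, hV, hwV, hVK⟩ := (TopologicalSpace.isBasis_countableBasis α).exists_subset_of_mem_open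
    hwK hK.isClosed.isOpen_compl
  exact ⟨V, hV, ⟨w, hwX, hwV⟩, fun z hz => ⟨hKX hz, fun h => hVK h hz⟩⟩

theorem component_sdiff_proper {α : Type*} [TopologicalSpace α] [T2Space α] {X V : Set α}
    (hX : IsCompact X) (hV : IsOpen V) (hXV : (X ∩ V).Nonempty) {a : α} (ha : a ∈ X \ V) :
    IsContinuum (connectedComponentIn (X \ V) a) ∧ connectedComponentIn (X \ V) a ⊆ X ∧
      connectedComponentIn (X \ V) a ≠ X := by
  have hsub := connectedComponentIn_subset (X \ V) a
  refine ⟨isContinuum_component (hX.diff hV) ha, hsub.trans sdiff_subset, fun h => ?_⟩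
  obtain ⟨y, hy, hyV⟩ := hXV
  rw [h] at hsub
  exact (hsub hy).2 hyV

theorem IsIndecomposable.not_subset_component {α : Type*} [TopologicalSpace α] [T2Space α]
    {X V W : Set α} (hX : IsIndecomposable X) (hV : IsOpen V) (hXV : (X ∩ V).Nonempty) (a : α)
    (hW : IsOpen W) (hXW : (X ∩ W).Nonempty) : ¬ X ∩ W ⊆ connectedComponentIn (X \ V) a := by
  intro h
  by_cases ha : a ∈ X \ V
  · obtain ⟨h1, h2, h3⟩ := component_sdiff_proper hX.1.1 hV hXV ha
    exact hX.not_subset_proper h1 h2 h3 hW hXW h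
  · rw [connectedComponentIn_eq_empty ha, subset_empty_iff] at h
    exact hXW.ne_empty h

/-- Composants of an indecomposable continuum are meagre, as the composant of `a` is the union of the
components of `a` in `X \ U`, for `U` in a countable basis. -/
theorem IsIndecomposable.exists_avoiding_composants {α : Type*} [TopologicalSpace α] [T2Space α]
    [SecondCountableTopology α] {X V S : Set α} (hX : IsIndecomposable X) (hS : S.Countable)
    (hV : IsOpen V) (hXV : (X ∩ V).Nonempty) :
    ∃ z ∈ X ∩ V, ∀ a ∈ S, z ∉ composant X a := by
  by_contra! hcon
  let B : Set (Set α) := {U ∈ TopologicalSpace.countableBasis α | (X ∩ U).Nonempty}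
  have hB : B.Countable := (TopologicalSpace.countable_countableBasis α).mono (sep_subset _ _)
  have hBo : ∀ U ∈ B, IsOpen U := fun U hU => TopologicalSpace.isOpen_of_mem_countableBasis hU.1
  have := hS.to_subtype
  have := hB.to_subtype
  obtain ⟨⟨a, U⟩, W, hW, hXW, hsub⟩ := baire_cover (ι := S × B) hX.1.1 hV hXV
    (F := fun i => connectedComponentIn (X \ i.2) i.1)
    (fun i => isClosed_componentIn (hX.1.1.isClosed.sdiff (hBo _ i.2.2)) _) (by
      intro z hz
      obtain ⟨a, ha, haz⟩ := hcon z hz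
      obtain ⟨K, h1, h2, h3, h4, h5⟩ := mem_composant.1 haz
      obtain ⟨U, hU, hXU, hKU⟩ := exists_basis_avoiding h1.1 h2 h3
      exact mem_iUnion.2 ⟨(⟨a, ha⟩, ⟨U, hU, hXU⟩),
        h1.2.2.subset_connectedComponentIn h4 hKU h5⟩)
  exact hX.not_subset_component (hBo _ U.2) U.2.2 a hW hXW hsub

/-! ### An internal composant meeting another continuum -/

/-- If `L` is not contained in `X`, then neither are suitable subcontinua of `L` in an arbitrary
neighbourhood of a component of `L ∩ X`. -/
theorem exists_small_continuum {α : Type*} [TopologicalSpace α] [T2Space α] [NormalSpace α]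
    {X L U : Set α} (hX : IsClosed X) (hL : IsContinuum L) (hLX : ¬ L ⊆ X) {x : α}
    (hx : x ∈ L ∩ X) (hU : IsOpen U) (hMU : connectedComponentIn (L ∩ X) x ⊆ U) :
    ∃ L' ⊆ L ∩ U, IsContinuum L' ∧ x ∈ L' ∧ ¬ L' ⊆ X := by
  obtain ⟨O, hO, hMO, hOU⟩ := normal_exists_closure_subset
    (isClosed_componentIn (hL.1.isClosed.inter hX) x) hU hMU
  have hxO : x ∈ O := hMO (mem_connectedComponentIn hx)
  have hxZ : x ∈ L ∩ closure O := ⟨hx.1, subset_closure hxO⟩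
  have hsub := connectedComponentIn_subset (L ∩ closure O) x
  refine ⟨connectedComponentIn (L ∩ closure O) x, fun y hy => ⟨(hsub hy).1, hOU (hsub hy).2⟩,
    isContinuum_component (hL.1.inter_right isClosed_closure) hxZ,
    mem_connectedComponentIn hxZ, fun hX' => ?_⟩
  have hM : connectedComponentIn (L ∩ closure O) x ⊆ connectedComponentIn (L ∩ X) x :=
    isPreconnected_connectedComponentIn.subset_connectedComponentIn (mem_connectedComponentIn hxZ)
      fun y hy => ⟨(hsub hy).1, hX' hy⟩
  rcases boundary_bumping hL.1 hL.2.2 hO hx.1 hxO with h | ⟨y, hy, hyO⟩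
  · exact hLX (h ▸ hX')
  · exact hyO (hMO (hM hy))

theorem isClosed_component_meets {α : Type*} [TopologicalSpace α] [T2Space α] {Z N : Set α}
    (hZ : IsCompact Z) (hN : IsClosed N) :
    IsClosed {z ∈ Z | (connectedComponentIn Z z ∩ N).Nonempty} := by
  rw [← isOpen_compl_iff, isOpen_iff_mem_nhds]
  intro z hz
  by_cases hzZ : z ∈ Z
  · have hcN : connectedComponentIn Z z ⊆ Nᶜ := fun y hy hyN => hz ⟨hzZ, y, hy, hyN⟩
    obtain ⟨Q, hQZ, hzQ, hQN, hQ, hZQ⟩ := exists_clopen_subset hZ hN.isOpen_compl hzZ hcN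
    filter_upwards [hZQ.isOpen_compl.mem_nhds fun h => h.2 hzQ] with w hw hwF
    obtain ⟨hwZ, y, hy, hyN⟩ := hwF
    have hwQ : w ∈ Q := by
      by_contra h
      exact hw ⟨hwZ, h⟩
    have hsub := connectedComponentIn_subset Z w
    rcases isPreconnected_iff_subset_of_disjoint_closed.1
      (isPreconnected_connectedComponentIn (F := Z) (x := w)) Q (Z \ Q) hQ hZQ
      (fun v hv => by by_cases h : v ∈ Q; exacts [Or.inl h, Or.inr ⟨hsub hv, h⟩])
      (by rw [inter_sdiff_self, inter_empty] ) with h | h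
    · exact hQN (h hy) hyN
    · exact (h (mem_connectedComponentIn hwZ)).2 hwQ
  · filter_upwards [hZ.isClosed.isOpen_compl.mem_nhds hzZ] with w hw hwF
    exact hw hwF.1

/-- If a continuum `L` meets every composant of `X` but does not contain `X`, then a composant that
meets `L` does so in more than one component of `L ∩ X`. Otherwise every point outside this
composant could be joined in some `X \ V` to a part of `L` at positive distance from the component;
such points form countably many closed sets, each missing the dense composant. -/
theorem exists_second_point {α : Type*} [TopologicalSpace α] [T2Space α] [NormalSpace α]
    [SecondCountableTopology α] {X L : Set α} (hX : IsIndecomposable X) (hL : IsContinuum L)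
    {p x : α} (hp : p ∈ X)
    (hmeet : ∀ z ∈ X, (L ∩ composant X z).Nonempty) (hx : x ∈ L ∩ X) (hxC : x ∈ composant X p)
    (hXL : ¬ X ⊆ L) :
    ∃ x' ∈ L ∩ X, x' ∈ composant X p ∧ x' ∉ connectedComponentIn (L ∩ X) x := by
  by_contra! hcon
  set M := connectedComponentIn (L ∩ X) x with hMdef
  have hMsub : M ⊆ L ∩ X := connectedComponentIn_subset _ _
  have hMc : IsContinuum M := isContinuum_component (hL.1.inter hX.1.1) hx
  have hXn : X.Nontrivial := by
    obtain ⟨y, hy, hyL⟩ := not_subset.1 hXL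
    exact ⟨y, hy, x, hx.2, fun h => hyL (h ▸ hx.1)⟩
  have hMC : ∀ y ∈ M, y ∈ composant X p := fun y hy => hX.composant_trans hxC
    (mem_composant.2 ⟨M, hMc, hMsub.trans inter_subset_right,
      fun h => hXL (h ▸ hMsub.trans inter_subset_left), mem_connectedComponentIn hx, hy⟩)
  let B : Set (Set α) := {U ∈ TopologicalSpace.countableBasis α | (X ∩ U).Nonempty}
  have hB : B.Countable := (TopologicalSpace.countable_countableBasis α).mono (sep_subset _ _)
  have hBo : ∀ U ∈ B, IsOpen U := fun U hU => TopologicalSpace.isOpen_of_mem_countableBasis hU.1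
  let D : Set (Set α) := {U ∈ TopologicalSpace.countableBasis α | Disjoint (closure U) M}
  have hD : D.Countable := (TopologicalSpace.countable_countableBasis α).mono (sep_subset _ _)
  have := hB.to_subtype
  have := hD.to_subtype
  let F : B ⊕ (B × D) → Set α := Sum.elim (fun V => connectedComponentIn (X \ V.1) p)
    fun i => {z ∈ X \ i.1.1 | (connectedComponentIn (X \ i.1.1) z ∩ (L ∩ closure i.2.1)).Nonempty}
  obtain ⟨i, W, hW, hXW, hsub⟩ := baire_cover (F := F) hX.1.1 isOpen_univ ⟨p, hp, trivial⟩
    (by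
      rintro (V | ⟨V, U⟩)
      · exact isClosed_componentIn (hX.1.1.isClosed.sdiff (hBo _ V.2)) _
      · exact isClosed_component_meets (hX.1.1.diff (hBo _ V.2))
          (hL.1.isClosed.inter isClosed_closure))
    (by
      rintro z ⟨hz, -⟩
      by_cases hzC : z ∈ composant X p
      · obtain ⟨K, h1, h2, h3, h4, h5⟩ := mem_composant.1 hzC
        obtain ⟨U, hU, hXU, hKU⟩ := exists_basis_avoiding h1.1 h2 h3
        exact mem_iUnion.2 ⟨.inl ⟨U, hU, hXU⟩, h1.2.2.subset_connectedComponentIn h4 hKU h5⟩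
      · obtain ⟨y, hyL, hyz⟩ := hmeet z hz
        have hyM : y ∉ M := fun h => hzC (hX.composant_trans (hMC y h) (composant_symm hyz))
        obtain ⟨K, h1, h2, h3, h4, h5⟩ := mem_composant.1 hyz
        obtain ⟨V, hV, hXV, hKV⟩ := exists_basis_avoiding h1.1 h2 h3
        obtain ⟨T, hT, hTc, hTM⟩ := exists_mem_nhds_isClosed_subset
          (hMc.1.isClosed.isOpen_compl.mem_nhds hyM)
        obtain ⟨U, hU, hyU, hUT⟩ :=
          (TopologicalSpace.isBasis_countableBasis α).mem_nhds_iff.1 hT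
        refine mem_iUnion.2 ⟨.inr (⟨V, hV, hXV⟩, ⟨U, hU, ?_⟩), hKV h4, y,
          h1.2.2.subset_connectedComponentIn h4 hKV h5, hyL, subset_closure hyU⟩
        exact subset_compl_iff_disjoint_right.1 ((closure_minimal hUT hTc).trans hTM))
  rcases i with V | ⟨V, U⟩
  · exact hX.not_subset_component (hBo _ V.2) V.2.2 p hW hXW hsub
  · obtain ⟨K, h1, h2, h3, h4, z, hzK, hzW⟩ := exists_proper_meeting hX.1 hXn hp hW hXW
    obtain ⟨hzV, y, hy, hyL, hyU⟩ := hsub ⟨h2 hzK, hzW⟩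
    obtain ⟨g1, g2, g3⟩ := component_sdiff_proper hX.1.1 (hBo _ V.2) V.2.2 hzV
    have hyC : y ∈ composant X p := hX.composant_trans
      (mem_composant.2 ⟨K, h1, h2, h3, h4, hzK⟩)
      (mem_composant.2 ⟨_, g1, g2, g3, mem_connectedComponentIn hzV, hy⟩)
    exact disjoint_left.1 U.2.2 hyU (hcon y ⟨hyL, g2 hy⟩ hyC)

/-- An internal composant of `X` that meets `L` yields two disjoint subcontinua of `L`, each of which
meets every composant of `X`. -/
theorem exists_two_continua {α : Type*} [TopologicalSpace α] [T2Space α] [NormalSpace α]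
    [SecondCountableTopology α] {X L C : Set α} (hX : IsIndecomposable X) (hL : IsContinuum L)
    (hC : IsInternalComposant X C) (hCL : (C ∩ L).Nonempty) (hXL : ¬ X ⊆ L) (hLX : ¬ L ⊆ X) :
    ∃ Y ⊆ L, ∃ Y' ⊆ L, IsContinuum Y ∧ IsContinuum Y' ∧ Disjoint Y Y' ∧
      (∀ z ∈ X, (Y ∩ composant X z).Nonempty) ∧ ∀ z ∈ X, (Y' ∩ composant X z).Nonempty := by
  obtain ⟨⟨p, hp, rfl⟩, hint⟩ := hC
  obtain ⟨x, hxC, hxL⟩ := hCL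
  have hCX : composant X p ⊆ X := sUnion_subset fun K hK => hK.2.1
  have hall : ∀ Y, IsContinuum Y → (Y ∩ composant X p).Nonempty → ¬ Y ⊆ X →
      ∀ z ∈ X, (Y ∩ composant X z).Nonempty :=
    fun Y hY hYC hYX z hz => hint Y hY hYC hYX _ ⟨z, hz, rfl⟩
  have hx : x ∈ L ∩ X := ⟨hxL, hCX hxC⟩
  obtain ⟨x', hx', hx'C, hx'M⟩ := exists_second_point hX hL hp
    (hall L hL ⟨x, hxL, hxC⟩ hLX) hx hxC hXL
  have hdis : Disjoint (connectedComponentIn (L ∩ X) x) (connectedComponentIn (L ∩ X) x') := by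
    rw [disjoint_left]
    intro w hw hw'
    apply hx'M
    rw [connectedComponentIn_eq hw, ← connectedComponentIn_eq hw']
    exact mem_connectedComponentIn hx'
  have hcl := isClosed_componentIn (hL.1.isClosed.inter hX.1.1.isClosed)
  obtain ⟨U, U', hU, hU', hMU, hMU', hUU'⟩ := normal_separation (hcl x) (hcl x') hdis
  obtain ⟨Y, hYs, hY, hxY, hYX⟩ := exists_small_continuum hX.1.1.isClosed hL hLX hx hU hMU
  obtain ⟨Y', hYs', hY', hxY', hYX'⟩ := exists_small_continuum hX.1.1.isClosed hL hLX hx' hU' hMU'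
  exact ⟨Y, hYs.trans inter_subset_left, Y', hYs'.trans inter_subset_left, hY, hY',
    hUU'.mono (hYs.trans inter_subset_right) (hYs'.trans inter_subset_right),
    hall Y hY ⟨x, hxY, hxC⟩ hYX, hall Y' hY' ⟨x', hxY', hx'C⟩ hYX'⟩

/-- Two sets meeting every composant of `X` are joined by three disjoint subcontinua of `X`, which in
addition miss a point of `X` off `L`. -/
theorem exists_three_continua {α : Type*} [TopologicalSpace α] [T2Space α]
    [SecondCountableTopology α] {X L Y Y' : Set α} (hX : IsIndecomposable X) (hL : IsClosed L)
    (hXL : ¬ X ⊆ L) (hY : ∀ z ∈ X, (Y ∩ composant X z).Nonempty)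
    (hY' : ∀ z ∈ X, (Y' ∩ composant X z).Nonempty) :
    ∃ K : Fin 3 → Set α, ∃ z ∈ X, z ∉ L ∧ (∀ i, IsContinuum (K i)) ∧ (∀ i, K i ⊆ X) ∧
      (∀ i k, i ≠ k → Disjoint (K i) (K k)) ∧ (∀ i, z ∉ K i) ∧
      (∀ i, (K i ∩ Y).Nonempty) ∧ ∀ i, (K i ∩ Y').Nonempty := by
  obtain ⟨a0, ha0⟩ := hX.1.2.1
  have hXu : (X ∩ univ).Nonempty := ⟨a0, ha0, trivial⟩
  obtain ⟨a1, ⟨ha1, -⟩, h1⟩ := hX.exists_avoiding_composants (countable_singleton a0)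
    isOpen_univ hXu
  obtain ⟨a2, ⟨ha2, -⟩, h2⟩ := hX.exists_avoiding_composants (S := {a0, a1})
    (toFinite _).countable isOpen_univ hXu
  obtain ⟨z, ⟨hzX, hzL⟩, hz⟩ := hX.exists_avoiding_composants (S := {a0, a1, a2})
    (toFinite _).countable hL.isOpen_compl (not_subset.1 hXL)
  simp only [mem_singleton_iff, mem_insert_iff, forall_eq_or_imp, forall_eq] at h1 h2 hz
  obtain ⟨a, haX, had, haz⟩ : ∃ a : Fin 3 → α, (∀ i, a i ∈ X) ∧
      (∀ i k, i ≠ k → a k ∉ composant X (a i)) ∧ ∀ i, z ∉ composant X (a i) := by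
    refine ⟨![a0, a1, a2], ?_, ?_, ?_⟩
    · intro i; fin_cases i
      exacts [ha0, ha1, ha2]
    · intro i k hik
      fin_cases i <;> fin_cases k <;> first | exact absurd rfl hik | skip
      exacts [h1, h2.1, fun h => h1 (composant_symm h), h2.2, fun h => h2.1 (composant_symm h),
        fun h => h2.2 (composant_symm h)]
    · intro i; fin_cases i
      exacts [hz.1, hz.2.1, hz.2.2]
  have hex : ∀ i, ∃ K, IsContinuum K ∧ K ⊆ X ∧ K ≠ X ∧ a i ∈ K ∧ (K ∩ Y).Nonempty ∧
      (K ∩ Y').Nonempty := by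
    intro i
    obtain ⟨y, hy, hyC⟩ := hY _ (haX i)
    obtain ⟨y', hy', hyC'⟩ := hY' _ (haX i)
    obtain ⟨K, k1, k2, k3, k4, k5⟩ := mem_composant.1 hyC
    obtain ⟨K', l1, l2, l3, l4, l5⟩ := mem_composant.1 hyC'
    obtain ⟨g1, g2, g3⟩ := hX.union k1 k2 k3 l1 l2 l3 ⟨a i, k4, l4⟩
    exact ⟨_, g1, g2, g3, Or.inl k4, ⟨y, Or.inl k5, hy⟩, ⟨y', Or.inr l5, hy'⟩⟩
  choose K hK hKX hKne haK hKY hKY' using hex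
  have hKC : ∀ i, ∀ w ∈ K i, w ∈ composant X (a i) := fun i w hw =>
    mem_composant.2 ⟨K i, hK i, hKX i, hKne i, haK i, hw⟩
  refine ⟨K, z, hzX, hzL, hK, hKX, fun i k hik => disjoint_left.2 fun w hw hw' => ?_,
    fun i hzi => haz i (hKC i z hzi), hKY, hKY'⟩
  exact had i k hik (hX.composant_trans (hKC i w hw) (composant_symm (hKC k w hw')))


/-! ### Transport to the sphere -/

/-- Stereographic projection from `z`, as a map to `ℂ`. -/
theorem exists_chart (z : S2) : ∃ φ : S2 → ℂ, ContinuousOn φ {z}ᶜ ∧ InjOn φ {z}ᶜ ∧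
    ∀ U : Set S2, IsOpen U → z ∉ U → IsOpen (φ '' U) := by
  have : Fact (Module.finrank ℝ (EuclideanSpace ℝ (Fin 3)) = 2 + 1) := ⟨by simp⟩
  let φ := (stereographic' 2 z).transHomeomorph
    Complex.orthonormalBasisOneI.repr.symm.toHomeomorph
  have hs : φ.source = {z}ᶜ := stereographic'_source z
  refine ⟨φ, hs ▸ φ.continuousOn, hs ▸ φ.injOn, fun U hU hz => ?_⟩
  exact φ.isOpen_image_of_subset_source hU fun y hy => by
    rw [hs]; rintro rfl; exact hz hy

/-- The obstruction `no_three_crossing_continua` on the sphere, for sets that all miss some point `z`. -/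
theorem no_three_crossing_continua_sphere {R Y1 Y2 : Set S2} (hR : IsOpen R) (hRc : IsConnected R) (z : S2)
    (hzR : z ∉ R) (hY1 : IsContinuum Y1) (hY1R : Disjoint Y1 R) (hz1 : z ∉ Y1)
    (hY2 : IsContinuum Y2) (hY2R : Disjoint Y2 R) (hz2 : z ∉ Y2)
    (hY12 : Disjoint Y1 Y2) {K : Fin 3 → Set S2} (hK : ∀ i, IsContinuum (K i))
    (hKd : ∀ i k, i ≠ k → Disjoint (K i) (K k)) (hKz : ∀ i, z ∉ K i)
    (hKR : ∀ i, K i ⊆ closure R) (hKR' : ∀ i, Disjoint (K i) R)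
    (hK1 : ∀ i, (K i ∩ Y1).Nonempty) (hK2 : ∀ i, (K i ∩ Y2).Nonempty) : False := by
  obtain ⟨φ, hφc, hφi, hφo⟩ := exists_chart z
  have hs : ∀ {S : Set S2}, z ∉ S → S ⊆ {z}ᶜ := fun h y hy hyz => h (hyz ▸ hy)
  have hd : ∀ {S T : Set S2}, z ∉ S → z ∉ T → Disjoint S T → Disjoint (φ '' S) (φ '' T) := by
    intro S T hS hT h
    rw [disjoint_left]
    rintro _ ⟨u, hu, rfl⟩ ⟨v, hv, hvu⟩
    have := hφi (hs hT hv) (hs hS hu) hvu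
    exact disjoint_left.1 h hu (this ▸ hv)
  have hc : ∀ {S : Set S2}, IsContinuum S → z ∉ S → IsCompact (φ '' S) ∧ IsPreconnected (φ '' S) :=
    fun h hz => ⟨h.1.image_of_continuousOn (hφc.mono (hs hz)),
      h.2.2.image φ (hφc.mono (hs hz))⟩
  have hn : ∀ {S T : Set S2}, (S ∩ T).Nonempty → (φ '' S ∩ φ '' T).Nonempty := by
    rintro S T ⟨y, hy, hy'⟩
    exact ⟨φ y, ⟨y, hy, rfl⟩, ⟨y, hy', rfl⟩⟩
  refine no_three_crossing_continua (K := fun i => φ '' K i) (hφo R hR hzR) (hRc.image φ (hφc.mono (hs hzR)))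
    (hc hY1 hz1).1 (hc hY1 hz1).2 (hd hz1 hzR hY1R) (hc hY2 hz2).1 (hc hY2 hz2).2
    (hd hz2 hzR hY2R) (hd hz1 hz2 hY12) (fun i => (hc (hK i) (hKz i)).1)
    (fun i => (hc (hK i) (hKz i)).2) (fun i k hik => hd (hKz i) (hKz k) (hKd i k hik)) ?_
    (fun i => hd (hKz i) hzR (hKR' i)) (fun i => hn (hK1 i)) (fun i => hn (hK2 i))
  rintro i _ ⟨y, hy, rfl⟩
  exact mem_closure_image (hφc.continuousAt (isOpen_compl_singleton.mem_nhds (hs (hKz i) hy)))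
    (hKR i hy)

/-- If `{A 1, …, A n}` is an irreducible decomposition of the Julia set of a
polynomial-like mapping of degree `d ≥ 2`, then for `j ≠ k` no internal composant
of `A k` intersects `A j`. -/
theorem internal_composants_disjoint_from_other_pieces
    (f : S2 → S2) (d : ℕ) (R : Set S2) (c : S2)
    (hd : 2 ≤ d) (hf : IsPolynomialLike f d R c)
    {n : ℕ} (A : Fin n → Set S2)
    (hA : IsIrreducibleDecomposition (frontier R) A) :
    ∀ j k, j ≠ k → ∀ C, IsInternalComposant (A k) C → C ∩ A j = ∅ := by
  intro j k hjk C hC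
  obtain ⟨-, hR, hRc, -⟩ := hf
  obtain ⟨hA1, -, hA2⟩ := hA
  have hirr : ∀ i l, i ≠ l → ¬ A i ⊆ A l := fun i l hil h =>
    hA2 i (h.trans (subset_biUnion_of_mem (u := A) (show l ∈ ({i}ᶜ : Set (Fin n)) from hil.symm)))
  have hfr : ∀ i, Disjoint (A i) R := fun i =>
    (disjoint_frontier_iff_isOpen.2 hR).mono_left (hA1 i).2
  rw [← not_nonempty_iff_eq_empty]
  intro hne
  obtain ⟨Y, hYL, Y', hYL', hY, hY', hYY', hm, hm'⟩ := exists_two_continua (hA1 k).1 (hA1 j).1.1 hC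
    hne (hirr k j hjk.symm) (hirr j k hjk)
  obtain ⟨K, z, hz, hzL, hK, hKX, hKd, hKz, hK1, hK2⟩ := exists_three_continua (hA1 k).1
    (hA1 j).1.1.1.isClosed (hirr k j hjk.symm) hm hm'
  exact no_three_crossing_continua_sphere hR hRc z (disjoint_left.1 (hfr k) hz) hY ((hfr j).mono_left hYL)
    (fun h => hzL (hYL h)) hY' ((hfr j).mono_left hYL') (fun h => hzL (hYL' h)) hYY' hK hKd hKz
    (fun i => (hKX i).trans ((hA1 k).2.trans frontier_subset_closure))
    (fun i => (hfr k).mono_left (hKX i)) hK1 hK2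
end

section
/- Let f : S² → S² be a polynomial-like mapping of degree d ≥ 2, and let {A_1, …, A_n} be an irreducible decomposition of J(f). For each pair of indices j, k: if a point x ∈ A_j is such that f(x) lies in an internal composant of A_k, then f(A_j) is contained in A_k. -/
/-! The argument takes place in the plane topology of the boundary of the region `R`.

Suppose that `x` lies in `A j`, that `f x` lies in an internal composant `C` of `A k`, and that
`f '' A j` is not contained in `A k`. The composant of `x` is dense in `A j`, so some proper
subcontinuum `P` of `A j` through `x` already has `f '' P` not contained in `A k`. Since `P` is
nowhere dense in `A j` and `f` is locally injective off finitely many fibres, a Baire category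
argument shows that `f '' P` does not cover `A k` (`not_subset_image`). Hence the component of `f x`
in `f '' P ∩ A k` is a proper subcontinuum of `A k`, so it lies in `C`; by boundary bumping
(`boundary_bumping`) it reaches another piece `A i`. So the continuum `A i` meets `C`, and because
`C` is internal, `A i` meets every composant of `A k`.

This last situation is impossible (`no_hit`): let `A` and `N` be continua in the boundary of a
region, with `A` indecomposable and not contained in `N`; then `N` misses some composant of `A`.
Otherwise, by a zero-one law for saturations of closed sets, `N ∩ A` splits into two disjoint closed
sets that both meet every composant (`sat_eq_univ`, `exists_split`). Every composant then contains a
continuum `X` that meets both parts, and Janiszewski's theorem (`janiszewski_sphere`) produces a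
complementary domain of `N ∪ X` that is disjoint from `closure R`. The domains that belong to
different composants are disjoint, so there are only countably many composants. Each of them is
meagre, which contradicts the Baire category theorem.

Janiszewski's theorem is obtained by gluing continuous branches of `log ((z - a) / (z - b))`
(`janiszewski_plane`).
-/

open Set Metric Topology Filter

/-! ### Continua and composants -/

section Continua

variable {Y : Type*} [TopologicalSpace Y]

lemma preconn_subset_of_closed {s Q Q' : Set Y} (hs : IsPreconnected s) (hQ : IsClosed Q)
    (hQ' : IsClosed Q') (hd : Disjoint Q Q') (hsub : s ⊆ Q ∪ Q') {x : Y} (hx : x ∈ s)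
    (hxQ : x ∈ Q) : s ⊆ Q := by
  rcases isPreconnected_iff_subset_of_disjoint_closed.1 hs Q Q' hQ hQ' hsub
    (by rw [hd.inter_eq, inter_empty]) with h | h
  · exact h
  · exact absurd (h hx) (Set.disjoint_left.1 hd hxQ)

lemma isPreconnected_union_of_compl [PreconnectedSpace Y] {K U V : Set Y}
    (hK : IsPreconnected K) (hU : IsOpen U) (hV : IsOpen V)
    (hKV : Disjoint K V) (hUV : Disjoint U V) (h : K ∪ U ∪ V = univ) :
    IsPreconnected (K ∪ U) := by
  have hc : IsClosed (K ∪ U) := by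
    have : K ∪ U = Vᶜ := by
      ext z
      have hz : z ∈ K ∪ U ∪ V := h ▸ mem_univ z
      have h1 := fun (h1 : z ∈ _) => Set.disjoint_left.1 hKV h1
      have h2 := fun (h1 : z ∈ _) => Set.disjoint_left.1 hUV h1
      simp only [mem_union, mem_compl_iff] at *
      tauto
    rw [this]
    exact hV.isClosed_compl
  have key : ∀ s t : Set Y, IsClosed s → IsClosed t → K ∪ U ⊆ s ∪ t → Disjoint s t → K ⊆ s →
      K ∪ U ⊆ s ∨ K ∪ U ⊆ t := by
    intro s t hs ht hst hd hKs
    -- The part of `K ∪ U` in `t` lies in the open set `U`, so it is clopen.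
    have hcl : IsClopen ((K ∪ U) ∩ t) := by
      refine ⟨hc.inter ht, ?_⟩
      have : (K ∪ U) ∩ t = U ∩ sᶜ := by
        ext z
        have h1 := fun h1 => @hKs z h1
        have h2 := fun (h1 : z ∈ _) => Set.disjoint_left.1 hd h1
        have h3 := fun h1 => @hst z h1
        simp only [mem_union, mem_compl_iff, mem_inter_iff] at *
        tauto
      rw [this]
      exact hU.inter hs.isOpen_compl
    rcases isClopen_iff.1 hcl with h0 | h1
    · left
      intro z hz
      rcases hst hz with h | h
      · exact h
      · exact absurd (show z ∈ (K ∪ U) ∩ t from ⟨hz, h⟩) (by rw [h0]; simp)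
    · right
      intro z _
      exact (h1 ▸ mem_univ z : z ∈ (K ∪ U) ∩ t).2
  rw [isPreconnected_iff_subset_of_fully_disjoint_closed hc]
  intro s t hs ht hst hd
  rcases isPreconnected_iff_subset_of_disjoint_closed.1 hK s t hs ht
    (subset_union_left.trans hst) (by rw [hd.inter_eq, inter_empty]) with h | h
  · exact key s t hs ht hst hd h
  · exact (key t s ht hs (by rw [union_comm t s]; exact hst) hd.symm h).symm

/-- Indecomposability of a space rather than of a subset: the whole space is not a union of two
proper closed connected subsets. The empty set counts as connected here. -/
def IndecSpace (Y : Type*) [TopologicalSpace Y] : Prop :=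
  ∀ K L : Set Y, IsClosed K → IsPreconnected K → IsClosed L → IsPreconnected L →
    K ∪ L = univ → K = univ ∨ L = univ

/-- Proper subcontinua of an indecomposable continuum are nowhere dense. -/
lemma IndecSpace.interior_eq_empty [PreconnectedSpace Y] (hY : IndecSpace Y) {K : Set Y}
    (hKc : IsClosed K) (hK : IsPreconnected K) (hne : K ≠ univ) : interior K = ∅ := by
  by_cases hc : IsPreconnected Kᶜ
  · have h1 := hY K (closure Kᶜ) hKc hK isClosed_closure hc.closure (by
      refine eq_univ_of_forall fun z => ?_
      by_cases hz : z ∈ K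
      · exact Or.inl hz
      · exact Or.inr (subset_closure hz))
    have h2 := h1.resolve_left hne
    rw [closure_compl] at h2
    exact compl_univ_iff.1 h2
  · exfalso
    unfold IsPreconnected at hc
    push Not at hc
    obtain ⟨u, v, hu, hv, huv, ⟨x, hx, hxu⟩, ⟨y, hy, hyv⟩, hno⟩ := hc
    have hd : Disjoint (Kᶜ ∩ u) (Kᶜ ∩ v) := by
      rw [Set.disjoint_left]
      rintro z ⟨hz, hzu⟩ ⟨_, hzv⟩
      exact (hno ▸ (⟨hz, hzu, hzv⟩ : z ∈ Kᶜ ∩ (u ∩ v)) : z ∈ (∅ : Set Y))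
    have hU : IsOpen (Kᶜ ∩ u) := hKc.isOpen_compl.inter hu
    have hV : IsOpen (Kᶜ ∩ v) := hKc.isOpen_compl.inter hv
    have hKU : Disjoint K (Kᶜ ∩ u) := disjoint_compl_right.mono_right inter_subset_left
    have hKV : Disjoint K (Kᶜ ∩ v) := disjoint_compl_right.mono_right inter_subset_left
    have hcov : K ∪ (Kᶜ ∩ u) ∪ (Kᶜ ∩ v) = univ := by
      refine eq_univ_of_forall fun z => ?_
      by_cases hz : z ∈ K
      · exact Or.inl (Or.inl hz)
      · rcases huv hz with h | h
        · exact Or.inl (Or.inr ⟨hz, h⟩)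
        · exact Or.inr ⟨hz, h⟩
    have hcov' : K ∪ (Kᶜ ∩ v) ∪ (Kᶜ ∩ u) = univ := by rw [union_right_comm, hcov]
    have e1 : K ∪ (Kᶜ ∩ u) = (Kᶜ ∩ v)ᶜ := by
      refine (IsCompl.compl_eq ?_).symm
      exact IsCompl.symm ⟨hKV.sup_left hd, codisjoint_iff.2 hcov⟩
    have e2 : K ∪ (Kᶜ ∩ v) = (Kᶜ ∩ u)ᶜ := by
      refine (IsCompl.compl_eq ?_).symm
      exact IsCompl.symm ⟨hKU.sup_left hd.symm, codisjoint_iff.2 hcov'⟩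
    rcases hY _ _ (e1 ▸ hV.isClosed_compl)
      (isPreconnected_union_of_compl hK hU hV hKV hd hcov) (e2 ▸ hU.isClosed_compl)
      (isPreconnected_union_of_compl hK hV hU hKU hd.symm hcov') (by
        rw [e2]
        refine eq_univ_of_forall fun z => ?_
        by_cases hz : z ∈ Kᶜ ∩ u
        · exact Or.inl (Or.inr hz)
        · exact Or.inr hz) with h | h
    · rw [e1] at h
      exact (h ▸ mem_univ y : y ∈ (Kᶜ ∩ v)ᶜ) ⟨hy, hyv⟩
    · rw [e2] at h
      exact (h ▸ mem_univ x : x ∈ (Kᶜ ∩ u)ᶜ) ⟨hx, hxu⟩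

/-- Components of a compact set coincide with quasi-components: an open neighbourhood of a
component contains a relatively clopen set around it. -/
lemma exists_clopen_split [CompactSpace Y] [T2Space Y] {Z V : Set Y} {x : Y} (hZ : IsClosed Z)
    (hx : x ∈ Z) (hV : IsOpen V) (h : connectedComponentIn Z x ⊆ V) :
    ∃ Q Q' : Set Y, IsClosed Q ∧ IsClosed Q' ∧ Q ∪ Q' = Z ∧ Disjoint Q Q' ∧ x ∈ Q ∧ Q ⊆ V := by
  have : CompactSpace Z := isCompact_iff_compactSpace.1 hZ.isCompact
  set x' : Z := ⟨x, hx⟩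
  have h1 : connectedComponent x' ⊆ (Subtype.val ⁻¹' V : Set Z) := by
    rw [← image_subset_iff, ← connectedComponentIn_eq_image hx]
    exact h
  rw [connectedComponent_eq_iInter_isClopen] at h1
  have : Nonempty { s : Set Z // IsClopen s ∧ x' ∈ s } := ⟨⟨univ, isClopen_univ, mem_univ _⟩⟩
  obtain ⟨⟨s, hs, hxs⟩, hsV⟩ := exists_subset_nhds_of_isCompact
    (V := fun s : { s : Set Z // IsClopen s ∧ x' ∈ s } => (s : Set Z))
    (by
      rintro ⟨s, hs, hxs⟩ ⟨t, ht, hxt⟩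
      exact ⟨⟨s ∩ t, hs.inter ht, hxs, hxt⟩, inter_subset_left, inter_subset_right⟩)
    (fun s => s.2.1.1.isCompact) (U := Subtype.val ⁻¹' V)
    (fun z hz => (hV.preimage continuous_subtype_val).mem_nhds (h1 hz))
  refine ⟨Subtype.val '' s, Subtype.val '' sᶜ, hZ.isClosedEmbedding_subtypeVal.isClosedMap _ hs.1,
    hZ.isClosedEmbedding_subtypeVal.isClosedMap _ hs.compl.1, ?_, ?_, ⟨x', hxs, rfl⟩, ?_⟩
  · rw [← image_union, union_compl_self, image_univ, Subtype.range_coe]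
  · exact (disjoint_image_iff Subtype.val_injective).2 disjoint_compl_right
  · exact image_subset_iff.2 hsV

/-- Boundary bumping: in a continuum, each component of a proper closed subset reaches the
boundary of that subset. -/
lemma boundary_bumping_s14 [CompactSpace Y] [T2Space Y] [PreconnectedSpace Y] {Z : Set Y} {x : Y}
    (hZ : IsClosed Z) (hx : x ∈ Z) (hne : Z ≠ univ) :
    (connectedComponentIn Z x ∩ closure Zᶜ).Nonempty := by
  by_contra hcon
  rw [not_nonempty_iff_eq_empty, ← disjoint_iff_inter_eq_empty] at hcon
  obtain ⟨Q, Q', hQ, hQ', hun, hd, hxQ, hQV⟩ := exists_clopen_split hZ hx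
    (isClosed_closure (s := Zᶜ)).isOpen_compl hcon.subset_compl_right
  have e : Q = (Q' ∪ closure Zᶜ)ᶜ := by
    ext z
    have h1 := @hQV z
    have h2 := fun (h1 : z ∈ _) => Set.disjoint_left.1 hd h1
    have h3 : z ∈ Q ∪ Q' ↔ z ∈ Z := by rw [hun]
    have h4 : z ∉ Z → z ∈ closure Zᶜ := fun h => subset_closure h
    simp only [mem_union, mem_compl_iff] at *
    tauto
  have hcl : IsClopen Q := ⟨hQ, e ▸ (hQ'.union isClosed_closure).isOpen_compl⟩
  have := hcl.eq_univ ⟨x, hxQ⟩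
  exact hne (eq_univ_of_univ_subset (this ▸ hun ▸ subset_union_left))

lemma isClosed_component_meets_s14 [CompactSpace Y] [T2Space Y] {Z P : Set Y} (hZ : IsClosed Z)
    (hP : IsClosed P) : IsClosed {x | (connectedComponentIn Z x ∩ P).Nonempty} := by
  rw [← isOpen_compl_iff, isOpen_iff_mem_nhds]
  intro y hy
  by_cases hyZ : y ∈ Z
  · have hd : Disjoint (connectedComponentIn Z y) P := by
      rw [disjoint_iff_inter_eq_empty, ← not_nonempty_iff_eq_empty]
      exact hy
    obtain ⟨Q, Q', hQ, hQ', hun, hd, hxQ, hQV⟩ := exists_clopen_split hZ hyZ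
      hP.isOpen_compl hd.subset_compl_right
    filter_upwards [hQ'.isOpen_compl.mem_nhds (Set.disjoint_left.1 hd hxQ)] with z hz
    rintro ⟨w, hw, hwP⟩
    have hzZ : z ∈ Z := connectedComponentIn_nonempty_iff.1 ⟨w, hw⟩
    have hzQ : z ∈ Q := (hun ▸ hzZ : z ∈ Q ∪ Q').resolve_right hz
    exact hQV (preconn_subset_of_closed isPreconnected_connectedComponentIn hQ hQ' hd
      (hun ▸ connectedComponentIn_subset Z z) (mem_connectedComponentIn hzZ) hzQ hw) hwP
  · filter_upwards [hZ.isOpen_compl.mem_nhds hyZ] with z hz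
    rintro ⟨w, hw, _⟩
    exact hz (connectedComponentIn_nonempty_iff.1 ⟨w, hw⟩)

lemma isClosed_connectedComponentIn' {Z : Set Y} (hZ : IsClosed Z) (x : Y) :
    IsClosed (connectedComponentIn Z x) := by
  by_cases hx : x ∈ Z
  · refine closure_subset_iff_isClosed.1 ?_
    exact isPreconnected_connectedComponentIn.closure.subset_connectedComponentIn
      (subset_closure (mem_connectedComponentIn hx))
      (closure_minimal (connectedComponentIn_subset Z x) hZ)
  · rw [connectedComponentIn_eq_empty hx]
    exact isClosed_empty

/-- Some proper subcontinuum contains both points. In an indecomposable continuum this is an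
equivalence relation, whose classes are the composants. -/
def JoinedProper (x y : Y) : Prop :=
  ∃ K : Set Y, IsClosed K ∧ IsPreconnected K ∧ K ≠ univ ∧ x ∈ K ∧ y ∈ K

lemma JoinedProper.symm {x y : Y} (h : JoinedProper x y) : JoinedProper y x := by
  obtain ⟨K, h1, h2, h3, h4, h5⟩ := h
  exact ⟨K, h1, h2, h3, h5, h4⟩

lemma JoinedProper.trans (hY : IndecSpace Y) {x y z : Y} (h : JoinedProper x y)
    (h' : JoinedProper y z) : JoinedProper x z := by
  obtain ⟨K, h1, h2, h3, h4, h5⟩ := h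
  obtain ⟨L, l1, l2, l3, l4, l5⟩ := h'
  refine ⟨K ∪ L, h1.union l1, h2.union y h5 l4 l2, fun h => ?_, Or.inl h4, Or.inr l5⟩
  rcases hY K L h1 h2 l1 l2 h with h | h
  · exact h3 h
  · exact l3 h

/-- Composants are dense. -/
lemma JoinedProper.dense [CompactSpace Y] [T2Space Y] [PreconnectedSpace Y] [Nontrivial Y]
    (x : Y) {O : Set Y} (hO : IsOpen O) (hne : O.Nonempty) : ∃ y ∈ O, JoinedProper x y := by
  by_cases hx : x ∈ O
  · refine ⟨x, hx, {x}, isClosed_singleton, isPreconnected_singleton, ?_, rfl, rfl⟩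
    obtain ⟨y, hy⟩ := exists_ne x
    intro h
    exact hy (h ▸ mem_univ y : y ∈ ({x} : Set Y))
  · obtain ⟨p, hp⟩ := hne
    obtain ⟨W, hpW, hW, hWO⟩ := exists_mem_nhds_isClosed_subset (hO.mem_nhds hp)
    have hne' : (interior W)ᶜ ≠ univ := by
      intro h
      exact (h ▸ mem_univ p : p ∈ (interior W)ᶜ) (mem_interior_iff_mem_nhds.2 hpW)
    have hxW : x ∈ (interior W)ᶜ := fun h => hx (hWO (interior_subset h))
    obtain ⟨y, hy, hyc⟩ := boundary_bumping_s14 isOpen_interior.isClosed_compl hxW hne'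
    rw [compl_compl] at hyc
    refine ⟨y, hWO (closure_minimal interior_subset hW hyc), connectedComponentIn _ x,
      isClosed_connectedComponentIn' isOpen_interior.isClosed_compl x,
      isPreconnected_connectedComponentIn, fun h => hne' ?_, mem_connectedComponentIn hxW, hy⟩
    exact eq_univ_of_univ_subset (h ▸ connectedComponentIn_subset _ _)

/-- The points joined to `P` by a proper subcontinuum; in an indecomposable continuum this is the
union of the composants that meet `P`. -/
def Sat (P : Set Y) : Set Y := {x | ∃ y ∈ P, JoinedProper x y}

/-- A proper subcontinuum misses some basic open set `U`, so saturations are countable unions of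
sets of points whose component in some `Uᶜ` meets `P`; those are closed when `P` is. -/
lemma sat_eq [SecondCountableTopology Y] (P : Set Y) :
    Sat P = ⋃ U ∈ TopologicalSpace.countableBasis Y,
      {x | (connectedComponentIn Uᶜ x ∩ P).Nonempty} := by
  ext x
  simp only [mem_iUnion, mem_ofPred_eq, exists_prop]
  constructor
  · rintro ⟨y, hyP, K, h1, h2, h3, h4, h5⟩
    obtain ⟨z, hz⟩ := (ne_univ_iff_exists_notMem K).1 h3
    obtain ⟨U, hU, hzU, hUK⟩ := (TopologicalSpace.isBasis_countableBasis Y).exists_subset_of_mem_open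
      (show z ∈ Kᶜ from hz) h1.isOpen_compl
    refine ⟨U, hU, y, h2.subset_connectedComponentIn h4 ?_ h5, hyP⟩
    exact subset_compl_comm.1 hUK
  · rintro ⟨U, hU, y, hy, hyP⟩
    have hx : x ∈ Uᶜ := connectedComponentIn_nonempty_iff.1 ⟨y, hy⟩
    refine ⟨y, hyP, connectedComponentIn Uᶜ x, isClosed_connectedComponentIn'
      (TopologicalSpace.isOpen_of_mem_countableBasis hU).isClosed_compl x,
      isPreconnected_connectedComponentIn, fun h => ?_, mem_connectedComponentIn hx, hy⟩
    obtain ⟨z, hz⟩ := TopologicalSpace.nonempty_of_mem_countableBasis hU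
    exact connectedComponentIn_subset Uᶜ x (h ▸ mem_univ z) hz

/-- A topological zero-one law for composants: the saturation of a closed set is meagre or
everything. If it is not meagre, one of the closed sets of `sat_eq` has interior, and every
composant is dense. -/
lemma sat_eq_univ [CompactSpace Y] [T2Space Y] [PreconnectedSpace Y] [Nontrivial Y]
    [SecondCountableTopology Y] (hY : IndecSpace Y) {P : Set Y} (hP : IsClosed P)
    (h : ¬ IsMeagre (Sat P)) : Sat P = univ := by
  rw [sat_eq] at h
  obtain ⟨U, hU, hm⟩ := exists_of_not_isMeagre_biUnion
    (TopologicalSpace.countable_countableBasis Y) h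
  have hcl := isClosed_component_meets_s14
    (TopologicalSpace.isOpen_of_mem_countableBasis hU).isClosed_compl hP
  have hInt : (interior {x | (connectedComponentIn Uᶜ x ∩ P).Nonempty}).Nonempty := by
    by_contra hcon
    exact hm (hcl.isNowhereDense_iff.2 (not_nonempty_iff_eq_empty.1 hcon)).isMeagre
  refine eq_univ_of_forall fun x => ?_
  obtain ⟨y, hy, hxy⟩ := JoinedProper.dense x isOpen_interior hInt
  have : y ∈ Sat P := by
    rw [sat_eq]
    exact mem_biUnion hU (interior_subset hy)
  obtain ⟨z, hz, hyz⟩ := this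
  exact ⟨z, hz, hxy.trans hY hyz⟩

/-- Composants are meagre. -/
lemma isMeagre_composant [PreconnectedSpace Y] [SecondCountableTopology Y] (hY : IndecSpace Y)
    (x : Y) : IsMeagre {y | JoinedProper x y} := by
  have : {y | JoinedProper x y} ⊆ ⋃ U ∈ TopologicalSpace.countableBasis Y,
      connectedComponentIn Uᶜ x := by
    intro y hy
    have hy' : y ∈ Sat ({x} : Set Y) := ⟨x, rfl, JoinedProper.symm hy⟩
    rw [sat_eq] at hy'
    simp only [mem_iUnion, mem_ofPred_eq, exists_prop] at hy' ⊢
    obtain ⟨U, hU, z, hz, rfl⟩ := hy'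
    refine ⟨U, hU, ?_⟩
    rw [← connectedComponentIn_eq hz]
    exact mem_connectedComponentIn (connectedComponentIn_nonempty_iff.1 ⟨z, hz⟩)
  refine IsMeagre.mono this
    (isMeagre_biUnion (TopologicalSpace.countable_countableBasis Y) fun U hU => ?_)
  have hcl := isClosed_connectedComponentIn'
    (TopologicalSpace.isOpen_of_mem_countableBasis hU).isClosed_compl x
  refine (hcl.isNowhereDense_iff.2 (hY.interior_eq_empty hcl
    isPreconnected_connectedComponentIn fun h => ?_)).isMeagre
  obtain ⟨z, hz⟩ := TopologicalSpace.nonempty_of_mem_countableBasis hU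
  exact connectedComponentIn_subset Uᶜ x (h ▸ mem_univ z) hz

/-- A proper closed set meeting every composant splits into two closed sets each of which still
meets every composant. Otherwise the pieces with meagre saturation would leave over only a single
component of `Z`, and the space would be meagre in itself. -/
lemma exists_split [CompactSpace Y] [T2Space Y] [PreconnectedSpace Y] [Nontrivial Y]
    [SecondCountableTopology Y] (hY : IndecSpace Y) {Z : Set Y} (hZ : IsClosed Z)
    (hne : Z ≠ univ) (hsat : Sat Z = univ) :
    ∃ P P' : Set Y, IsClosed P ∧ IsClosed P' ∧ P ∪ P' = Z ∧ Disjoint P P' ∧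
      Sat P = univ ∧ Sat P' = univ := by
  by_contra hcon
  have key : ∀ P P' : Set Y, IsClosed P → IsClosed P' → P ∪ P' = Z → Disjoint P P' →
      IsMeagre (Sat P) ∨ IsMeagre (Sat P') := by
    intro P P' h1 h2 h3 h4
    by_contra h
    push Not at h
    exact hcon ⟨P, P', h1, h2, h3, h4, sat_eq_univ hY h1 h.1, sat_eq_univ hY h2 h.2⟩
  -- By Lindelöf, the open sets that cut a piece of meagre saturation out of `Z` have a countable
  -- subfamily with the same union.
  let M : Set (Set Y) := {G | IsOpen G ∧ IsMeagre (Sat (Z ∩ G))}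
  obtain ⟨T, hTc, hTM, hT⟩ := TopologicalSpace.isOpen_sUnion_countable M fun G hG => hG.1
  have hm1 : IsMeagre (⋃ G ∈ T, Sat (Z ∩ G)) := isMeagre_biUnion hTc fun G hG => (hTM hG).2
  have hinM : ∀ P P' : Set Y, IsClosed P → IsClosed P' → P ∪ P' = Z → Disjoint P P' →
      IsMeagre (Sat P) → P ⊆ ⋃₀ M := by
    intro P P' h1 h2 h3 h4 h5
    have e : Z ∩ P'ᶜ = P := by
      rw [← h3]
      ext z
      have := fun (h1 : z ∈ _) => Set.disjoint_left.1 h4 h1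
      simp only [mem_union, mem_compl_iff, mem_inter_iff]
      tauto
    refine fun z hz => ⟨P'ᶜ, ⟨h2.isOpen_compl, by rwa [e]⟩, Set.disjoint_left.1 h4 hz⟩
  -- What is left of `Z` lies in a single component: a separation of `Z` between two leftover
  -- points would have one part of meagre saturation, hence inside `⋃₀ M`.
  have hone : ∃ a, Sat (Z \ ⋃₀ M) ⊆ {y | JoinedProper a y} := by
    by_cases hemp : (Z \ ⋃₀ M).Nonempty
    · obtain ⟨a, haZ, haM⟩ := hemp
      refine ⟨a, ?_⟩
      rintro x ⟨y, ⟨hyZ, hyM⟩, hxy⟩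
      have hya : y ∈ connectedComponentIn Z a := by
        by_contra hy
        obtain ⟨Q, Q', hQ, hQ', hun, hd, haQ, hQV⟩ := exists_clopen_split hZ haZ
          (isClosed_singleton (x := y)).isOpen_compl (by
            intro z hz hzy
            exact hy (hzy ▸ hz))
        have hyQ' : y ∈ Q' := (hun ▸ hyZ : y ∈ Q ∪ Q').resolve_left fun h => hQV h rfl
        rcases key Q Q' hQ hQ' hun hd with h | h
        · exact haM (hinM Q Q' hQ hQ' hun hd h haQ)
        · exact hyM (hinM Q' Q hQ' hQ (by rw [union_comm, hun]) hd.symm h hyQ')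
      have : JoinedProper a y := ⟨connectedComponentIn Z a, isClosed_connectedComponentIn' hZ a,
        isPreconnected_connectedComponentIn,
        fun h => hne (eq_univ_of_univ_subset (h ▸ connectedComponentIn_subset _ _)),
        mem_connectedComponentIn haZ, hya⟩
      exact this.trans hY hxy.symm
    · obtain ⟨a⟩ : Nonempty Y := inferInstance
      refine ⟨a, ?_⟩
      rintro x ⟨y, hy, -⟩
      exact absurd ⟨y, hy⟩ hemp
  obtain ⟨a, ha⟩ := hone
  have hm2 : IsMeagre (Sat (Z \ ⋃₀ M)) := (isMeagre_composant hY a).mono ha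
  have hall : (univ : Set Y) ⊆ (⋃ G ∈ T, Sat (Z ∩ G)) ∪ Sat (Z \ ⋃₀ M) := by
    rw [← hsat]
    rintro x ⟨y, hyZ, hxy⟩
    by_cases hyM : y ∈ ⋃₀ M
    · rw [← hT] at hyM
      obtain ⟨G, hG, hyG⟩ := hyM
      exact Or.inl (mem_biUnion hG ⟨y, ⟨hyZ, hyG⟩, hxy⟩)
    · exact Or.inr ⟨y, ⟨hyZ, hyM⟩, hxy⟩
  exact not_isMeagre_of_isOpen isOpen_univ univ_nonempty ((hm1.union hm2).mono hall)

end Continua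

/-! ### Branches of the logarithm and Janiszewski's theorem in the plane -/

section Plane

/-- Two continuous logarithms of the same function on a connected set differ by a constant. -/
lemma log_sub_eq {X : Type*} [TopologicalSpace X] {S : Set X} (hS : IsPreconnected S)
    {l m : X → ℂ} (hl : ContinuousOn l S) (hm : ContinuousOn m S)
    (h : ∀ z ∈ S, Complex.exp (l z) = Complex.exp (m z)) {x y : X} (hx : x ∈ S) (hy : y ∈ S) :
    l x - m x = l y - m y := by
  have hcount : (range fun n : ℤ => (n : ℂ) * (2 * Real.pi * Complex.I)).Countable :=
    countable_range _
  have hsub : (fun z => l z - m z) '' S ⊆ range fun n : ℤ => (n : ℂ) * (2 * Real.pi * Complex.I) := by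
    rintro _ ⟨z, hz, rfl⟩
    have : Complex.exp (l z - m z) = 1 := by
      rw [Complex.exp_sub, h z hz, div_self (Complex.exp_ne_zero _)]
    obtain ⟨n, hn⟩ := Complex.exp_eq_one_iff.1 this
    exact ⟨n, hn.symm⟩
  exact hcount.isTotallyDisconnected _ hsub (hS.image _ (hl.sub hm))
    (mem_image_of_mem _ hx) (mem_image_of_mem _ hy)

/-- A zero-free continuous function on the plane has winding number `0` on every circle, whereas
`1 + α w` has winding number `1` on large circles. -/
lemma no_extension {F : ℂ → ℂ} (hF : Continuous F) (h0 : ∀ w, F w ≠ 0) {α : ℂ} (hα : α ≠ 0)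
    {M : ℝ} (h : ∀ w, M ≤ ‖w‖ → F w = 1 + α * w) : False := by
  have hcon : ContractibleSpace (univ : Set ℂ) := convex_univ.contractibleSpace univ_nonempty
  have hsc : IsSimplyConnected (univ : Set ℂ) := SimplyConnectedSpace.ofContractible _
  obtain ⟨L, hL, hLF⟩ := Complex.exists_continuousOn_eqOn_exp_comp hsc isOpen_univ
    hF.continuousOn (by rintro ⟨w, -, hw⟩; exact h0 w hw)
  rw [continuousOn_univ] at hL
  obtain ⟨r, hr⟩ : ∃ r : ℝ, r = max 2 (M * ‖α‖) := ⟨_, rfl⟩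
  have hr2 : 2 ≤ r := hr ▸ le_max_left _ _
  have hrM : M * ‖α‖ ≤ r := hr ▸ le_max_right _ _
  have hr0 : (0 : ℝ) < r := by linarith
  have hrc : (r : ℂ) ≠ 0 := by exact_mod_cast hr0.ne'
  let w : ℝ → ℂ := fun t => r * Complex.exp (t * Complex.I) / α
  let g : ℝ → ℂ := fun t => 1 + (r : ℂ)⁻¹ * Complex.exp (-(t * Complex.I))
  have hg : ∀ t, g t ∈ Complex.slitPlane := by
    intro t
    refine Complex.mem_slitPlane_of_norm_lt_one ?_
    have : ‖Complex.exp (-(t * Complex.I))‖ = 1 := by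
      rw [Complex.norm_exp]; simp
    rw [norm_mul, this, mul_one, norm_inv, Complex.norm_real, Real.norm_of_nonneg hr0.le]
    exact inv_lt_one_of_one_lt₀ (by linarith)
  let l : ℝ → ℂ := fun t => Complex.log r + t * Complex.I + Complex.log (g t)
  have hlc : Continuous l := by
    refine Continuous.add (by fun_prop) ?_
    exact Continuous.clog (by fun_prop) hg
  have hwc : Continuous w := by fun_prop
  have hexp : ∀ t, Complex.exp (L (w t)) = Complex.exp (l t) := by
    intro t
    have e1 : Complex.exp (L (w t)) = F (w t) := hLF (mem_univ _)
    have hnw : ‖w t‖ = r / ‖α‖ := by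
      have : ‖Complex.exp (t * Complex.I)‖ = 1 := Complex.norm_exp_ofReal_mul_I t
      simp only [w]
      rw [norm_div, norm_mul, this, mul_one, Complex.norm_real, Real.norm_of_nonneg hr0.le]
    rw [e1, h _ (by rw [hnw, le_div_iff₀ (norm_pos_iff.2 hα)]; exact hrM)]
    simp only [l]
    rw [Complex.exp_add, Complex.exp_add, Complex.exp_log hrc,
      Complex.exp_log (Complex.slitPlane_ne_zero (hg t))]
    simp only [g, w]
    rw [Complex.exp_neg]
    have := Complex.exp_ne_zero (t * Complex.I)
    field_simp
    ring
  have key := log_sub_eq (S := univ) isPreconnected_univ (hL.comp hwc).continuousOn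
    hlc.continuousOn (fun t _ => hexp t) (mem_univ (0 : ℝ)) (mem_univ (2 * Real.pi))
  have e2 : Complex.exp (((2 * Real.pi : ℝ) : ℂ) * Complex.I) = 1 := by
    push_cast
    exact Complex.exp_two_pi_mul_I
  have hw2 : w (2 * Real.pi) = w 0 := by
    simp only [w]
    rw [e2]; simp
  have hg2 : g (2 * Real.pi) = g 0 := by
    simp only [g]
    rw [Complex.exp_neg, e2]; simp
  have hl2 : l (2 * Real.pi) = l 0 + 2 * Real.pi * Complex.I := by
    simp only [l]
    rw [hg2]; push_cast; ring
  simp only [Function.comp, hw2, hl2] at key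
  have : (2 * Real.pi * Complex.I : ℂ) = 0 := by linear_combination key
  exact Complex.two_pi_I_ne_zero this

/-- At distance more than `ε` from a connected set `A` the function `(z - a) / (z - b)` with
`a, b ∈ A` has a continuous logarithm: go from `a` to `b` in `A` by steps shorter than `ε`. -/
lemma exists_log_far {A : Set ℂ} (hA : IsPreconnected A) {a b : ℂ} (ha : a ∈ A) (hb : b ∈ A)
    {ε : ℝ} (hε : 0 < ε) : ∃ l : ℂ → ℂ, ContinuousOn l {z | ε < infDist z A} ∧
      ∀ z, ε < infDist z A → Complex.exp (l z) = (z - a) / (z - b) := by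
  have far : ∀ z, ε < infDist z A → ∀ x ∈ A, ε < ‖z - x‖ := by
    intro z hz x hx
    rw [← dist_eq_norm]
    exact hz.trans_le (infDist_le_dist_of_mem hx)
  have ne : ∀ z, ε < infDist z A → ∀ x ∈ A, z - x ≠ 0 := fun z hz x hx =>
    norm_pos_iff.1 (hε.trans (far z hz x hx))
  refine hA.induction₂ (fun a b => ∃ l : ℂ → ℂ, ContinuousOn l {z | ε < infDist z A} ∧
      ∀ z, ε < infDist z A → Complex.exp (l z) = (z - a) / (z - b)) ?_ ?_ ?_ ha hb
  · intro x hx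
    filter_upwards [self_mem_nhdsWithin, mem_nhdsWithin_of_mem_nhds (ball_mem_nhds x hε)]
      with y hy hxy
    have hslit : ∀ z, ε < infDist z A → (z - x) / (z - y) ∈ Complex.slitPlane := by
      intro z hz
      have e : (z - x) / (z - y) = 1 + (y - x) / (z - y) := by
        have := ne z hz y hy
        field_simp
        ring
      rw [e]
      refine Complex.mem_slitPlane_of_norm_lt_one ?_
      rw [norm_div, div_lt_one (hε.trans (far z hz y hy)), ← dist_eq_norm]
      exact (mem_ball.1 hxy).trans (far z hz y hy)
    refine ⟨fun z => Complex.log ((z - x) / (z - y)), ?_, fun z hz => ?_⟩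
    · refine ContinuousOn.clog ?_ hslit
      exact (by fun_prop : ContinuousOn (fun z => z - x) _).div (by fun_prop) fun z hz => ne z hz y hy
    · exact Complex.exp_log (Complex.slitPlane_ne_zero (hslit z hz))
  · rintro x y z hx hy hz ⟨l, hl, hle⟩ ⟨m, hm, hme⟩
    refine ⟨fun t => l t + m t, hl.add hm, fun t ht => ?_⟩
    rw [Complex.exp_add, hle t ht, hme t ht, div_mul_div_cancel₀ (ne t ht y hy)]
  · rintro x y hx hy ⟨l, hl, hle⟩
    refine ⟨fun t => -l t, hl.neg, fun t ht => ?_⟩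
    rw [Complex.exp_neg, hle t ht, inv_div]

/-- A compact subset of a connected open set lies in a connected subset that is a level away
from the boundary, when the open set is exhausted by the sets `{ε < φ}`. -/
lemma exists_level {U C : Set ℂ} (hU : IsOpen U) (hUc : IsPreconnected U) {φ : ℂ → ℝ}
    (hφ : Continuous φ) (hpos : ∀ z ∈ U, 0 < φ z) (hC : IsCompact C) (hCU : C ⊆ U) :
    ∃ ε > 0, ∃ S ⊆ {z | ε < φ z}, IsPreconnected S ∧ C ⊆ S := by
  rcases C.eq_empty_or_nonempty with rfl | ⟨u, hu⟩
  · exact ⟨1, one_pos, ∅, empty_subset _, isPreconnected_empty, subset_rfl⟩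
  have hpath : IsPathConnected U := (hU.isConnected_iff_isPathConnected).1 ⟨⟨u, hCU hu⟩, hUc⟩
  let V : ℕ → Set ℂ := fun n => connectedComponentIn {z | (1 / ((n : ℝ) + 1)) < φ z} u
  have hop : ∀ n : ℕ, IsOpen {z | (1 / ((n : ℝ) + 1)) < φ z} := fun n => isOpen_lt continuous_const hφ
  have hmono : Monotone V := by
    intro m n hmn
    refine connectedComponentIn_mono u ?_
    intro z (hz : 1 / ((m : ℝ) + 1) < φ z)
    exact (Nat.one_div_le_one_div hmn).trans_lt hz
  have hcov : C ⊆ ⋃ n, V n := by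
    intro z hz
    obtain ⟨γ, hγ⟩ := hpath.joinedIn u (hCU hu) z (hCU hz)
    obtain ⟨s, -, hs⟩ := isCompact_univ.exists_isMinOn (s := (univ : Set unitInterval))
      univ_nonempty (hφ.comp γ.continuous).continuousOn
    obtain ⟨n, hn⟩ := exists_nat_one_div_lt (hpos _ (hγ s))
    refine mem_iUnion.2 ⟨n, ?_⟩
    have hsub : range γ ⊆ {z | (1 / ((n : ℝ) + 1)) < φ z} := by
      rintro _ ⟨t, rfl⟩
      exact hn.trans_le (hs (mem_univ t))
    exact (isPreconnected_range γ.continuous).subset_connectedComponentIn ⟨0, γ.source⟩ hsub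
      ⟨1, γ.target⟩
  obtain ⟨n, hn⟩ := hC.elim_directed_cover V (fun n => (hop n).connectedComponentIn) hcov
    hmono.directed_le
  exact ⟨1 / ((n : ℝ) + 1), Nat.one_div_pos_of_nat, V n, connectedComponentIn_subset _ _,
    isPreconnected_connectedComponentIn, hn⟩

/-- Janiszewski's theorem: the union of two plane continua whose intersection is disconnected
separates the plane. If it did not, the logarithms of `(z - a) / (z - b)` off `A` and off `B` (with
`a`, `b` in different parts of `A ∩ B`) would fit together, and cutting the common logarithm off
near `P` and near `∞` would give a zero-free extension contradicting `no_extension`. -/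
lemma janiszewski_plane {A B P P' : Set ℂ} (hA : IsCompact A) (hAc : IsPreconnected A)
    (hB : IsCompact B) (hBc : IsPreconnected B) (hP : IsClosed P) (hP' : IsClosed P')
    (hPn : P.Nonempty) (hPn' : P'.Nonempty) (hd : Disjoint P P') (h : A ∩ B = P ∪ P')
    (hU : IsPreconnected (A ∪ B)ᶜ) : False := by
  classical
  obtain ⟨a, haP⟩ := hPn
  obtain ⟨b, hbP⟩ := hPn'
  have hab : a ∈ A ∩ B := h ▸ Or.inl haP
  have hbb : b ∈ A ∩ B := h ▸ Or.inr hbP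
  have hP'c : IsCompact P' := (hA.inter hB).of_isClosed_subset hP' (h ▸ subset_union_right)
  obtain ⟨R, hR0, hR⟩ : ∃ R, 0 < R ∧ ∀ x ∈ P', ‖x‖ < R := by
    have hbd : Bornology.IsBounded P' := hP'c.isBounded
    exact hbd.exists_pos_norm_lt
  have hTc : IsClosed (P ∪ {z : ℂ | R ≤ ‖z‖}) :=
    hP.union (isClosed_le continuous_const continuous_norm)
  have hTd : Disjoint P' (P ∪ {z : ℂ | R ≤ ‖z‖}) := by
    rw [Set.disjoint_left]
    rintro z hz (h1 | h1)
    · exact Set.disjoint_left.1 hd h1 hz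
    · exact absurd (hR z hz) (not_lt.2 h1)
  obtain ⟨δ, hδ, hdδ⟩ := hTd.exists_cthickenings hP'c hTc
  obtain ⟨χ, hχ0, hχ1, -⟩ := exists_continuous_zero_one_of_isClosed
    (isClosed_cthickening (δ := δ) (E := P ∪ {z : ℂ | R ≤ ‖z‖}))
    (isClosed_cthickening (δ := δ) (E := P')) hdδ.symm
  set S0 := thickening δ (P ∪ {z : ℂ | R ≤ ‖z‖}) with hS0
  set S1 := thickening δ P' with hS1
  have hS0o : IsOpen S0 := isOpen_thickening
  have hS1o : IsOpen S1 := isOpen_thickening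
  have hS01 : Disjoint S1 S0 :=
    hdδ.mono (thickening_subset_cthickening _ _) (thickening_subset_cthickening _ _)
  have hc0 : ∀ z ∈ S0, χ z = 0 := fun z hz => hχ0 (thickening_subset_cthickening _ _ hz)
  have hc1 : ∀ z ∈ S1, χ z = 1 := fun z hz => hχ1 (thickening_subset_cthickening _ _ hz)
  have hT0 : P ∪ {z : ℂ | R ≤ ‖z‖} ⊆ S0 := self_subset_thickening hδ _
  have hT1 : P' ⊆ S1 := self_subset_thickening hδ _
  have haS : a ∈ S0 := hT0 (Or.inl haP)
  -- The compact region on which the logarithm has to be defined.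
  have hK : IsCompact ((S0 ∪ S1)ᶜ) := by
    refine (isCompact_closedBall (0 : ℂ) R).of_isClosed_subset
      (hS0o.union hS1o).isClosed_compl fun z hz => ?_
    rw [mem_closedBall_zero_iff]
    by_contra hcon
    exact hz (Or.inl (hT0 (Or.inr (not_le.1 hcon).le)))
  have hAcl := hA.isClosed
  have hBcl := hB.isClosed
  have hposA : ∀ z, z ∉ A → 0 < infDist z A := fun z hz =>
    (hAcl.notMem_iff_infDist_pos ⟨a, hab.1⟩).1 hz
  have hposB : ∀ z, z ∉ B → 0 < infDist z B := fun z hz =>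
    (hBcl.notMem_iff_infDist_pos ⟨a, hab.2⟩).1 hz
  obtain ⟨η, hη, hηK⟩ := hK.exists_forall_le' (a := 0)
    (f := fun z => max (infDist z A) (infDist z B))
    (by fun_prop) (fun z hz => by
      rw [lt_max_iff]
      by_cases hzA : z ∈ A
      · right
        refine hposB z fun hzB => hz ?_
        rcases (h ▸ ⟨hzA, hzB⟩ : z ∈ P ∪ P') with h1 | h1
        · exact Or.inl (hT0 (Or.inl h1))
        · exact Or.inr (hT1 h1)
      · exact Or.inl (hposA z hzA))
  obtain ⟨ε₀, hε₀, hε₀η⟩ := exists_between hη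
  obtain ⟨ε₁, hε₁, S, hSφ, hSc, hCS⟩ := exists_level (C := closedBall 0 R ∩
      {z | ε₀ ≤ min (infDist z A) (infDist z B)}) (φ := fun z => min (infDist z A) (infDist z B))
    (hA.union hB).isClosed.isOpen_compl hU (by fun_prop)
    (fun z hz => lt_min (hposA z fun h => hz (Or.inl h)) (hposB z fun h => hz (Or.inr h)))
    ((isCompact_closedBall _ _).inter_right (isClosed_le continuous_const (by fun_prop)))
    (by
      rintro z ⟨-, hz⟩ hzAB
      have hz' : ε₀ ≤ min (infDist z A) (infDist z B) := hz
      rcases hzAB with hzA | hzB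
      · have := hz'.trans (min_le_left _ _)
        rw [infDist_zero_of_mem hzA] at this
        linarith
      · have := hz'.trans (min_le_right _ _)
        rw [infDist_zero_of_mem hzB] at this
        linarith)
  -- The two logarithms differ by a constant `k` on `S`, which contains the overlap of their domains.
  obtain ⟨lA, hlA, hlAe⟩ := exists_log_far hAc hab.1 hbb.1 (lt_min hε₀ hε₁)
  obtain ⟨lB, hlB, hlBe⟩ := exists_log_far hBc hab.2 hbb.2 (lt_min hε₀ hε₁)
  have hSA : ∀ z ∈ S, min ε₀ ε₁ < infDist z A := fun z hz =>
    (min_le_right _ _).trans_lt ((hSφ hz).trans_le (min_le_left _ _))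
  have hSB : ∀ z ∈ S, min ε₀ ε₁ < infDist z B := fun z hz =>
    (min_le_right _ _).trans_lt ((hSφ hz).trans_le (min_le_right _ _))
  have hAB : ∀ z ∈ S, Complex.exp (lA z) = Complex.exp (lB z) := fun z hz => by
    rw [hlAe z (hSA z hz), hlBe z (hSB z hz)]
  obtain ⟨k, hk1, hk⟩ : ∃ k : ℂ, Complex.exp k = 1 ∧ ∀ z ∈ S, lA z = lB z + k := by
    rcases S.eq_empty_or_nonempty with rfl | ⟨u, hu⟩
    · exact ⟨0, Complex.exp_zero, fun z hz => hz.elim⟩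
    · refine ⟨lA u - lB u, ?_, fun z hz => ?_⟩
      · rw [Complex.exp_sub, hAB u hu, div_self (Complex.exp_ne_zero _)]
      · have := log_sub_eq hSc (hlA.mono hSA) (hlB.mono hSB) hAB hz hu
        linear_combination this
  set GA : Set ℂ := {z | ε₀ < infDist z A} ∩ ball 0 R with hGA
  set GB : Set ℂ := {z | ε₀ < infDist z B} ∩ ball 0 R with hGB
  have hGAo : IsOpen GA := (isOpen_lt continuous_const (by fun_prop)).inter isOpen_ball
  have hGBo : IsOpen GB := (isOpen_lt continuous_const (by fun_prop)).inter isOpen_ball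
  have hGA' : ∀ z ∈ GA, min ε₀ ε₁ < infDist z A := fun z hz => (min_le_left _ _).trans_lt hz.1
  have hGB' : ∀ z ∈ GB, min ε₀ ε₁ < infDist z B := fun z hz => (min_le_left _ _).trans_lt hz.1
  have hGS : ∀ z ∈ GA, z ∈ GB → z ∈ S := fun z hz hz' =>
    hCS ⟨ball_subset_closedBall hz.2, (le_min hz.1.le hz'.1.le : ε₀ ≤ _)⟩
  let l : ℂ → ℂ := fun z => if z ∈ GA then lA z else lB z + k
  have hlGA : ∀ z ∈ GA, l z = lA z := fun z hz => if_pos hz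
  have hlGB : ∀ z ∈ GB, l z = lB z + k := by
    intro z hz
    by_cases hzA : z ∈ GA
    · rw [hlGA z hzA, hk z (hGS z hzA hz)]
    · exact if_neg hzA
  have hlc : ∀ z ∈ GA ∪ GB, ContinuousAt l z := by
    rintro z (hz | hz)
    · refine ContinuousAt.congr ?_ (eventually_of_mem (hGAo.mem_nhds hz) fun y hy =>
        (hlGA y hy).symm)
      exact (hlA.mono hGA').continuousAt (hGAo.mem_nhds hz)
    · refine ContinuousAt.congr ?_ (eventually_of_mem (hGBo.mem_nhds hz) fun y hy =>
        (hlGB y hy).symm)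
      exact ((hlB.mono hGB').continuousAt (hGBo.mem_nhds hz)).add continuousAt_const
  have hle : ∀ z ∈ GA ∪ GB, Complex.exp (l z) = (z - a) / (z - b) := by
    rintro z (hz | hz)
    · rw [hlGA z hz, hlAe z (hGA' z hz)]
    · rw [hlGB z hz, Complex.exp_add, hk1, mul_one, hlBe z (hGB' z hz)]
  have hcov : ∀ z, z ∉ S0 → z ∉ S1 → z ∈ GA ∪ GB := by
    intro z h0 h1
    have hzR : z ∈ ball (0 : ℂ) R := by
      rw [mem_ball_zero_iff]
      by_contra hcon
      exact h0 (hT0 (Or.inr (not_lt.1 hcon)))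
    have := hε₀η.trans_le (hηK z (by rintro (h | h); exacts [h0 h, h1 h]))
    rcases lt_max_iff.1 this with h | h
    · exact Or.inl ⟨h, hzR⟩
    · exact Or.inr ⟨h, hzR⟩
  -- `g` is `1` near `P` and `∞`, and `(z - a) / (z - b)` near `P'` except at the pole `b`.
  let g : ℂ → ℂ := fun z => if z ∈ GA ∪ GB then Complex.exp (χ z * l z) else
    if χ z = 0 then 1 else (z - a) / (z - b)
  have hgG : ∀ z ∈ GA ∪ GB, g z = Complex.exp (χ z * l z) := fun z hz => if_pos hz
  have hg0 : ∀ z ∈ S0, g z = 1 := by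
    intro z hz
    by_cases hzG : z ∈ GA ∪ GB
    · rw [hgG z hzG, hc0 z hz]; simp
    · simp only [g, if_neg hzG, hc0 z hz, if_true]
  have hg1 : ∀ z ∈ S1, g z = (z - a) / (z - b) := by
    intro z hz
    by_cases hzG : z ∈ GA ∪ GB
    · rw [hgG z hzG, hc1 z hz, ← hle z hzG]; simp
    · simp only [g, if_neg hzG, hc1 z hz, one_ne_zero, if_false]
  have hgne : ∀ z, z ≠ b → g z ≠ 0 := by
    intro z hzb
    by_cases h0 : z ∈ S0
    · rw [hg0 z h0]; exact one_ne_zero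
    by_cases h1 : z ∈ S1
    · rw [hg1 z h1]
      refine div_ne_zero (sub_ne_zero.2 ?_) (sub_ne_zero.2 hzb)
      rintro rfl
      exact h0 haS
    · rw [hgG z (hcov z h0 h1)]
      exact Complex.exp_ne_zero _
  have hgc : ∀ z, z ≠ b → ContinuousAt g z := by
    intro z hzb
    by_cases h0 : z ∈ S0
    · exact continuousAt_const.congr (eventually_of_mem (hS0o.mem_nhds h0) fun y hy =>
        (hg0 y hy).symm)
    by_cases h1 : z ∈ S1
    · refine ContinuousAt.congr ?_ (eventually_of_mem (hS1o.mem_nhds h1) fun y hy =>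
        (hg1 y hy).symm)
      exact ContinuousAt.div (by fun_prop) (by fun_prop) (sub_ne_zero.2 hzb)
    · have hz := hcov z h0 h1
      refine ContinuousAt.congr ?_ (eventually_of_mem ((hGAo.union hGBo).mem_nhds hz) fun y hy =>
        (hgG y hy).symm)
      refine ContinuousAt.cexp (ContinuousAt.mul ?_ (hlc z hz))
      exact Complex.continuous_ofReal.continuousAt.comp χ.continuous.continuousAt
  -- In the coordinate `w = 1 / (z - b)` the function `g` becomes a zero-free map of the plane.
  let F : ℂ → ℂ := fun w => if w = 0 then 1 else g (b + w⁻¹)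
  have hF : ∀ w, w ≠ 0 → F w = g (b + w⁻¹) := fun w hw => if_neg hw
  have hne : ∀ w : ℂ, w ≠ 0 → b + w⁻¹ ≠ b := fun w hw => by simpa using hw
  refine no_extension (F := F) (α := b - a) (M := 2 / δ) ?_ ?_ ?_ ?_
  · rw [continuous_iff_continuousAt]
    intro w
    by_cases hw : w = 0
    · have hpos : 0 < (R + ‖b‖)⁻¹ := inv_pos.2 (add_pos_of_pos_of_nonneg hR0 (norm_nonneg b))
      refine continuousAt_const.congr (f := fun _ => (1 : ℂ)) ?_
      rw [hw]
      filter_upwards [ball_mem_nhds (0 : ℂ) hpos] with y hy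
      by_cases hy0 : y = 0
      · exact (if_pos hy0).symm
      · rw [hF y hy0, hg0 _ (hT0 (Or.inr ?_))]
        rw [mem_ball_zero_iff] at hy
        have h1 : R + ‖b‖ < ‖y⁻¹‖ := by
          rw [norm_inv]
          exact (lt_inv_comm₀ (norm_pos_iff.2 hy0) (inv_pos.1 hpos)).1 hy
        have h2 : ‖y⁻¹‖ ≤ ‖b + y⁻¹‖ + ‖b‖ := by
          have := norm_sub_le (b + y⁻¹) b
          simpa using this
        show R ≤ ‖b + y⁻¹‖
        linarith
    · refine ContinuousAt.congr (f := fun w => g (b + w⁻¹)) ?_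
        (eventually_of_mem (isOpen_ne.mem_nhds hw) fun y hy => (hF y hy).symm)
      exact ContinuousAt.comp (f := fun w : ℂ => b + w⁻¹) (hgc _ (hne w hw))
        (continuousAt_const.add (continuousAt_inv₀ hw))
  · intro w
    by_cases hw : w = 0
    · simp only [F, if_pos hw]; exact one_ne_zero
    · rw [hF w hw]; exact hgne _ (hne w hw)
  · rw [sub_ne_zero]
    rintro rfl
    exact Set.disjoint_left.1 hd haP hbP
  · intro w hw
    have hw0 : 0 < ‖w‖ := (div_pos two_pos hδ).trans_le hw
    have hw1 : w ≠ 0 := norm_pos_iff.1 hw0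
    rw [hF w hw1, hg1]
    · field_simp
      ring
    · refine mem_thickening_iff.2 ⟨b, hbP, ?_⟩
      rw [dist_eq_norm, add_sub_cancel_left, norm_inv, inv_lt_comm₀ hw0 hδ]
      have : δ⁻¹ < 2 / δ := by
        rw [inv_eq_one_div]
        exact div_lt_div_of_pos_right one_lt_two hδ
      exact this.trans_le hw

end Plane

/-! ### Janiszewski's theorem on the sphere -/

section Sphere

lemma isPreconnected_diff_singleton {Y : Type*} [TopologicalSpace Y] [T1Space Y] {O B : Set Y}
    {t : Y} (hO : IsOpen O) (hOc : IsPreconnected O) (hB : IsOpen B) (hBO : B ⊆ O) (ht : t ∈ B)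
    (hBc : IsPreconnected (B \ {t})) : IsPreconnected (O \ {t}) := by
  have ho : IsOpen (O \ {t}) := hO.sdiff isClosed_singleton
  have key : ∀ u v : Set Y, IsOpen u → IsOpen v → O \ {t} ⊆ u ∪ v → O \ {t} ∩ (u ∩ v) = ∅ →
      B \ {t} ⊆ u → O \ {t} ⊆ u := by
    intro u v hu hv huv hd hBu
    have h1 := isPreconnected_iff_subset_of_disjoint.1 hOc ((O \ {t}) ∩ u ∪ B) ((O \ {t}) ∩ v)
      ((ho.inter hu).union hB) (ho.inter hv) ?_ ?_
    · rcases h1 with h1 | h1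
      · intro z hz
        rcases h1 hz.1 with h | h
        · exact h.2
        · exact hBu ⟨h, hz.2⟩
      · exact absurd rfl (h1 (hBO ht)).1.2
    · intro z hz
      by_cases hzt : z = t
      · exact Or.inl (Or.inr (hzt ▸ ht))
      · rcases huv ⟨hz, hzt⟩ with h | h
        · exact Or.inl (Or.inl ⟨⟨hz, hzt⟩, h⟩)
        · exact Or.inr ⟨⟨hz, hzt⟩, h⟩
    · refine eq_empty_of_forall_notMem ?_
      rintro z ⟨-, h1, h2, h3⟩
      have hzu : z ∈ u := h1.elim (fun h => h.2) fun h => hBu ⟨h, h2.2⟩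
      exact (hd ▸ ⟨h2, hzu, h3⟩ : z ∈ (∅ : Set Y))
  rw [isPreconnected_iff_subset_of_disjoint]
  intro u v hu hv huv hd
  have hsub : B \ {t} ⊆ O \ {t} := sdiff_subset_sdiff_left hBO
  rcases isPreconnected_iff_subset_of_disjoint.1 hBc u v hu hv (hsub.trans huv)
    (subset_empty_iff.1 (hd ▸ inter_subset_inter_left _ hsub)) with h | h
  · exact Or.inl (key u v hu hv huv hd h)
  · exact Or.inr (key v u hv hu (by rw [union_comm]; exact huv) (by rw [inter_comm v u]; exact hd) h)

/-- Stereographic projection onto `ℂ`. -/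
lemma exists_stereo (t : S2) :
    ∃ e : OpenPartialHomeomorph S2 ℂ, e.source = {t}ᶜ ∧ e.target = univ := by
  have : Fact (Module.finrank ℝ (EuclideanSpace ℝ (Fin 3)) = 2 + 1) := ⟨by simp⟩
  refine ⟨(stereographic' 2 t).transHomeomorph
    Complex.orthonormalBasisOneI.repr.symm.toHomeomorph, ?_, ?_⟩
  · simp
  · simp

lemma isPreconnected_ball_diff (p : ℂ) (r : ℝ) : IsPreconnected (ball p r \ {p}) := by
  have : ball p r \ {p} = (fun x : ℝ × ℝ => p + x.1 * Complex.exp (x.2 * Complex.I)) ''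
      (Ioo 0 r ×ˢ univ) := by
    ext z
    constructor
    · rintro ⟨hz, hzp⟩
      refine ⟨(‖z - p‖, Complex.arg (z - p)), ⟨⟨norm_pos_iff.2 (sub_ne_zero.2 hzp), ?_⟩, trivial⟩, ?_⟩
      · rwa [mem_ball, dist_eq_norm] at hz
      · simp only [Complex.norm_mul_exp_arg_mul_I]
        ring
    · rintro ⟨⟨s, θ⟩, ⟨⟨hs0, hsr⟩, -⟩, rfl⟩
      have hn : ‖(s : ℂ) * Complex.exp (θ * Complex.I)‖ = s := by
        rw [norm_mul, Complex.norm_exp_ofReal_mul_I, mul_one, Complex.norm_real,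
          Real.norm_of_nonneg hs0.le]
      refine ⟨?_, ?_⟩
      · rw [mem_ball, dist_eq_norm, add_sub_cancel_left, hn]
        exact hsr
      · intro h
        have h' : p + (s : ℂ) * Complex.exp (θ * Complex.I) = p := h
        rw [add_eq_left] at h'
        rw [h', norm_zero] at hn
        exact hs0.ne hn
  rw [this]
  exact (isPreconnected_Ioo.prod isPreconnected_univ).image _ (by fun_prop)

lemma isPreconnected_sphere_diff {O : Set S2} (hO : IsOpen O) (hOc : IsPreconnected O) {t : S2}
    (ht : t ∈ O) : IsPreconnected (O \ {t}) := by
  obtain ⟨e, hes, het⟩ := exists_stereo (-t)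
  have hts : t ∈ e.source := by
    rw [hes]
    intro h
    have h' : t = -t := h
    exact ne_neg_of_mem_unit_sphere ℝ t (h')
  have hc : Continuous e.symm := by
    rw [← continuousOn_univ, ← het]
    exact e.continuousOn_symm
  have hnhd : e.symm ⁻¹' O ∈ 𝓝 (e t) := by
    refine (hO.preimage hc).mem_nhds ?_
    rw [mem_preimage, e.left_inv hts]
    exact ht
  obtain ⟨r, hr, hrO⟩ := Metric.mem_nhds_iff.1 hnhd
  have hinj : InjOn e.symm univ := by
    rw [← het]
    exact e.symm.injOn
  have himg : e.symm '' ball (e t) r \ {t} = e.symm '' (ball (e t) r \ {e t}) := by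
    rw [(hinj.mono (subset_univ _)).image_sdiff_subset (singleton_subset_iff.2 (mem_ball_self hr)),
      image_singleton, e.left_inv hts]
  refine isPreconnected_diff_singleton (B := e.symm '' ball (e t) r) hO hOc ?_ ?_ ?_ ?_
  · exact e.isOpen_image_symm_of_subset_target isOpen_ball (by rw [het]; exact subset_univ _)
  · exact image_subset_iff.2 hrO
  · exact ⟨e t, mem_ball_self hr, e.left_inv hts⟩
  · rw [himg]
    exact (isPreconnected_ball_diff _ _).image _ hc.continuousOn

/-- Janiszewski's theorem on the sphere. -/
lemma janiszewski_sphere {A B P P' : Set S2} (hA : IsClosed A) (hAc : IsPreconnected A)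
    (hB : IsClosed B) (hBc : IsPreconnected B) (hP : IsClosed P) (hP' : IsClosed P')
    (hPn : P.Nonempty) (hPn' : P'.Nonempty) (hd : Disjoint P P') (h : A ∩ B = P ∪ P')
    (hne : (A ∪ B)ᶜ.Nonempty) : ¬ IsPreconnected (A ∪ B)ᶜ := by
  intro hU
  obtain ⟨t, ht⟩ := hne
  obtain ⟨e, hes, het⟩ := exists_stereo t
  have hAs : A ⊆ e.source := fun z hz => by
    rw [hes]
    rintro rfl
    exact ht (Or.inl hz)
  have hBs : B ⊆ e.source := fun z hz => by
    rw [hes]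
    rintro rfl
    exact ht (Or.inr hz)
  have hPs : P ⊆ e.source := (subset_union_left.trans h.symm.subset).trans
    (inter_subset_left.trans hAs)
  have hPs' : P' ⊆ e.source := (subset_union_right.trans h.symm.subset).trans
    (inter_subset_left.trans hAs)
  have hU' := isPreconnected_sphere_diff (hA.union hB).isOpen_compl hU ht
  have himg : e '' ((A ∪ B)ᶜ \ {t}) = (e '' A ∪ e '' B)ᶜ := by
    have e1 : (A ∪ B)ᶜ \ {t} = e.source \ (A ∪ B) := by
      rw [hes, sdiff_eq, sdiff_eq, inter_comm]
    rw [e1, e.injOn.image_sdiff_subset (union_subset hAs hBs), e.image_source_eq_target, het,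
      image_union, compl_eq_univ_sdiff]
  refine janiszewski_plane (hA.isCompact.image_of_continuousOn (e.continuousOn.mono hAs))
    (hAc.image _ (e.continuousOn.mono hAs))
    (hB.isCompact.image_of_continuousOn (e.continuousOn.mono hBs))
    (hBc.image _ (e.continuousOn.mono hBs))
    (hP.isCompact.image_of_continuousOn (e.continuousOn.mono hPs)).isClosed
    (hP'.isCompact.image_of_continuousOn (e.continuousOn.mono hPs')).isClosed
    (hPn.image e) (hPn'.image e) ?_ ?_ ?_
  · rw [Set.disjoint_iff_inter_eq_empty, ← e.injOn.image_inter hPs hPs', hd.inter_eq, image_empty]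
  · rw [← e.injOn.image_inter hAs hBs, h, image_union]
  · rw [← himg]
    refine hU'.image _ (e.continuousOn.mono ?_)
    rw [hes]
    exact fun z hz => hz.2

end Sphere

/-! ### Subcontinua of the boundary of a region -/

section Region

lemma S2.preconnectedSpace : PreconnectedSpace S2 := by
  have : IsPreconnected (sphere (0 : EuclideanSpace ℝ (Fin 3)) 1) :=
    isPreconnected_sphere (by
      rw [← Module.finrank_eq_rank, finrank_euclideanSpace_fin]
      exact_mod_cast (by norm_num : 1 < 3)) _ _
  exact isPreconnected_iff_preconnectedSpace.1 this

lemma S2.locallyConnectedSpace : LocallyConnectedSpace S2 := by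
  have : Fact (Module.finrank ℝ (EuclideanSpace ℝ (Fin 3)) = 2 + 1) := ⟨by simp⟩
  exact ChartedSpace.locallyConnectedSpace (EuclideanSpace ℝ (Fin 2)) S2

lemma indecSpace_of_isIndecomposable {α : Type*} [TopologicalSpace α] {A : Set α}
    (hA : IsIndecomposable A) : IndecSpace A := by
  have : CompactSpace A := isCompact_iff_compactSpace.1 hA.1.1
  intro K L hK hKc hL hLc hKL
  by_contra hcon
  push Not at hcon
  obtain ⟨hKne, hLne⟩ := hcon
  have himg : ∀ M : Set A, IsClosed M → IsPreconnected M → M.Nonempty → M ≠ univ →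
      IsContinuum (Subtype.val '' M) ∧ Subtype.val '' M ⊆ A ∧ Subtype.val '' M ≠ A := by
    intro M h1 h2 h3 h4
    refine ⟨⟨h1.isCompact.image continuous_subtype_val, h3.image _,
      h2.image _ continuous_subtype_val.continuousOn⟩, ?_, fun h => h4 ?_⟩
    · rintro _ ⟨z, -, rfl⟩
      exact z.2
    · refine eq_univ_of_forall fun z => ?_
      obtain ⟨y, hy, hyz⟩ := (h.symm ▸ z.2 : (z : α) ∈ Subtype.val '' M)
      exact Subtype.val_injective hyz ▸ hy
  have hKn : K.Nonempty := by
    by_contra h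
    rw [not_nonempty_iff_eq_empty.1 h, empty_union] at hKL
    exact hLne hKL
  have hLn : L.Nonempty := by
    by_contra h
    rw [not_nonempty_iff_eq_empty.1 h, union_empty] at hKL
    exact hKne hKL
  obtain ⟨k1, k2, k3⟩ := himg K hK hKc hKn hKne
  obtain ⟨l1, l2, l3⟩ := himg L hL hLc hLn hLne
  refine hA.2 ⟨_, _, k1, k2, k3, l1, l2, l3, ?_⟩
  rw [← image_union, hKL, image_univ, Subtype.range_coe]

/-- Filling in: the complement of a component of the complement of a connected closed set is
connected. -/
lemma isPreconnected_compl_component {Y : Type*} [TopologicalSpace Y] [PreconnectedSpace Y]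
    [LocallyConnectedSpace Y] {N : Set Y} (hN : IsClosed N) (hNc : IsPreconnected N) (r : Y) :
    IsPreconnected (connectedComponentIn Nᶜ r)ᶜ := by
  have hO : IsOpen Nᶜ := hN.isOpen_compl
  have hU : IsOpen (Nᶜ \ connectedComponentIn Nᶜ r) := by
    rw [isOpen_iff_mem_nhds]
    rintro z ⟨hz, hzr⟩
    refine mem_of_superset (hO.connectedComponentIn.mem_nhds (mem_connectedComponentIn hz)) ?_
    refine fun y hy => ⟨connectedComponentIn_subset _ _ hy, fun hyr => hzr ?_⟩
    rw [connectedComponentIn_eq hyr, ← connectedComponentIn_eq hy]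
    exact mem_connectedComponentIn hz
  have hsub := connectedComponentIn_subset Nᶜ r
  have e : (connectedComponentIn Nᶜ r)ᶜ = N ∪ Nᶜ \ connectedComponentIn Nᶜ r := by
    ext z
    have := @hsub z
    simp only [mem_union, mem_compl_iff, Set.mem_sdiff] at *
    tauto
  rw [e]
  refine isPreconnected_union_of_compl hNc hU hO.connectedComponentIn
    (disjoint_left.2 fun z hz h => hsub h hz) disjoint_sdiff_left ?_
  rw [← e, compl_union_self]

/-- A component of a set is relatively closed in that set. -/
lemma closure_component_inter_s14 {Y : Type*} [TopologicalSpace Y] {O : Set Y} {w q : Y}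
    (hq : q ∈ closure (connectedComponentIn O w)) (hqO : q ∈ O) (hw : w ∈ O) :
    q ∈ connectedComponentIn O w := by
  have h : IsPreconnected (insert q (connectedComponentIn O w)) :=
    isPreconnected_connectedComponentIn.subset_closure (subset_insert _ _)
      (insert_subset hq subset_closure)
  exact h.subset_connectedComponentIn (Or.inr (mem_connectedComponentIn hw))
    (insert_subset hqO (connectedComponentIn_subset _ _)) (Or.inl rfl)

/-- If `A` and `N` are continua in the boundary of a region `R`, with `A` indecomposable and not
contained in `N`, then some composant of `A` misses `N`. Otherwise every composant contains a
continuum `X` whose intersection with `N` is split, so that `N ∪ X` cuts off an extra complementary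
domain; these domains are pairwise disjoint for different composants, so there are only countably
many composants, against the Baire category theorem. -/
theorem no_hit {R A N : Set S2} (hR : IsOpen R) (hRc : IsPreconnected R) (hRn : R.Nonempty)
    (hA : IsIndecomposable A) (hAJ : A ⊆ frontier R) (hAn : A.Nontrivial) (hN : IsContinuum N)
    (hNJ : N ⊆ frontier R) (hAN : ¬ A ⊆ N)
    (hhit : ∀ x ∈ A, ∃ K, IsContinuum K ∧ K ⊆ A ∧ K ≠ A ∧ x ∈ K ∧ (K ∩ N).Nonempty) : False := by
  have := S2.preconnectedSpace
  have := S2.locallyConnectedSpace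
  have : CompactSpace A := isCompact_iff_compactSpace.1 hA.1.1
  have : PreconnectedSpace A := isPreconnected_iff_preconnectedSpace.1 hA.1.2.isPreconnected
  have : Nontrivial A := hAn.coe_sort
  have hY : IndecSpace A := indecSpace_of_isIndecomposable hA
  have hAcl : IsClosed A := hA.1.1.isClosed
  have hNcl : IsClosed N := hN.1.isClosed
  have hRJ : ∀ z ∈ R, z ∉ frontier R := fun z hz h => by
    rw [hR.frontier_eq] at h
    exact h.2 hz
  obtain ⟨r, hr⟩ := hRn
  -- Split the trace of `N` on `A` into two closed pieces met by every composant.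
  have hZcl : IsClosed (Subtype.val ⁻¹' N : Set A) := hNcl.preimage continuous_subtype_val
  have hZne : (Subtype.val ⁻¹' N : Set A) ≠ univ := fun h =>
    hAN fun z hz => (h ▸ mem_univ (⟨z, hz⟩ : A) : (⟨z, hz⟩ : A) ∈ Subtype.val ⁻¹' N)
  have hsat : Sat (Subtype.val ⁻¹' N : Set A) = univ := by
    refine eq_univ_of_forall fun x => ?_
    obtain ⟨K, hK, hKA, hKne, hxK, y, hyK, hyN⟩ := hhit x x.2
    refine ⟨⟨y, hKA hyK⟩, hyN, Subtype.val ⁻¹' K, hK.1.isClosed.preimage continuous_subtype_val,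
      ?_, fun h => hKne (hKA.antisymm fun z hz => ?_), hxK, hyK⟩
    · refine (Topology.IsInducing.subtypeVal.isPreconnected_image).1 ?_
      rw [Subtype.image_preimage_coe, inter_eq_right.2 hKA]
      exact hK.2.isPreconnected
    · exact (h ▸ mem_univ (⟨z, hz⟩ : A) : (⟨z, hz⟩ : A) ∈ Subtype.val ⁻¹' K)
  obtain ⟨P, P', hP, hP', hPP, hPd, hPs, hPs'⟩ := exists_split hY hZcl hZne hsat
  have hX : ∀ x : A, ∃ X : Set A, IsClosed X ∧ IsPreconnected X ∧ X ≠ univ ∧ x ∈ X ∧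
      (X ∩ P).Nonempty ∧ (X ∩ P').Nonempty := by
    intro x
    obtain ⟨y, hyP, K, k1, k2, k3, k4, k5⟩ := (hPs ▸ mem_univ x : x ∈ Sat P)
    obtain ⟨y', hyP', L, l1, l2, l3, l4, l5⟩ := (hPs' ▸ mem_univ x : x ∈ Sat P')
    refine ⟨K ∪ L, k1.union l1, k2.union x k4 l4 l2, fun h => ?_, Or.inl k4,
      ⟨y, Or.inl k5, hyP⟩, ⟨y', Or.inr l5, hyP'⟩⟩
    rcases hY K L k1 k2 l1 l2 h with h | h
    · exact k3 h
    · exact l3 h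
  choose X hXcl hXc hXne hxX hXP hXP' using hX
  -- The complementary domain of `N` containing `R`.
  set Ω := connectedComponentIn Nᶜ r with hΩ
  have hRN : R ⊆ Nᶜ := fun z hz h => hRJ z hz (hNJ h)
  have hRΩ : R ⊆ Ω := hRc.subset_connectedComponentIn hr hRN
  have hJΩ : ∀ z ∈ frontier R, z ∉ N → z ∈ Ω := by
    have hc : IsPreconnected (R ∪ frontier R \ N) :=
      hRc.subset_closure subset_union_left
        (union_subset subset_closure (sdiff_subset.trans frontier_subset_closure))
    intro z hz hzN
    exact hc.subset_connectedComponentIn (Or.inl hr)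
      (union_subset hRN fun z hz => hz.2) (Or.inr ⟨hz, hzN⟩)
  have hΩN : Ω ⊆ Nᶜ := connectedComponentIn_subset _ _
  have hΩo : IsOpen Ω := hNcl.isOpen_compl.connectedComponentIn
  have hΩc : IsPreconnected Ω := isPreconnected_connectedComponentIn
  have hfill : IsPreconnected Ωᶜ := isPreconnected_compl_component hNcl hN.2.isPreconnected r
  have hXJ : ∀ x, Subtype.val '' X x ⊆ frontier R := by
    rintro x _ ⟨z, -, rfl⟩
    exact hAJ z.2
  have hval : ∀ K : Set A, IsClosed K → IsClosed (Subtype.val '' K : Set S2) := fun K hK =>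
    hAcl.isClosedEmbedding_subtypeVal.isClosedMap _ hK
  -- The part of the domain `Ω` left over by `X x`. It contains `R` and, by Janiszewski's theorem,
  -- it is disconnected.
  let O : A → Set S2 := fun x => (Ωᶜ ∪ Subtype.val '' X x)ᶜ
  have hOo : ∀ x, IsOpen (O x) := fun x =>
    (hΩo.isClosed_compl.union (hval _ (hXcl x))).isOpen_compl
  have hrO : ∀ x, R ⊆ O x := by
    rintro x z hz (h | h)
    · exact h (hRΩ hz)
    · exact hRJ z hz (hXJ x h)
  have hOΩ : ∀ x, O x ⊆ Ω := fun x z hz => by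
    by_contra h
    exact hz (Or.inl h)
  have hnc : ∀ x, ¬ IsPreconnected (O x) := by
    intro x
    refine janiszewski_sphere (P := Subtype.val '' (X x ∩ P)) (P' := Subtype.val '' (X x ∩ P'))
      hΩo.isClosed_compl hfill (hval _ (hXcl x)) ((hXc x).image _ continuous_subtype_val.continuousOn)
      (hval _ ((hXcl x).inter hP)) (hval _ ((hXcl x).inter hP')) ((hXP x).image _)
      ((hXP' x).image _) ?_ ?_ ⟨r, hrO x hr⟩
    · exact (disjoint_image_iff Subtype.val_injective).2
        (hPd.mono inter_subset_right inter_subset_right)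
    · rw [← image_union, ← inter_union_distrib_left, hPP]
      ext z
      constructor
      · rintro ⟨hz, y, hy, rfl⟩
        refine ⟨y, ⟨hy, ?_⟩, rfl⟩
        by_contra hyN
        exact hz (hJΩ _ (hAJ y.2) hyN)
      · rintro ⟨y, ⟨hy, hyN⟩, rfl⟩
        exact ⟨fun h => hΩN h hyN, y, hy, rfl⟩
  have hw : ∀ x, ∃ w ∈ O x, r ∉ connectedComponentIn (O x) w := by
    intro x
    by_contra hcon
    push Not at hcon
    refine hnc x (isPreconnected_of_forall r fun w hw => ?_)
    exact ⟨connectedComponentIn (O x) w, connectedComponentIn_subset _ _, hcon w hw,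
      mem_connectedComponentIn hw, isPreconnected_connectedComponentIn⟩
  choose w hwO hwr using hw
  -- A component of `O x` other than the one that contains `R`. It stays away from `closure R`,
  -- hence from all the sets `X y`.
  let W : A → Set S2 := fun x => connectedComponentIn (O x) (w x)
  have hWo : ∀ x, IsOpen (W x) := fun x => (hOo x).connectedComponentIn
  have hWc : ∀ x, IsPreconnected (W x) := fun x => isPreconnected_connectedComponentIn
  have hWJ : ∀ x, Disjoint (W x) (closure R) := by
    intro x
    refine Disjoint.closure_right ?_ (hWo x)
    rw [Set.disjoint_left]
    intro z hz hzR
    have : R ⊆ connectedComponentIn (O x) z := hRc.subset_connectedComponentIn hzR (hrO x)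
    rw [← connectedComponentIn_eq hz] at this
    exact hwr x (this hr)
  have hWO : ∀ x y, W x ⊆ O y := by
    rintro x y z hz (h | h)
    · exact h (hOΩ x (connectedComponentIn_subset _ _ hz))
    · exact Set.disjoint_left.1 (hWJ x) hz (frontier_subset_closure (hXJ y h))
  have hWsub : ∀ x y z, z ∈ W x → z ∈ W y → W x ⊆ W y := by
    intro x y z hzx hzy
    have := (hWc x).subset_connectedComponentIn hzx (hWO x y)
    rwa [← connectedComponentIn_eq hzy] at this
  have hWd : ∀ x y, Disjoint (X x) (X y) → Disjoint (W x) (W y) := by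
    intro x y hd
    rw [Set.disjoint_left]
    intro z hzx hzy
    have e : W x = W y := (hWsub x y z hzx hzy).antisymm (hWsub y x z hzy hzx)
    -- A common domain would be relatively clopen in `Ω`.
    refine hwr x (hΩc.subset_of_closure_inter_subset (hWo x)
      ⟨w x, hOΩ x (hwO x), mem_connectedComponentIn (hwO x)⟩ ?_ (hRΩ hr))
    rintro q ⟨hq, hqΩ⟩
    by_cases hqx : q ∈ Subtype.val '' X x
    · have hqy : q ∈ O y := by
        rintro (h | h)
        · exact h hqΩ
        · exact Set.disjoint_left.1 ((disjoint_image_iff Subtype.val_injective).2 hd) hqx h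
      rw [e] at hq ⊢
      exact closure_component_inter_s14 hq hqy (hwO y)
    · refine closure_component_inter_s14 hq ?_ (hwO x)
      rintro (h | h)
      · exact h hqΩ
      · exact hqx h
  let s : Setoid A :=
    { r := JoinedProper
      iseqv :=
        { refl := fun x => ⟨X x, hXcl x, hXc x, hXne x, hxX x, hxX x⟩
          symm := JoinedProper.symm
          trans := fun h h' => JoinedProper.trans hY h h' } }
  have hcount : Countable (Quotient s) := by
    refine Pairwise.countable_of_isOpen_disjoint (s := fun q : Quotient s => W q.out) ?_
      (fun q => hWo _) fun q => ⟨w _, mem_connectedComponentIn (hwO _)⟩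
    intro p q hpq
    refine hWd _ _ (Set.disjoint_left.2 fun z hzp hzq => hpq ?_)
    have h1 : JoinedProper p.out z := ⟨X _, hXcl _, hXc _, hXne _, hxX _, hzp⟩
    have h2 : JoinedProper z q.out := ⟨X _, hXcl _, hXc _, hXne _, hzq, hxX _⟩
    exact Quotient.out_equiv_out.1 (h1.trans hY h2)
  have hm : IsMeagre (⋃ q : Quotient s, {y | JoinedProper q.out y}) :=
    isMeagre_iUnion fun q => isMeagre_composant hY _
  refine not_isMeagre_of_isOpen isOpen_univ univ_nonempty (hm.mono fun y _ => ?_)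
  refine mem_iUnion.2 ⟨(Quotient.mk s y : Quotient s), ?_⟩
  exact Quotient.mk_out (s := s) y

end Region

/-! ### Images of subcontinua under the map -/

section Image

/-- Images of nowhere dense sets are nowhere dense, up to the finitely many branch values: a piece
`B` of the ambient set `J` that is relatively open somewhere is not covered by the image of a
proper subcontinuum `P` of an indecomposable continuum `A`. By Baire, some `f '' (P ∩ V)` with `f`
injective near `V` would contain a relatively open set, whose preimage would be relatively open and
contained in `P`. -/
lemma not_subset_image {f : S2 → S2} (hf : Continuous f) {E : Set S2} (hE : E.Finite)
    (hcov : IsCoveringMapOn f Eᶜ) {J A B F P : Set S2} (hJf : ∀ z ∈ J, f z ∈ J)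
    (hA : IsIndecomposable A) (hAJ : A ⊆ J) (hB : IsContinuum B) (hBn : B.Nontrivial)
    (hF : IsClosed F) (hJ : J ⊆ B ∪ F) (hBF : ¬ B ⊆ F) (hP : IsContinuum P) (hPA : P ⊆ A)
    (hPne : P ≠ A) : ¬ B ⊆ f '' P := by
  intro hsub
  have : CompactSpace A := isCompact_iff_compactSpace.1 hA.1.1
  have : PreconnectedSpace A := isPreconnected_iff_preconnectedSpace.1 hA.1.2.isPreconnected
  have : CompactSpace B := isCompact_iff_compactSpace.1 hB.1
  have : PreconnectedSpace B := isPreconnected_iff_preconnectedSpace.1 hB.2.isPreconnected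
  have : Nontrivial B := hBn.coe_sort
  have hBcl : IsClosed B := hB.1.isClosed
  have hloc : ∀ y ∈ f ⁻¹' Eᶜ, ∃ U V : Set S2, IsOpen U ∧ IsClosed V ∧ V ∈ 𝓝 y ∧ V ⊆ U ∧
      InjOn f U := by
    intro y hy
    obtain ⟨e, hye, rfl⟩ := hcov.isLocalHomeomorphOn y hy
    obtain ⟨V, hV, hVc, hVU⟩ := exists_mem_nhds_isClosed_subset (e.open_source.mem_nhds hye)
    exact ⟨e.source, V, e.open_source, hVc, hV, hVU, e.injOn⟩
  choose! U V hUo hVcl hVn hVU hinj using hloc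
  obtain ⟨T, hTs, hTc, hTcov⟩ := TopologicalSpace.countable_cover_nhdsWithin
    (s := f ⁻¹' Eᶜ) (f := V) fun y hy => mem_nhdsWithin_of_mem_nhds (hVn y hy)
  -- An open set whose trace on `J` is nonempty and lies in one of the closed pieces.
  have key : ∀ D : Set S2, (∃ O, IsOpen O ∧ (O ∩ B).Nonempty ∧ O ∩ J ⊆ B ∧ O ∩ B ⊆ D) ∨
      Fᶜ ∩ B ∩ D ⊆ Subtype.val '' frontier (Subtype.val ⁻¹' D : Set B) := by
    intro D
    by_cases hD : (interior (Subtype.val ⁻¹' D : Set B) ∩ Subtype.val ⁻¹' Fᶜ).Nonempty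
    · left
      obtain ⟨z, hz, hzF⟩ := hD
      obtain ⟨O, hO, hOe⟩ := isOpen_induced_iff.1 (isOpen_interior (s := (Subtype.val ⁻¹' D : Set B)))
      refine ⟨O ∩ Fᶜ, hO.inter hF.isOpen_compl, ⟨z, ⟨?_, hzF⟩, z.2⟩, ?_, ?_⟩
      · exact (hOe ▸ hz : z ∈ Subtype.val ⁻¹' O)
      · rintro y ⟨⟨-, hyF⟩, hyJ⟩
        exact (hJ hyJ).resolve_right hyF
      · rintro y ⟨⟨hyO, -⟩, hyB⟩
        have : (⟨y, hyB⟩ : B) ∈ interior (Subtype.val ⁻¹' D : Set B) := by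
          rw [← hOe]
          exact hyO
        have h2 : (⟨y, hyB⟩ : B) ∈ (Subtype.val ⁻¹' D : Set B) := interior_subset this
        exact h2
    · right
      rintro z ⟨⟨hzF, hzB⟩, hzD⟩
      refine ⟨⟨z, hzB⟩, ⟨subset_closure hzD, fun h => hD ⟨_, h, hzF⟩⟩, rfl⟩
  -- The first alternative of `key` fails for single points and for the images `f '' (P ∩ V y)`.
  have hpt : ∀ v, ¬ ∃ O, IsOpen O ∧ (O ∩ B).Nonempty ∧ O ∩ J ⊆ B ∧ O ∩ B ⊆ {v} := by
    rintro v ⟨O, hO, ⟨z, hzO, hzB⟩, -, hOv⟩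
    have e : (Subtype.val ⁻¹' O : Set B) = {⟨z, hzB⟩} := by
      ext y
      constructor
      · intro hy
        exact Subtype.ext ((hOv ⟨hy, y.2⟩ : (y : S2) = v).trans (hOv ⟨hzO, hzB⟩ : z = v).symm)
      · rintro rfl
        exact hzO
    have hcl : IsClopen ({⟨z, hzB⟩} : Set B) :=
      ⟨isClosed_singleton, e ▸ hO.preimage continuous_subtype_val⟩
    have hu := hcl.eq_univ ⟨_, rfl⟩
    obtain ⟨y, hy⟩ := exists_ne (⟨z, hzB⟩ : B)
    exact hy (hu ▸ mem_univ y : y ∈ ({⟨z, hzB⟩} : Set B))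
  have himg : ∀ y ∈ T, ¬ ∃ O, IsOpen O ∧ (O ∩ B).Nonempty ∧ O ∩ J ⊆ B ∧
      O ∩ B ⊆ f '' (P ∩ V y) := by
    rintro y hy ⟨O, hO, ⟨z, hzO, hzB⟩, hOJ, hOD⟩
    have hys := hTs hy
    obtain ⟨p, ⟨hpP, hpV⟩, rfl⟩ := hOD ⟨hzO, hzB⟩
    have hPcl : IsClosed (Subtype.val ⁻¹' P : Set A) :=
      hP.1.isClosed.preimage continuous_subtype_val
    have hPc : IsPreconnected (Subtype.val ⁻¹' P : Set A) := by
      refine (Topology.IsInducing.subtypeVal.isPreconnected_image).1 ?_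
      rw [Subtype.image_preimage_coe, inter_eq_right.2 hPA]
      exact hP.2.isPreconnected
    have hPu : (Subtype.val ⁻¹' P : Set A) ≠ univ := fun h => hPne <| hPA.antisymm fun z hz =>
      (h ▸ mem_univ (⟨z, hz⟩ : A) : (⟨z, hz⟩ : A) ∈ Subtype.val ⁻¹' P)
    have hInt := (indecSpace_of_isIndecomposable hA).interior_eq_empty hPcl hPc hPu
    have hWo : IsOpen (Subtype.val ⁻¹' (U y ∩ f ⁻¹' O) : Set A) :=
      ((hUo y hys).inter (hO.preimage hf)).preimage continuous_subtype_val
    have hWP : (Subtype.val ⁻¹' (U y ∩ f ⁻¹' O) : Set A) ⊆ Subtype.val ⁻¹' P := by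
      rintro q ⟨hqU, hqO⟩
      have hqJ : f q ∈ J := hJf q (hAJ q.2)
      obtain ⟨p', ⟨hpP', hpV'⟩, hpq⟩ := hOD ⟨hqO, hOJ ⟨hqO, hqJ⟩⟩
      have := hinj y hys (hVU y hys hpV') hqU hpq
      change (q : S2) ∈ P
      rw [← this]
      exact hpP'
    have : (⟨p, hPA hpP⟩ : A) ∈ interior (Subtype.val ⁻¹' P : Set A) :=
      interior_maximal hWP hWo ⟨hVU y hys hpV, hzO⟩
    rw [hInt] at this
    exact this
  have hnd : ∀ D : Set S2, IsClosed D →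
      IsMeagre (frontier (Subtype.val ⁻¹' D : Set B)) := fun D hD => by
    refine (isClosed_frontier.isNowhereDense_iff.2 (interior_frontier ?_)).isMeagre
    exact hD.preimage continuous_subtype_val
  have hVc : ∀ y ∈ T, IsClosed (f '' (P ∩ V y)) := fun y hy =>
    ((hP.1.inter_right (hVcl y (hTs hy))).image hf).isClosed
  have hm : IsMeagre ((⋃ v ∈ E, frontier (Subtype.val ⁻¹' {v} : Set B)) ∪
      ⋃ y ∈ T, frontier (Subtype.val ⁻¹' (f '' (P ∩ V y)) : Set B)) :=
    (isMeagre_biUnion hE.countable fun v _ => hnd _ isClosed_singleton).union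
      (isMeagre_biUnion hTc fun y hy => hnd _ (hVc y hy))
  obtain ⟨b, hbB, hbF⟩ := not_subset.1 hBF
  refine not_isMeagre_of_isOpen (hF.isOpen_compl.preimage continuous_subtype_val)
    (⟨⟨b, hbB⟩, hbF⟩ : (Subtype.val ⁻¹' Fᶜ : Set B).Nonempty) (hm.mono ?_)
  intro z hzF
  have huse : ∀ D : Set S2, (z : S2) ∈ D →
      (¬ ∃ O, IsOpen O ∧ (O ∩ B).Nonempty ∧ O ∩ J ⊆ B ∧ O ∩ B ⊆ D) →
      z ∈ frontier (Subtype.val ⁻¹' D : Set B) := by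
    intro D hzD hno
    obtain ⟨y, hy, hyz⟩ := (key D).resolve_left hno ⟨⟨hzF, z.2⟩, hzD⟩
    exact Subtype.val_injective hyz ▸ hy
  obtain ⟨p, hpP, hpz⟩ := hsub z.2
  by_cases hzE : (z : S2) ∈ E
  · exact Or.inl (mem_biUnion hzE (huse _ rfl (hpt _)))
  · obtain ⟨y, hy, hpy⟩ := mem_iUnion₂.1 (hTcov (show p ∈ f ⁻¹' Eᶜ from fun h => hzE (hpz ▸ h)))
    exact Or.inr (mem_biUnion hy (huse _ ⟨p, ⟨hpP, hpy⟩, hpz⟩ (himg y hy)))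

end Image

/-- If `{A 1, …, A n}` is an irreducible decomposition of the Julia set of a
polynomial-like mapping of degree `d ≥ 2` and a point `x ∈ A j` has image `f x`
in an internal composant of `A k`, then `f '' (A j) ⊆ A k`. -/
theorem image_of_piece_subset
    (f : S2 → S2) (d : ℕ) (R : Set S2) (c : S2)
    (hd : 2 ≤ d) (hf : IsPolynomialLike f d R c)
    {n : ℕ} (A : Fin n → Set S2)
    (hA : IsIrreducibleDecomposition (frontier R) A) :
    ∀ j k : Fin n, ∀ x ∈ A j,
      (∃ C, IsInternalComposant (A k) C ∧ f x ∈ C) → f '' (A j) ⊆ A k := by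
  obtain ⟨⟨hfc, Crit, hCrit, -, hcov, -⟩, hRo, hRc, -, -, hinv, -, -⟩ := hf
  obtain ⟨hind, hun, hirr⟩ := hA
  rintro j k x hx ⟨C, ⟨⟨p₀, hp₀, rfl⟩, hInt⟩, K, ⟨hK, hKA, hKne, hpK⟩, hxK⟩
  by_contra hcon
  obtain ⟨_, ⟨y, hy, rfl⟩, hyk⟩ := not_subset.1 hcon
  have hJf : ∀ z ∈ frontier R, f z ∈ frontier R := by
    intro z hz
    rw [hRo.frontier_eq] at hz ⊢
    refine ⟨?_, fun h => hz.2 (by rw [← hinv]; exact h)⟩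
    have hmaps : MapsTo f R R := fun w hw => by
      have : w ∈ f ⁻¹' R := hinv.symm ▸ hw
      exact this
    exact hmaps.closure hfc hz.1
  have hAcl : ∀ i, IsClosed (A i) := fun i => (hind i).1.1.1.isClosed
  -- The union of the other pieces.
  have hFcl : IsClosed (⋃ i ∈ ({k}ᶜ : Set (Fin n)), A i) :=
    (toFinite _).isClosed_biUnion fun i _ => hAcl i
  have hJF : frontier R ⊆ A k ∪ ⋃ i ∈ ({k}ᶜ : Set (Fin n)), A i := by
    intro z hz
    rw [hun] at hz
    obtain ⟨i, hi⟩ := mem_iUnion.1 hz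
    by_cases hik : i = k
    · exact Or.inl (hik ▸ hi)
    · exact Or.inr (mem_biUnion (show i ∈ ({k}ᶜ : Set (Fin n)) from hik) hi)
  have hAkn : (A k).Nontrivial := by
    obtain ⟨z, hz, hzK⟩ := not_subset.1 fun h => hKne (hKA.antisymm h)
    exact ⟨z, hz, p₀, hp₀, fun h => hzK (h ▸ hpK)⟩
  -- A proper subcontinuum of `A j` through `x` whose image leaves `A k`.
  obtain ⟨P, hP, hPA, hPne, hxP, w, hwP, hwk⟩ : ∃ P, IsContinuum P ∧ P ⊆ A j ∧ P ≠ A j ∧ x ∈ P ∧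
      ∃ w ∈ P, f w ∉ A k := by
    have : CompactSpace (A j) := isCompact_iff_compactSpace.1 (hind j).1.1.1
    have : PreconnectedSpace (A j) :=
      isPreconnected_iff_preconnectedSpace.1 (hind j).1.1.2.isPreconnected
    have : Nontrivial (A j) := by
      refine ⟨⟨x, hx⟩, ⟨y, hy⟩, fun h => hyk ?_⟩
      have e : x = y := congrArg Subtype.val h
      rw [← e]
      exact hKA hxK
    obtain ⟨w, hwO, M, hM, hMc, hMne, hxM, hwM⟩ := JoinedProper.dense (⟨x, hx⟩ : A j)
      (((hAcl k).isOpen_compl.preimage hfc).preimage continuous_subtype_val)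
      ⟨⟨y, hy⟩, hyk⟩
    refine ⟨Subtype.val '' M, ⟨hM.isCompact.image continuous_subtype_val,
      ⟨x, _, hxM, rfl⟩, hMc.image _ continuous_subtype_val.continuousOn⟩, ?_, fun h => hMne ?_,
      ⟨_, hxM, rfl⟩, w, ⟨w, hwM, rfl⟩, hwO⟩
    · rintro _ ⟨z, -, rfl⟩
      exact z.2
    · refine eq_univ_of_forall fun z => ?_
      obtain ⟨z', hz', e⟩ := (h.symm ▸ z.2 : (z : S2) ∈ Subtype.val '' M)
      exact Subtype.val_injective e ▸ hz'
  have hnot : ¬ A k ⊆ f '' P :=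
    not_subset_image hfc (hCrit.image f) hcov hJf (hind j).1 (hind j).2 (hind k).1.1 hAkn hFcl hJF
      (hirr k) hP hPA hPne
  -- The component of `f x` in `f '' P ∩ A k` reaches another piece `A i`.
  obtain ⟨q, i, hik, hqi, hqC⟩ : ∃ q i, i ≠ k ∧ q ∈ A i ∧ q ∈ composant (A k) p₀ := by
    have hLc : IsCompact (f '' P) := hP.1.image hfc
    have : CompactSpace (f '' P) := isCompact_iff_compactSpace.1 hLc
    have : PreconnectedSpace (f '' P) := isPreconnected_iff_preconnectedSpace.1
      (hP.2.isPreconnected.image f hfc.continuousOn)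
    have hZ : IsClosed (Subtype.val ⁻¹' A k : Set (f '' P)) :=
      (hAcl k).preimage continuous_subtype_val
    have hxL : f x ∈ f '' P := mem_image_of_mem f hxP
    have hxZ : (⟨f x, hxL⟩ : f '' P) ∈ (Subtype.val ⁻¹' A k : Set (f '' P)) := hKA hxK
    have hZne : (Subtype.val ⁻¹' A k : Set (f '' P)) ≠ univ := fun h =>
      hwk (h ▸ mem_univ (⟨f w, mem_image_of_mem f hwP⟩ : f '' P) :
        (⟨f w, mem_image_of_mem f hwP⟩ : f '' P) ∈ Subtype.val ⁻¹' A k)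
    obtain ⟨q, hq, hqcl⟩ := boundary_bumping_s14 hZ hxZ hZne
    have hqF : (q : S2) ∈ ⋃ i ∈ ({k}ᶜ : Set (Fin n)), A i := by
      refine closure_minimal (t := Subtype.val ⁻¹' ⋃ i ∈ ({k}ᶜ : Set (Fin n)), A i) ?_
        (hFcl.preimage continuous_subtype_val) hqcl
      rintro ⟨_, z, hzP, rfl⟩ hz
      exact (hJF (hJf z ((hind j).2 (hPA hzP)))).resolve_left hz
    obtain ⟨i, hik, hqi⟩ := mem_iUnion₂.1 hqF
    set D := connectedComponentIn (Subtype.val ⁻¹' A k : Set (f '' P)) ⟨f x, hxL⟩ with hD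
    have hDx : f x ∈ Subtype.val '' D := ⟨_, mem_connectedComponentIn hxZ, rfl⟩
    have hDcomp : IsCompact (Subtype.val '' D) :=
      (isClosed_connectedComponentIn' hZ _).isCompact.image continuous_subtype_val
    have hDc : IsPreconnected (Subtype.val '' D) :=
      isPreconnected_connectedComponentIn.image _ continuous_subtype_val.continuousOn
    have hDA : Subtype.val '' D ⊆ A k := image_subset_iff.2 (connectedComponentIn_subset _ _)
    have hDne : Subtype.val '' D ≠ A k := by
      intro h
      refine hnot (h ▸ ?_)
      rintro _ ⟨z, -, rfl⟩
      exact z.2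
    refine ⟨q, i, hik, hqi, K ∪ Subtype.val '' D, ⟨⟨hK.1.union hDcomp, ⟨p₀, Or.inl hpK⟩,
      hK.2.isPreconnected.union _ hxK hDx hDc⟩, union_subset hKA hDA, fun h => ?_, Or.inl hpK⟩,
      Or.inr ⟨q, hq, rfl⟩⟩
    exact (hind k).1.2 ⟨K, _, hK, hKA, hKne, ⟨hDcomp, ⟨_, hDx⟩, hDc⟩, hDA, hDne, h⟩
  have hnsub : ∀ a b : Fin n, a ≠ b → ¬ A a ⊆ A b := fun a b hab h =>
    hirr a (h.trans (subset_biUnion_of_mem (u := A) (show b ∈ ({a}ᶜ : Set (Fin n)) from hab.symm)))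
  have hall := hInt (A i) (hind i).1.1 ⟨q, hqi, hqC⟩ (hnsub i k hik)
  refine no_hit hRo hRc.isPreconnected hRc.nonempty (hind k).1 (hind k).2 hAkn (hind i).1.1
    (hind i).2 (hnsub k i hik.symm) fun z hz => ?_
  obtain ⟨u, hui, M, ⟨hM, hMA, hMne, hzM⟩, huM⟩ := hall _ ⟨z, hz, rfl⟩
  exact ⟨M, hM, hMA, hMne, hzM, u, huM, hui⟩
end

section
/- Let f : S² → S² be a continuous open map and L ⊆ S² a compact set. If U is a connected component of S² \ f⁻¹(L), then f(U) is a connected component of S² \ L. -/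
/-!
The image `f '' U` is connected and misses `L`, so it lies in a single component `V` of `Lᶜ`.
It is open, because `U` is open (the sphere is locally connected) and `f` is open. It is also
relatively closed in `V`: by compactness `closure (f '' U) ⊆ f '' closure U`, and a point of
`closure U` outside `f ⁻¹' L` already belongs to the component `U`. Connectedness of `V` then
gives `f '' U = V`.
-/

open Set Metric Topology Filter

/-- A connected component of a set `F` is relatively closed in `F`. -/
theorem closure_component_inter_subset {X : Type*} [TopologicalSpace X] {F : Set X} {x : X}
    (hx : x ∈ F) : closure (connectedComponentIn F x) ∩ F ⊆ connectedComponentIn F x := by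
  rintro z ⟨hz, hzF⟩
  have hpre : IsPreconnected (insert z (connectedComponentIn F x)) :=
    isPreconnected_connectedComponentIn.subset_closure (subset_insert _ _)
      (insert_subset hz subset_closure)
  exact hpre.subset_connectedComponentIn (mem_insert_of_mem _ (mem_connectedComponentIn hx))
    (insert_subset hzF (connectedComponentIn_subset F x)) (mem_insert _ _)

/-- A continuous open map from a compact locally connected space to a Hausdorff space maps
components of the complement of the preimage of a closed set onto components. -/
theorem image_connectedComponentIn_preimage_compl {X Y : Type*} [TopologicalSpace X]
    [TopologicalSpace Y] [CompactSpace X] [LocallyConnectedSpace X] [T2Space Y]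
    {f : X → Y} (hf : Continuous f) (hfo : IsOpenMap f) {L : Set Y} (hL : IsClosed L)
    {x : X} (hx : x ∈ (f ⁻¹' L)ᶜ) :
    f '' connectedComponentIn (f ⁻¹' L)ᶜ x = connectedComponentIn Lᶜ (f x) := by
  have hxU := mem_connectedComponentIn hx
  have hUF := connectedComponentIn_subset (f ⁻¹' L)ᶜ x
  have hopen : IsOpen (connectedComponentIn (f ⁻¹' L)ᶜ x) :=
    (hL.preimage hf).isOpen_compl.connectedComponentIn
  apply Subset.antisymm
  · exact (isPreconnected_connectedComponentIn.image f hf.continuousOn).subset_connectedComponentIn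
      (mem_image_of_mem f hxU) (image_subset_iff.2 hUF)
  · refine isPreconnected_connectedComponentIn.subset_of_closure_inter_subset (hfo _ hopen)
      ⟨f x, mem_connectedComponentIn hx, mem_image_of_mem f hxU⟩ ?_
    rintro y ⟨hy, hyV⟩
    have hclosed : IsClosed (f '' closure (connectedComponentIn (f ⁻¹' L)ᶜ x)) :=
      hf.isClosedMap _ isClosed_closure
    obtain ⟨z, hz, rfl⟩ := closure_minimal (image_mono subset_closure) hclosed hy
    exact mem_image_of_mem f
      (closure_component_inter_subset hx ⟨hz, connectedComponentIn_subset Lᶜ (f x) hyV⟩)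

/-- If `f : S² → S²` is continuous and open, `L ⊆ S²` is compact, and `U` is a
connected component of `S² \ f⁻¹(L)`, then `f '' U` is a connected component of
`S² \ L`. -/
theorem image_of_component_is_component
    (f : S2 → S2) (hf : Continuous f) (hfo : IsOpenMap f)
    (L : Set S2) (hL : IsCompact L) (U : Set S2)
    (hU : ∃ x ∈ (f ⁻¹' L)ᶜ, U = connectedComponentIn (f ⁻¹' L)ᶜ x) :
    ∃ y ∈ Lᶜ, f '' U = connectedComponentIn Lᶜ y := by
  obtain ⟨x, hx, rfl⟩ := hU
  -- Stereographic charts make the sphere a 2-manifold, hence locally connected.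
  have : Fact (Module.finrank ℝ (EuclideanSpace ℝ (Fin 3)) = 2 + 1) := ⟨by simp⟩
  have : LocallyConnectedSpace S2 :=
    ChartedSpace.locallyConnectedSpace (EuclideanSpace ℝ (Fin 2)) S2
  exact ⟨f x, hx, image_connectedComponentIn_preimage_compl hf hfo hL.isClosed hx⟩
end

section
/- Let f : S² → S² be a polynomial-like mapping of degree d ≥ 2 and suppose that {A_1, …, A_n} is an irreducible decomposition of J(f). For every i = 1, …, n, let U_i denote the connected component of S² \ A_i containing R(f), and set Â_i = S² \ U_i. Then: (1) Â_i is a nonseparating subcontinuum of the filled Julia set Ĵ(f); and (2) if f⁻¹(A_j) = A_k, then f⁻¹(Â_j) = Â_k. -/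
/-! Each `U i` is a component of the open set `(A i)ᶜ` of the sphere. For the first claim, the
complement of `U i` is `A i` together with the other components of `(A i)ᶜ`; the closure of each of
them meets `A i`, because the sphere is connected, so the complement is connected
(`isConnected_compl_connectedComponentIn`).

For the second claim, `f` maps `U k` into `U j` because `f '' U k` is a connected subset of
`(A j)ᶜ` meeting `R`. Conversely, let `V` be a component of `f ⁻¹' U j`. By
`component_preimage_meets`, `V` meets `f ⁻¹' R = R`, so it contains the connected set `R`, and
therefore `V ⊆ U k`. That lemma rests on the fact that, with `F` the finite set of critical values,
`f '' V \ F` is both open and closed in `U j \ F`, and `U j \ F` is connected since finitely many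
points do not disconnect an open connected subset of a surface. If `f '' V` were contained in `F`,
then `V` would be open and closed, hence the whole sphere.
-/

open Set Metric Topology Filter

/-! ### Finite sets do not disconnect open connected subsets of the sphere -/

instance : LocallyConnectedSpace S2 :=
  ChartedSpace.locallyConnectedSpace (EuclideanSpace ℝ (Fin 2)) S2

instance : PreconnectedSpace S2 := by
  have h : 1 < Module.rank ℝ (EuclideanSpace ℝ (Fin 3)) := by
    rw [← Module.finrank_eq_rank, finrank_euclideanSpace_fin]
    norm_num
  exact isPreconnected_iff_preconnectedSpace.1
    (isConnected_sphere h (0 : EuclideanSpace ℝ (Fin 3)) zero_le_one).isPreconnected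

/-- In a chart, small punctured discs around a point are connected. -/
lemma exists_isPreconnected_punctured_nhd (p : S2) {N : Set S2} (hN : IsOpen N) (hp : p ∈ N) :
    ∃ W ⊆ N, IsOpen W ∧ p ∈ W ∧ IsPreconnected (W \ {p}) := by
  let e : OpenPartialHomeomorph S2 (EuclideanSpace ℝ (Fin 2)) := chartAt _ p
  have hpe : p ∈ e.source := mem_chart_source _ p
  have ho : IsOpen (e.target ∩ e.symm ⁻¹' N) := e.isOpen_inter_preimage_symm hN
  have hmem : e p ∈ e.target ∩ e.symm ⁻¹' N :=
    ⟨e.map_source hpe, by rw [mem_preimage, e.left_inv hpe]; exact hp⟩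
  obtain ⟨ε, hε, hball⟩ := Metric.isOpen_iff.1 ho _ hmem
  have hrank : 1 < Module.rank ℝ (EuclideanSpace ℝ (Fin 2)) := by
    rw [← Module.finrank_eq_rank, finrank_euclideanSpace_fin]
    norm_num
  have hbt : ball (e p) ε ⊆ e.target := fun x hx => (hball hx).1
  refine ⟨e.symm '' ball (e p) ε, ?_, ?_, ?_, ?_⟩
  · rintro _ ⟨x, hx, rfl⟩
    exact (hball hx).2
  · exact e.symm.isOpen_image_of_subset_source isOpen_ball hbt
  · exact ⟨e p, mem_ball_self hε, e.left_inv hpe⟩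
  · let g := OpenPartialHomeomorph.univBall (e p) ε
    have hgs : g.source = univ := OpenPartialHomeomorph.univBall_source _ _
    have hgt : g.target = ball (e p) ε := OpenPartialHomeomorph.univBall_target _ hε
    have hg0 : g 0 = e p := OpenPartialHomeomorph.univBall_apply_zero _ _
    have hgm : ∀ x, g x ∈ ball (e p) ε := fun x => hgt ▸ g.map_source (hgs ▸ mem_univ x)
    have hgc : Continuous g := OpenPartialHomeomorph.continuous_univBall _ _
    -- The punctured disc is parametrized by the punctured plane.
    have himg : e.symm '' ball (e p) ε \ {p} = (fun x => e.symm (g x)) '' {0}ᶜ := by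
      ext y
      constructor
      · rintro ⟨⟨x, hx, rfl⟩, hne⟩
        have hx' : x ∈ g.target := hgt ▸ hx
        refine ⟨g.symm x, fun h0 => hne ?_, by simp only [g.right_inv hx']⟩
        have : x = e p := by rw [← g.right_inv hx', mem_singleton_iff.1 h0, hg0]
        rw [this, mem_singleton_iff, e.left_inv hpe]
      · rintro ⟨x, hx, rfl⟩
        refine ⟨⟨g x, hgm x, rfl⟩, fun h => hx ?_⟩
        have h1 : e.symm (g x) = p := h
        have h2 : g x = g 0 := by rw [hg0, ← h1, e.right_inv (hbt (hgm x))]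
        exact g.injOn (hgs ▸ mem_univ x) (hgs ▸ mem_univ 0) h2
    rw [himg]
    exact (isConnected_compl_singleton_of_one_lt_rank hrank 0).isPreconnected.image _
      (e.continuousOn_symm.comp_continuous hgc fun x => hbt (hgm x)).continuousOn

lemma isPreconnected_diff_singleton_s19 {U : Set S2} (hU : IsOpen U) (hc : IsPreconnected U) (p : S2) :
    IsPreconnected (U \ {p}) := by
  by_cases hp : p ∈ U
  swap
  · rwa [sdiff_singleton_eq_self hp]
  obtain ⟨W, hWU, hWo, hpW, hWc⟩ := exists_isPreconnected_punctured_nhd p hU hp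
  -- One side of a separation of `U \ {p}` absorbs the punctured disc `W \ {p}`, and adding `p`
  -- to that side produces a separation of `U`.
  have key : ∀ u v : Set S2, IsOpen u → IsOpen v → U \ {p} ⊆ u ∪ v →
      (U \ {p}) ∩ (u ∩ v) = ∅ → W \ {p} ⊆ u → U \ {p} ⊆ u ∨ U \ {p} ⊆ v := by
    intro u v hu hv huv hd hWu
    have hne : ∀ x ∈ U, x ≠ p → x ∈ u → x ∉ v := fun x hx hxp hxu hxv =>
      (hd.subset (⟨⟨hx, hxp⟩, hxu, hxv⟩ : x ∈ (U \ {p}) ∩ (u ∩ v))).elim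
    have hcover : U ⊆ (u ∪ W) ∪ (v \ {p}) := by
      intro x hx
      by_cases hxp : x = p
      · exact Or.inl (Or.inr (hxp ▸ hpW))
      · exact (huv ⟨hx, hxp⟩).elim (fun h => Or.inl (Or.inl h)) fun h => Or.inr ⟨h, hxp⟩
    have hdisj : U ∩ ((u ∪ W) ∩ (v \ {p})) = ∅ := by
      refine eq_empty_of_forall_notMem ?_
      rintro x ⟨hx, hxu | hxW, hxv, hxp⟩
      · exact hne x hx hxp hxu hxv
      · exact hne x hx hxp (hWu ⟨hxW, hxp⟩) hxv
    rcases isPreconnected_iff_subset_of_disjoint.1 hc (u ∪ W) (v \ {p}) (hu.union hWo)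
      (hv.sdiff isClosed_singleton) hcover hdisj with h | h
    · left
      rintro x ⟨hx, hxp⟩
      exact (h hx).elim id fun hxW => hWu ⟨hxW, hxp⟩
    · right
      rintro x ⟨hx, -⟩
      exact (h hx).1
  refine isPreconnected_iff_subset_of_disjoint.2 fun u v hu hv huv hd => ?_
  have hWp : W \ {p} ⊆ U \ {p} := sdiff_subset_sdiff_left hWU
  rcases isPreconnected_iff_subset_of_disjoint.1 hWc u v hu hv (hWp.trans huv)
    (subset_empty_iff.1 ((inter_subset_inter_left _ hWp).trans hd.subset)) with h | h
  · exact key u v hu hv huv hd h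
  · exact (key v u hv hu (by rwa [union_comm]) (by rwa [inter_comm v u]) h).symm

lemma isPreconnected_diff_finite {U F : Set S2} (hU : IsOpen U) (hc : IsPreconnected U)
    (hF : F.Finite) : IsPreconnected (U \ F) := by
  induction F, hF using Set.Finite.induction_on with
  | empty => simpa using hc
  | @insert p s _ hs ih =>
    have : U \ insert p s = (U \ s) \ {p} := by
      rw [sdiff_sdiff, union_singleton]
    rw [this]
    exact isPreconnected_diff_singleton_s19 (hU.sdiff hs.isClosed) ih p

/-- A nonempty open set is infinite, because points of the sphere are not isolated. -/
lemma exists_mem_diff_finite {U F : Set S2} (hU : IsOpen U) (hne : U.Nonempty)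
    (hF : F.Finite) : (U \ F).Nonempty := by
  by_contra h
  have hUF : U ⊆ F := sdiff_eq_empty.1 (not_nonempty_iff_eq_empty.1 h)
  obtain ⟨x, hx⟩ := hne
  have hop : IsOpen ({x} : Set S2) := by
    have : U \ (U \ {x}) = {x} := by
      rw [Set.sdiff_sdiff_right_self, inter_eq_right.2 (singleton_subset_iff.2 hx)]
    rw [← this]
    exact hU.sdiff ((hF.subset hUF).subset sdiff_subset).isClosed
  have := IsClopen.eq_univ ⟨isClosed_singleton, hop⟩ (singleton_nonempty x)
  have hneg : -x = x := this.symm.subset (mem_univ (-x))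
  exact ne_neg_of_mem_unit_sphere ℝ x hneg.symm

/-! ### Components of open sets and their complements -/

/-- A connected component of a set is closed relative to that set. -/
lemma closure_component_inter_s19 {X : Type*} [TopologicalSpace X] {G : Set X} {x : X} (hx : x ∈ G) :
    closure (connectedComponentIn G x) ∩ G ⊆ connectedComponentIn G x :=
  (isPreconnected_connectedComponentIn.subset_closure
    (subset_inter subset_closure (connectedComponentIn_subset _ _)) inter_subset_left)
    |>.subset_connectedComponentIn
      ⟨subset_closure (mem_connectedComponentIn hx), hx⟩ inter_subset_right

/-- The complement of a component of the complement of a closed connected set is connected: every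
other component accumulates on that set. -/
lemma isConnected_compl_connectedComponentIn {A : Set S2} (hA : IsClosed A) (hc : IsConnected A)
    (r : S2) : IsConnected (connectedComponentIn Aᶜ r)ᶜ := by
  obtain ⟨a, ha⟩ := hc.nonempty
  have hsub : A ⊆ (connectedComponentIn Aᶜ r)ᶜ :=
    subset_compl_comm.1 (connectedComponentIn_subset _ _)
  refine ⟨⟨a, hsub ha⟩, isPreconnected_of_forall a fun y hy => ?_⟩
  by_cases hyA : y ∈ A
  · exact ⟨A, hsub, ha, hyA, hc.isPreconnected⟩
  set V := connectedComponentIn Aᶜ y with hV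
  have hyV : y ∈ V := mem_connectedComponentIn hyA
  have hVr : V ⊆ (connectedComponentIn Aᶜ r)ᶜ := by
    intro z hz hzr
    apply hy
    rw [connectedComponentIn_eq hzr, ← connectedComponentIn_eq hz]
    exact hyV
  have hVA : closure V ⊆ V ∪ A := fun z hz => by
    by_cases hzA : z ∈ A
    · exact Or.inr hzA
    · exact Or.inl (closure_component_inter_s19 hyA ⟨hz, hzA⟩)
  -- Otherwise `V` would be a nonempty clopen subset of the sphere disjoint from `A`.
  have hmeet : (closure V ∩ A).Nonempty := by
    by_contra h
    have hcl : closure V ⊆ V := fun z hz => (hVA hz).elim id fun hzA => (h ⟨z, hz, hzA⟩).elim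
    have hu : V = univ := IsClopen.eq_univ
      ⟨closure_subset_iff_isClosed.1 hcl, hA.isOpen_compl.connectedComponentIn⟩ ⟨y, hyV⟩
    exact connectedComponentIn_subset Aᶜ y (hu.symm.subset (mem_univ a)) ha
  obtain ⟨z, hzV, hzA⟩ := hmeet
  refine ⟨closure V ∪ A, union_subset (hVA.trans (union_subset hVr hsub)) hsub, Or.inr ha,
    Or.inl (subset_closure hyV), ?_⟩
  exact isPreconnected_connectedComponentIn.closure.union z hzV hzA hc.isPreconnected

/-! ### Components of preimages under a branched covering -/

/-- Every component of the preimage of an open connected set `U` meets the preimage of an open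
subset `R` of `U`, provided that preimage is nonempty. Only the covering property off a finite set
`F` enters: `f` may fail to be open at the points over `F`. -/
lemma component_preimage_meets {f : S2 → S2} (hf : Continuous f) {F : Set S2} (hF : F.Finite)
    (hcov : IsCoveringMapOn f Fᶜ) {U R : Set S2} (hU : IsOpen U) (hUc : IsPreconnected U)
    (hR : IsOpen R) (hRpre : (f ⁻¹' R).Nonempty) (hRU : R ⊆ U) {x : S2} (hx : x ∈ f ⁻¹' U) :
    (connectedComponentIn (f ⁻¹' U) x ∩ f ⁻¹' R).Nonempty := by
  set V := connectedComponentIn (f ⁻¹' U) x with hV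
  have hxV : x ∈ V := mem_connectedComponentIn hx
  have hVo : IsOpen V := (hU.preimage hf).connectedComponentIn
  have hVU : V ⊆ f ⁻¹' U := connectedComponentIn_subset _ _
  have hVcl : closure V ∩ f ⁻¹' U ⊆ V := closure_component_inter_s19 hx
  have hopen : IsOpen (f '' (V \ f ⁻¹' F)) := by
    rw [isOpen_iff_mem_nhds]
    rintro _ ⟨z, hz, rfl⟩
    rw [← hcov.isLocalHomeomorphOn.map_nhds_eq (x := z) hz.2]
    exact image_mem_map ((hVo.sdiff (hF.isClosed.preimage hf)).mem_nhds hz)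
  have hclosed : IsClosed (f '' closure V) := (isClosed_closure.isCompact.image hf).isClosed
  obtain ⟨y, hyR, hyF⟩ := exists_mem_diff_finite hR ⟨f hRpre.some, hRpre.some_mem⟩ hF
  have hcover : U \ F ⊆ f '' (V \ f ⁻¹' F) ∪ (f '' closure V)ᶜ := by
    rintro z ⟨hzU, hzF⟩
    by_cases hz : z ∈ f '' closure V
    · obtain ⟨w, hw, rfl⟩ := hz
      exact Or.inl ⟨w, ⟨hVcl ⟨hw, hzU⟩, hzF⟩, rfl⟩
    · exact Or.inr hz
  have hdisj : (U \ F) ∩ (f '' (V \ f ⁻¹' F) ∩ (f '' closure V)ᶜ) = ∅ := by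
    refine eq_empty_of_forall_notMem ?_
    rintro _ ⟨-, ⟨w, hw, rfl⟩, hn⟩
    exact hn (mem_image_of_mem f (subset_closure hw.1))
  -- `f '' V \ F` is clopen in the connected set `U \ F`.
  rcases isPreconnected_iff_subset_of_disjoint.1 (isPreconnected_diff_finite hU hUc hF)
    (f '' (V \ f ⁻¹' F)) (f '' closure V)ᶜ hopen hclosed.isOpen_compl hcover hdisj with h | h
  · obtain ⟨z, hz, rfl⟩ := h ⟨hRU hyR, hyF⟩
    exact ⟨z, hz.1, hyR⟩
  -- In the remaining case `f '' V ⊆ F`, so `V` is clopen and hence the whole sphere.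
  · have hVF : V ⊆ f ⁻¹' (F ∩ U) := fun z hz => by
      refine ⟨?_, hVU hz⟩
      by_contra hzF
      exact h ⟨hVU hz, hzF⟩ (mem_image_of_mem f (subset_closure hz))
    have hcl : closure V ⊆ f ⁻¹' (F ∩ U) :=
      closure_minimal hVF ((hF.inter_of_left U).isClosed.preimage hf)
    have hVuniv : V = univ := IsClopen.eq_univ
      ⟨closure_subset_iff_isClosed.1 fun z hz => hVcl ⟨hz, (hcl hz).2⟩, hVo⟩ ⟨x, hxV⟩
    rw [hVuniv, univ_inter]
    exact hRpre

/-- Let `{A 1, …, A n}` be an irreducible decomposition of the Julia set of a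
polynomial-like mapping of degree `d ≥ 2`, let `U i` be the connected component
of `S² \ A i` containing `R(f)`, and let `Â i = S² \ U i = (U i)ᶜ`. Then each
`Â i` is a nonseparating subcontinuum of the filled Julia set `Rᶜ`, and
`f⁻¹(A j) = A k` implies `f⁻¹(Â j) = Â k`. -/
theorem filled_pieces
    (f : S2 → S2) (d : ℕ) (R : Set S2) (c : S2)
    (hd : 2 ≤ d) (hf : IsPolynomialLike f d R c)
    {n : ℕ} (A : Fin n → Set S2)
    (hA : IsIrreducibleDecomposition (frontier R) A)
    (U : Fin n → Set S2)
    (hU : ∀ i, R ⊆ U i ∧ ∃ x ∈ (A i)ᶜ, U i = connectedComponentIn (A i)ᶜ x) :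
    (∀ i, IsContinuum (U i)ᶜ ∧ (U i)ᶜ ⊆ Rᶜ ∧ ¬ Separates (U i)ᶜ) ∧
      (∀ j k, f ⁻¹' (A j) = A k → f ⁻¹' (U j)ᶜ = (U k)ᶜ) := by
  obtain ⟨⟨hcont, Crit, hfin, -, hcov, -⟩, hRo, hRc, -, -, hinv, -, -⟩ := hf
  have hAcl : ∀ i, IsClosed (A i) := fun i => (hA.1 i).1.1.1.isClosed
  obtain ⟨r, hr⟩ := hRc.nonempty
  have hUr : ∀ i, r ∈ (A i)ᶜ ∧ U i = connectedComponentIn (A i)ᶜ r := by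
    intro i
    obtain ⟨hRU, x, -, hx⟩ := hU i
    have hrU : r ∈ connectedComponentIn (A i)ᶜ x := hx ▸ hRU hr
    exact ⟨connectedComponentIn_subset _ _ hrU, hx.trans (connectedComponentIn_eq hrU)⟩
  refine ⟨fun i => ⟨⟨?_, ?_⟩, compl_subset_compl.2 (hU i).1, ?_⟩, fun j k hjk => ?_⟩
  · rw [(hUr i).2]
    exact (hAcl i).isOpen_compl.connectedComponentIn.isClosed_compl.isCompact
  · rw [(hUr i).2]
    exact isConnected_compl_connectedComponentIn (hAcl i) (hA.1 i).1.1.2 r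
  · rw [Separates, not_not, compl_compl, (hUr i).2]
    exact isPreconnected_connectedComponentIn
  · rw [preimage_compl]
    congr 1
    have hfr : f r ∈ R := by rw [← mem_preimage, hinv]; exact hr
    have hUjo : IsOpen (U j) := by
      rw [(hUr j).2]; exact (hAcl j).isOpen_compl.connectedComponentIn
    have hUjc : IsPreconnected (U j) := by
      rw [(hUr j).2]; exact isPreconnected_connectedComponentIn
    have hUjA : U j ⊆ (A j)ᶜ := by
      rw [(hUr j).2]; exact connectedComponentIn_subset _ _
    have hRpre : R ⊆ f ⁻¹' U j := by
      rw [← hinv]; exact preimage_mono (hU j).1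
    apply Subset.antisymm
    · intro x hx
      -- The component of `f ⁻¹' U j` through `x` meets `R`, hence contains it.
      obtain ⟨y, hyV, hyR⟩ := component_preimage_meets hcont (hfin.image f) hcov
        hUjo hUjc hRo ⟨r, hfr⟩ (hU j).1 hx
      rw [hinv] at hyR
      have hrV : r ∈ connectedComponentIn (f ⁻¹' U j) x := by
        rw [connectedComponentIn_eq hyV]
        exact hRc.isPreconnected.subset_connectedComponentIn hyR hRpre hr
      rw [(hUr k).2]
      refine isPreconnected_connectedComponentIn.subset_connectedComponentIn hrV ?_
        (mem_connectedComponentIn hx)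
      refine (connectedComponentIn_subset _ _).trans ?_
      rw [← hjk]
      exact preimage_mono hUjA
    · rw [← image_subset_iff, (hUr j).2, connectedComponentIn_eq
        (show f r ∈ connectedComponentIn (A j)ᶜ r from (hUr j).2 ▸ (hU j).1 hfr)]
      have hrk : r ∈ U k := (hU k).1 hr
      have hUkc : IsPreconnected (U k) := by
        rw [(hUr k).2]; exact isPreconnected_connectedComponentIn
      refine (hUkc.image f hcont.continuousOn).subset_connectedComponentIn
        (mem_image_of_mem f hrk) ?_
      rw [image_subset_iff, preimage_compl, hjk, (hUr k).2]
      exact connectedComponentIn_subset _ _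
end
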